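/- There exist an integer q₁ ≥ 2 and a C^∞ diffeomorphism T of the torus 𝕋² preserving the Haar–Lebesgue probability measure λ such that T is weakly mixing with respect to λ and the upper measure-theoretic slow entropy of (T,λ) with respect to the intermediate scaling family a^{int1,8}_m(t) (with base q₁) equals 2. -/

import Mathlib

open MeasureTheory Filter Set
open scoped Topology ENNReal NNReal

noncomputable section

/-- The Bowen metric `d_n^T(x,y) = max_{0 ≤ i ≤ n-1} d(T^i x, T^i y)`. -/
def bowenDist {X : Type*} [PseudoMetricSpace X] (T : X → X) (n : ℕ) (x y : X) : ℝ :=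
  (((Finset.range n).sup fun i => nndist (T^[i] x) (T^[i] y)) : ℝ≥0)

/-- `N_{d_n^T}(ε)`: the minimal number of `(ε,n)`-Bowen balls of `T` needed to cover the
whole space. -/
def bowenCoverNum {X : Type*} [PseudoMetricSpace X] (T : X → X) (n : ℕ) (ε : ℝ) : ℕ :=
  sInf {N : ℕ | ∃ F : Finset X, F.card = N ∧ ∀ y : X, ∃ x ∈ F, bowenDist T n x y < ε}

/-- `N(ε)`: the supremum (`0` if the set is empty, by the `Real.sSup` convention) of all
`t > 0` such that `limsup_n N_{d_n^T}(ε) / a_n(t) > 0`. -/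
def topSlowEntFun {X : Type*} [PseudoMetricSpace X] (T : X → X) (a : ℕ → ℝ → ℝ) (ε : ℝ) : ℝ :=
  sSup {t : ℝ | 0 < t ∧
    0 < Filter.atTop.limsup fun n => (bowenCoverNum T n ε : ℝ≥0∞) / ENNReal.ofReal (a n t)}

/-- The upper topological slow entropy of `T` with respect to the scaling family `a`
equals `E`, i.e. `N(ε) → E` as `ε → 0⁺`. -/
def HasUpperTopSlowEntropy {X : Type*} [PseudoMetricSpace X] (T : X → X)
    (a : ℕ → ℝ → ℝ) (E : ℝ) : Prop :=
  Filter.Tendsto (topSlowEntFun T a) (𝓝[>] (0 : ℝ)) (𝓝 E)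

/-- The circle `𝕋¹ = ℝ/ℤ` with its quotient metric and Haar–Lebesgue probability
measure `volume`. -/
abbrev Torus1 : Type := AddCircle (1 : ℝ)

/-- The 2-torus `𝕋² = ℝ²/ℤ²`, with its quotient (flat) metric, its Borel σ-algebra and
its Haar–Lebesgue probability measure `volume`. -/
abbrev Torus2 : Type := AddCircle (1 : ℝ) × AddCircle (1 : ℝ)

/-- Canonical projection `ℝ² → 𝕋²`. -/
def torusProj : ℝ × ℝ → Torus2 := fun p => ((p.1 : Torus1), (p.2 : Torus1))

/-- `F : ℝ² → ℝ²` is a lift of `T : 𝕋² → 𝕋²`. -/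
def IsLiftOf (F : ℝ × ℝ → ℝ × ℝ) (T : Torus2 → Torus2) : Prop :=
  ∀ p, torusProj (F p) = T (torusProj p)

/-- `T` is a `C^k` diffeomorphism of the torus: it is a bijection and both `T` and `T⁻¹`
admit `C^k` lifts to the universal cover `ℝ²`. -/
def IsCkTorusDiffeo (k : ℕ∞) (T : Torus2 → Torus2) : Prop :=
  Function.Bijective T ∧
  (∃ F : ℝ × ℝ → ℝ × ℝ, ContDiff ℝ k F ∧ IsLiftOf F T) ∧
  (∃ G : ℝ × ℝ → ℝ × ℝ, ContDiff ℝ k G ∧ IsLiftOf G (Function.invFun T))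

/-- `T` is weakly mixing w.r.t. the measure `μ`: `T × T` is ergodic for `μ × μ`. -/
def WeaklyMixing {X : Type*} [MeasurableSpace X] (T : X → X) (μ : Measure X) : Prop :=
  Ergodic (fun p : X × X => (T p.1, T p.2)) (μ.prod μ)

/-- `T` is uniquely ergodic with the Haar–Lebesgue measure `volume` as its unique
invariant Borel probability measure. -/
def UniquelyErgodicWithVolume (T : Torus2 → Torus2) : Prop :=
  MeasurePreserving T volume volume ∧
  ∀ μ : Measure Torus2, IsProbabilityMeasure μ → MeasurePreserving T μ μ → μ = volume

/-- `T` (preserving the Haar measure `volume` on `𝕋²`) is measure-theoretically isomorphic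
to the rotation of the circle `𝕋¹ = ℝ/ℤ` by some irrational number `α`. -/
def IsoToIrrationalRotation (T : Torus2 → Torus2) : Prop :=
  ∃ α : ℝ, Irrational α ∧
    ∃ (A : Set Torus2) (B : Set Torus1) (ψ : Torus2 → Torus1) (φ : Torus1 → Torus2),
      MeasurableSet A ∧ MeasurableSet B ∧
      volume Aᶜ = 0 ∧ volume Bᶜ = 0 ∧
      Set.MapsTo T A A ∧ Set.MapsTo (fun y : Torus1 => y + (α : Torus1)) B B ∧
      Measurable ψ ∧ Measurable φ ∧
      Set.MapsTo ψ A B ∧ Set.MapsTo φ B A ∧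
      (∀ x ∈ A, φ (ψ x) = x) ∧ (∀ y ∈ B, ψ (φ y) = y) ∧
      Measure.map ψ volume = volume ∧
      (∀ x ∈ A, ψ (T x) = ψ x + (α : Torus1))

/-- A finite measurable partition of `X`. -/
structure FinMeasPartition (X : Type*) [MeasurableSpace X] where
  card : ℕ
  piece : Fin card → Set X
  measurable : ∀ i, MeasurableSet (piece i)
  disjoint : Pairwise fun i j => Disjoint (piece i) (piece j)
  cover : (⋃ i, piece i) = Set.univ

open Classical in
/-- The normalized Hamming distance between the length-`n` `P`-codings of the `T`-orbits
of `x` and `y` (the codings differ at time `k` iff `T^k x` and `T^k y` lie in different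
pieces of `P`). -/
def codeHammingDist {X : Type*} [MeasurableSpace X] (T : X → X) (P : FinMeasPartition X)
    (n : ℕ) (x y : X) : ℝ :=
  (((Finset.range n).filter fun k =>
      ¬ ∃ i, T^[k] x ∈ P.piece i ∧ T^[k] y ∈ P.piece i).card : ℝ) / n

/-- `S^H_P(T,n,ε)`: the minimal number of `(ε,n)`-Hamming balls whose union has
`μ`-measure greater than `1 - ε`. -/
def hammingCoverNum {X : Type*} [MeasurableSpace X] (μ : Measure X) (T : X → X)
    (P : FinMeasPartition X) (n : ℕ) (ε : ℝ) : ℕ :=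
  sInf {N : ℕ | ∃ F : Finset X, F.card = N ∧
    ENNReal.ofReal (1 - ε) < μ (⋃ x ∈ F, {y | codeHammingDist T P n x y < ε})}

/-- For a fixed partition `P` and `ε > 0`: the supremum (with the `Real.sSup` convention,
`0` if the set is empty) of all `t > 0` with `limsup_n S^H_P(T,n,ε)/a_n(t) > 0`. -/
def measSlowEntFun {X : Type*} [MeasurableSpace X] (μ : Measure X) (T : X → X)
    (a : ℕ → ℝ → ℝ) (P : FinMeasPartition X) (ε : ℝ) : ℝ :=
  sSup {t : ℝ | 0 < t ∧
    0 < Filter.atTop.limsup fun n =>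
      (hammingCoverNum μ T P n ε : ℝ≥0∞) / ENNReal.ofReal (a n t)}

/-- The upper measure-theoretic slow entropy of `(T,μ)` w.r.t. the scaling family `a`
equals `E`: for every finite measurable partition the limit as `ε → 0⁺` exists, and the
least upper bound over all partitions of these limits is `E`. -/
def HasUpperMeasSlowEntropy {X : Type*} [MeasurableSpace X] (μ : Measure X) (T : X → X)
    (a : ℕ → ℝ → ℝ) (E : ℝ) : Prop :=
  (∀ P : FinMeasPartition X, ∃ e : ℝ,
      Filter.Tendsto (measSlowEntFun μ T a P) (𝓝[>] (0 : ℝ)) (𝓝 e)) ∧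
  IsLUB {e : ℝ | ∃ P : FinMeasPartition X,
      Filter.Tendsto (measSlowEntFun μ T a P) (𝓝[>] (0 : ℝ)) (𝓝 e)} E

/-- `Γ_r(x) = (Γ(x^{1/r} + 1))^r`, where `Γ` is the Euler Gamma function. -/
def GammaR (r : ℕ) (x : ℝ) : ℝ := (Real.Gamma (x ^ ((r : ℝ)⁻¹) + 1)) ^ r

/-- The inverse of `Γ_r` on `[1,∞)` (where `Γ_r` is strictly increasing with `Γ_r 1 = 1`). -/
def GammaRInv (r : ℕ) (y : ℝ) : ℝ := sSup {x : ℝ | 1 ≤ x ∧ GammaR r x ≤ y}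

/-- The intermediate scaling family `a^{int1,r}_m(t) = m^(t / Γ_r⁻¹(ln m / ln q₁))`. -/
def intScale1 (r q₁ : ℕ) (m : ℕ) (t : ℝ) : ℝ :=
  (m : ℝ) ^ (t / GammaRInv r (Real.log m / Real.log q₁))

/-- The intermediate scaling family
`a^{int2,r}_m(t) = m^(t / (Γ_r⁻¹(ln m / ln q₁))^((r-2)/r))`. -/
def intScale2 (r q₁ : ℕ) (m : ℕ) (t : ℝ) : ℝ :=
  (m : ℝ) ^ (t / GammaRInv r (Real.log m / Real.log q₁) ^ (((r : ℝ) - 2) / (r : ℝ)))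

/-- The logarithmic scaling family `a^{ln}_m(t) = (ln m)^t`. -/
def logScale (m : ℕ) (t : ℝ) : ℝ := Real.log m ^ t

/-- The polynomial scaling family `a^{pol}_m(t) = m^t`. -/
def polScale (m : ℕ) (t : ℝ) : ℝ := (m : ℝ) ^ t

end


section ScaleFacts

/-- The denominator of the exponent in the scaling family. -/
noncomputable def gF (m : ℕ) : ℝ := GammaRInv 8 (Real.log m / Real.log 2)

/-- The logarithm of the scaling family at parameter one. -/
noncomputable def LF (m : ℕ) : ℝ := Real.log m / gF m

lemma GammaR_strictMonoOn : StrictMonoOn (GammaR 8) (Ici 1) := by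
  intro x hx y hy hxy
  simp only [mem_Ici] at hx hy
  unfold GammaR
  have h1 : (1:ℝ) ≤ x ^ (((8:ℕ):ℝ)⁻¹) := Real.one_le_rpow hx (by positivity)
  have h2 : x ^ (((8:ℕ):ℝ)⁻¹) < y ^ (((8:ℕ):ℝ)⁻¹) :=
    Real.rpow_lt_rpow (by linarith) hxy (by positivity)
  have h3 := Real.Gamma_strictMonoOn_Ici (a := x ^ (((8:ℕ):ℝ)⁻¹) + 1)
    (b := y ^ (((8:ℕ):ℝ)⁻¹) + 1) (by simp only [mem_Ici]; linarith)
    (by simp only [mem_Ici]; linarith) (by linarith)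
  exact pow_lt_pow_left₀ h3 (Real.Gamma_nonneg_of_nonneg (by linarith)) (by norm_num)

lemma GammaR_continuousOn : ContinuousOn (GammaR 8) (Ici 1) := by
  unfold GammaR
  refine ContinuousOn.pow ?_ 8
  intro x hx
  simp only [mem_Ici] at hx
  have h1 : (1:ℝ) ≤ x ^ (((8:ℕ):ℝ)⁻¹) := Real.one_le_rpow hx (by positivity)
  have hc : ContinuousAt (fun x : ℝ => x ^ (((8:ℕ):ℝ)⁻¹) + 1) x :=
    (Real.continuousAt_rpow_const x _ (Or.inl (by linarith))).add continuousAt_const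
  have hg : ContinuousAt Real.Gamma (x ^ (((8:ℕ):ℝ)⁻¹) + 1) := by
    refine (Real.differentiableAt_Gamma ?_).continuousAt
    intro m hm
    have : (0:ℝ) ≤ m := Nat.cast_nonneg m
    linarith
  exact (ContinuousAt.comp (f := fun x : ℝ => x ^ (((8:ℕ):ℝ)⁻¹) + 1) hg hc).continuousWithinAt

lemma GammaR_one : GammaR 8 1 = 1 := by
  unfold GammaR
  rw [Real.one_rpow]
  norm_num

lemma Gamma_tendsto : Tendsto Real.Gamma atTop atTop := by
  rw [tendsto_atTop]
  intro b
  obtain ⟨n, hn⟩ := exists_nat_ge b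
  filter_upwards [eventually_ge_atTop ((n:ℝ) + 3)] with x hx
  have hn0 : (0:ℝ) ≤ n := Nat.cast_nonneg n
  have h1 : Real.Gamma ((n + 2 : ℕ) + 1) ≤ Real.Gamma x := by
    refine Real.Gamma_strictMonoOn_Ici.monotoneOn ?_ ?_ ?_
    · simp only [mem_Ici]; push_cast; linarith
    · simp only [mem_Ici]; linarith
    · push_cast; linarith
  rw [Real.Gamma_nat_eq_factorial] at h1
  have h2 : ((n + 2 : ℕ) : ℝ) ≤ ((n+2).factorial : ℝ) := by exact_mod_cast Nat.self_le_factorial _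
  push_cast at h2
  linarith

lemma GammaR_tendsto : Tendsto (GammaR 8) atTop atTop := by
  unfold GammaR
  refine (tendsto_pow_atTop (by norm_num)).comp ?_
  refine Gamma_tendsto.comp ?_
  exact tendsto_atTop_add_const_right _ _ (tendsto_rpow_atTop (by positivity))

lemma GammaRInv_spec {y : ℝ} (hy : 1 ≤ y) :
    1 ≤ GammaRInv 8 y ∧ GammaR 8 (GammaRInv 8 y) = y := by
  obtain ⟨b, hb1, hb2⟩ := ((GammaR_tendsto.eventually_ge_atTop y).and (eventually_ge_atTop 1)).exists
  have hI := intermediate_value_Icc hb2 (GammaR_continuousOn.mono Icc_subset_Ici_self)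
  obtain ⟨x, hx, hxy⟩ := hI ⟨by rw [GammaR_one]; exact hy, hb1⟩
  have hset : {x' : ℝ | 1 ≤ x' ∧ GammaR 8 x' ≤ y} = Icc 1 x := by
    ext z
    simp only [mem_ofPred_eq, mem_Icc]
    refine and_congr_right fun hz => ?_
    rw [← hxy]
    exact GammaR_strictMonoOn.le_iff_le hz hx.1
  have : GammaRInv 8 y = x := by
    unfold GammaRInv
    rw [hset, csSup_Icc hx.1]
  rw [this]
  exact ⟨hx.1, hxy⟩

lemma GammaRInv_mono {y y' : ℝ} (hy : 1 ≤ y) (h : y ≤ y') : GammaRInv 8 y ≤ GammaRInv 8 y' := by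
  obtain ⟨h1, h2⟩ := GammaRInv_spec hy
  obtain ⟨h3, h4⟩ := GammaRInv_spec (hy.trans h)
  rw [← GammaR_strictMonoOn.le_iff_le h1 h3, h2, h4]
  exact h

lemma GammaRInv_tendsto : Tendsto (GammaRInv 8) atTop atTop := by
  rw [tendsto_atTop]
  intro b
  filter_upwards [eventually_ge_atTop (GammaR 8 (max b 1)), eventually_ge_atTop 1] with y hy hy1
  obtain ⟨h1, h2⟩ := GammaRInv_spec hy1
  rw [← h2, GammaR_strictMonoOn.le_iff_le (by simp) h1] at hy
  exact (le_max_left _ _).trans hy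

/-- `y / Γ_8⁻¹(y) = Γ(u)^8` with `u = (Γ_8⁻¹ y)^(1/8)`. -/
lemma div_GammaRInv {y : ℝ} (hy : 1 ≤ y) :
    y / GammaRInv 8 y = Real.Gamma ((GammaRInv 8 y) ^ (((8:ℕ):ℝ)⁻¹)) ^ 8 := by
  obtain ⟨h1, h2⟩ := GammaRInv_spec hy
  set x := GammaRInv 8 y
  have hu : (1:ℝ) ≤ x ^ (((8:ℕ):ℝ)⁻¹) := Real.one_le_rpow h1 (by positivity)
  have hx : (x ^ (((8:ℕ):ℝ)⁻¹)) ^ 8 = x := Real.rpow_inv_natCast_pow (by linarith) (by norm_num)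
  rw [div_eq_iff (by linarith)]
  conv_lhs => rw [← h2]
  unfold GammaR
  rw [Real.Gamma_add_one (by linarith), mul_pow, hx, mul_comm]

lemma logdiv_tendsto : Tendsto (fun m : ℕ => Real.log m / Real.log 2) atTop atTop :=
  (Real.tendsto_log_atTop.comp tendsto_natCast_atTop_atTop).atTop_div_const (Real.log_pos (by norm_num))

lemma LF_eq (m : ℕ) : LF m = Real.log 2 * ((Real.log m / Real.log 2) / GammaRInv 8 (Real.log m / Real.log 2)) := by
  have : Real.log 2 ≠ 0 := (Real.log_pos (by norm_num)).ne'
  unfold LF gF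
  field_simp

lemma root_tendsto : Tendsto (fun y => (GammaRInv 8 y) ^ (((8:ℕ):ℝ)⁻¹)) atTop atTop :=
  (tendsto_rpow_atTop (by positivity)).comp GammaRInv_tendsto

lemma LF_tendsto : Tendsto LF atTop atTop := by
  have h : Tendsto (fun y => y / GammaRInv 8 y) atTop atTop := by
    have : Tendsto (fun y => Real.Gamma ((GammaRInv 8 y) ^ (((8:ℕ):ℝ)⁻¹)) ^ 8) atTop atTop :=
      (tendsto_pow_atTop (by norm_num)).comp (Gamma_tendsto.comp root_tendsto)
    refine this.congr' ?_
    filter_upwards [eventually_ge_atTop 1] with y hy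
    rw [div_GammaRInv hy]
  have h2 := (h.comp logdiv_tendsto).const_mul_atTop (Real.log_pos (by norm_num : (1:ℝ) < 2))
  refine h2.congr fun m => ?_
  rw [LF_eq]; rfl

lemma LF_mono : ∃ m₀ : ℕ, ∀ m m', m₀ ≤ m → m ≤ m' → LF m ≤ LF m' := by
  have h := logdiv_tendsto.eventually ((root_tendsto.eventually_ge_atTop 2).and (eventually_ge_atTop 1))
  obtain ⟨m₀, hm₀⟩ := eventually_atTop.1 (h.and (eventually_ge_atTop 1))
  refine ⟨m₀, fun m m' h1 h2 => ?_⟩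
  obtain ⟨⟨ha, hb⟩, hc⟩ := hm₀ m h1
  have hl2 : 0 < Real.log 2 := Real.log_pos (by norm_num)
  have hmono : Real.log m / Real.log 2 ≤ Real.log m' / Real.log 2 := by
    have : (1:ℝ) ≤ m := by exact_mod_cast hc
    gcongr
  rw [LF_eq, LF_eq, div_GammaRInv hb, div_GammaRInv (hb.trans hmono)]
  have h3 := Real.rpow_le_rpow (by linarith [(GammaRInv_spec hb).1]) (GammaRInv_mono hb hmono)
    (by positivity : (0:ℝ) ≤ (((8:ℕ):ℝ)⁻¹))
  have h4 := Real.Gamma_strictMonoOn_Ici.monotoneOn (mem_Ici.2 ha) (mem_Ici.2 (ha.trans h3)) h3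
  have h5 := Real.Gamma_nonneg_of_nonneg (by linarith : (0:ℝ) ≤ (GammaRInv 8 (Real.log m / Real.log 2)) ^ (((8:ℕ):ℝ)⁻¹))
  gcongr

lemma gF_tendsto : Tendsto gF atTop atTop := GammaRInv_tendsto.comp logdiv_tendsto

lemma gF_mono : ∃ m₀ : ℕ, ∀ m m', m₀ ≤ m → m ≤ m' → gF m ≤ gF m' := by
  obtain ⟨m₀, hm₀⟩ := eventually_atTop.1 ((logdiv_tendsto.eventually_ge_atTop 1).and (eventually_ge_atTop 1))
  refine ⟨m₀, fun m m' h1 h2 => ?_⟩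
  obtain ⟨hb, hc⟩ := hm₀ m h1
  have hl2 : 0 < Real.log 2 := Real.log_pos (by norm_num)
  have : (1:ℝ) ≤ m := by exact_mod_cast hc
  exact GammaRInv_mono hb (by gcongr)

lemma intScale_eq {m : ℕ} (hm : 1 ≤ m) (t : ℝ) : intScale1 8 2 m t = Real.exp (t * LF m) := by
  have : (0:ℝ) < m := by exact_mod_cast hm
  unfold intScale1 LF gF
  rw [Real.rpow_def_of_pos this]
  push_cast
  ring_nf

/-- `log N - c L(N) → ∞`. -/
lemma log_sub_LF_tendsto (c : ℝ) : Tendsto (fun N : ℕ => Real.log N - c * LF N) atTop atTop := by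
  have h1 : Tendsto (fun N : ℕ => Real.log N * (1 / 2)) atTop atTop :=
    (Real.tendsto_log_atTop.comp tendsto_natCast_atTop_atTop).atTop_mul_const (by norm_num)
  refine tendsto_atTop_mono' _ ?_ h1
  filter_upwards [gF_tendsto.eventually_ge_atTop (2 * |c| + 1), eventually_ge_atTop 1] with N hN hN1
  have h0 : 0 ≤ Real.log N := Real.log_natCast_nonneg N
  have hg : 0 < gF N := by linarith [abs_nonneg c]
  unfold LF
  have : c * (Real.log N / gF N) ≤ Real.log N * (1/2) := by
    rw [← mul_div_assoc, div_le_iff₀ hg]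
    nlinarith [le_abs_self c, abs_nonneg c]
  linarith

/-- Slow variation of `L` used for the upper bound. -/
lemma LF_slow {δ : ℝ} (hδ : 0 < δ) : ∀ᶠ N : ℕ in atTop, ∀ m : ℕ,
    (N : ℝ) < m * Real.exp (2 * LF N) ^ 2 → (1 - δ) * LF N ≤ LF m := by
  obtain ⟨m₁, h₁⟩ := LF_mono
  obtain ⟨m₂', h₂'⟩ := gF_mono
  obtain ⟨m₃, hm₃⟩ := eventually_atTop.1 (gF_tendsto.eventually_ge_atTop (1:ℝ))
  obtain ⟨m₂, hm₂⟩ : ∃ m₂, m₂ = max m₂' m₃ := ⟨_, rfl⟩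
  subst hm₂
  have h₂ : ∀ m m', max m₂' m₃ ≤ m → m ≤ m' → gF m ≤ gF m' :=
    fun m m' h h' => h₂' m m' ((le_max_left _ _).trans h) h'
  filter_upwards [eventually_ge_atTop (max m₁ 1), LF_tendsto.eventually_ge_atTop 1,
    gF_tendsto.eventually_ge_atTop (4 / δ + 1),
    gF_tendsto.eventually_ge_atTop (1:ℝ),
    (log_sub_LF_tendsto 4).eventually_ge_atTop (Real.log (max (max m₂' m₃) 1 : ℕ))] with N hN hL hg hg1 hlog m hm
  rcases le_or_gt N m with h | h
  · have := h₁ N m ((le_max_left _ _).trans hN) h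
    nlinarith
  · have hN1 : (1:ℝ) ≤ N := by exact_mod_cast (le_max_right _ _).trans hN
    have hmpos : (0:ℝ) < m := by
      by_contra hcon
      have h0 : (m:ℝ) = 0 := le_antisymm (not_lt.1 hcon) (Nat.cast_nonneg m)
      rw [h0] at hm
      linarith
    have hlm : Real.log N - 4 * LF N < Real.log m := by
      have := Real.log_lt_log (by linarith) hm
      rw [Real.log_mul hmpos.ne' (by positivity), Real.log_pow, Real.log_exp] at this
      push_cast at this
      linarith
    have hmm : max (max m₂' m₃) 1 ≤ m := by
      have h5 : Real.log (max (max m₂' m₃) 1 : ℕ) < Real.log m := lt_of_le_of_lt hlog hlm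
      have h6 := (Real.log_lt_log_iff (by positivity) hmpos).1 h5
      exact_mod_cast h6.le
    have hgm := h₂ m N ((le_max_left _ _).trans hmm) h.le
    have hm1 : (1:ℝ) ≤ m := by exact_mod_cast (le_max_right _ _).trans hmm
    have hgmpos : 0 < gF m := by
      have := hm₃ m ((le_max_right _ _).trans ((le_max_left _ _).trans hmm))
      linarith
    have hgN : 0 < gF N := by linarith
    have hlogm : 0 ≤ Real.log m := Real.log_nonneg hm1
    have e1 : Real.log m / gF N ≤ LF m := by
      unfold LF
      gcongr
    have e2 : (Real.log N - 4 * LF N) / gF N ≤ Real.log m / gF N := by gcongr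
    have e3 : (Real.log N - 4 * LF N) / gF N = LF N - 4 / gF N * LF N := by
      rw [sub_div]
      conv_lhs => rw [show Real.log N / gF N = LF N from rfl]
      ring
    have e4 : 4 / gF N ≤ δ := by
      rw [div_le_iff₀ hgN]
      have : 4 / δ ≤ gF N := by linarith
      rw [div_le_iff₀ hδ] at this
      linarith
    nlinarith

end ScaleFacts

section Oscillation

lemma osc_half (L : ℤ) : Tendsto (fun Z : ℝ => ∫ x in (0:ℝ)..Real.pi,
    Complex.exp (Complex.I * (L * x)) * Complex.exp (Complex.I * (Z * Real.cos x)))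
    atTop (𝓝 0) := by
  have key := Real.tendsto_integral_exp_smul_cocompact
    (fun v : ℝ => (Real.cos '' Ioo 0 Real.pi).indicator
      (fun v => Complex.exp (Complex.I * (L * Real.arccos v)) / (Real.sin (Real.arccos v) : ℂ)) v)
  have hw : Tendsto (fun Z : ℝ => -(Z / (2 * Real.pi))) atTop (cocompact ℝ) :=
    (tendsto_neg_atTop_atBot.comp (tendsto_id.atTop_div_const Real.two_pi_pos)).mono_right
      atBot_le_cocompact
  refine (key.comp hw).congr fun Z => ?_
  have hms : MeasurableSet (Real.cos '' Ioo 0 Real.pi) := by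
    refine (measurableSet_Ioo.image_of_continuousOn_injOn Real.continuous_cos.continuousOn ?_)
    exact Real.injOn_cos.mono Ioo_subset_Icc_self
  simp only [Function.comp]
  rw [intervalIntegral.integral_of_le Real.pi_pos.le, integral_Ioc_eq_integral_Ioo]
  have h1 : ∀ v : ℝ, Real.fourierChar (-(v * -(Z / (2 * Real.pi)))) •
      (Real.cos '' Ioo 0 Real.pi).indicator
      (fun v => Complex.exp (Complex.I * (L * Real.arccos v)) / (Real.sin (Real.arccos v) : ℂ)) v
      = (Real.cos '' Ioo 0 Real.pi).indicator
      (fun v => Complex.exp (Complex.I * (Z * v)) * (Complex.exp (Complex.I * (L * Real.arccos v)) / (Real.sin (Real.arccos v) : ℂ))) v := by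
    intro v
    by_cases hv : v ∈ Real.cos '' Ioo 0 Real.pi
    · rw [indicator_of_mem hv, indicator_of_mem hv, Circle.smul_def, smul_eq_mul,
        Real.fourierChar_apply]
      congr 2
      push_cast
      have : (Real.pi : ℂ) ≠ 0 := by exact_mod_cast Real.pi_ne_zero
      field_simp
    · rw [indicator_of_notMem hv, indicator_of_notMem hv, smul_zero]
  simp_rw [h1]
  rw [integral_indicator hms, integral_image_eq_integral_abs_deriv_smul measurableSet_Ioo
    (fun x _ => (Real.hasDerivAt_cos x).hasDerivWithinAt)
    (Real.injOn_cos.mono Ioo_subset_Icc_self)]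
  refine setIntegral_congr_fun measurableSet_Ioo fun x hx => ?_
  have hs := Real.sin_pos_of_pos_of_lt_pi hx.1 hx.2
  have hsc : (Real.sin x : ℂ) ≠ 0 := by exact_mod_cast hs.ne'
  beta_reduce
  rw [Real.arccos_cos hx.1.le hx.2.le, abs_neg, abs_of_pos hs, Complex.real_smul]
  field_simp

lemma osc_full (L : ℤ) : Tendsto (fun Z : ℝ => ∫ x in (0:ℝ)..(2 * Real.pi),
    Complex.exp (Complex.I * (L * x)) * Complex.exp (Complex.I * (Z * Real.cos x)))
    atTop (𝓝 0) := by
  have h := (osc_half L).add (osc_half (-L))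
  rw [add_zero] at h
  refine h.congr fun Z => ?_
  have hi : ∀ a b : ℝ, IntervalIntegrable (fun x : ℝ => Complex.exp (Complex.I * (L * x)) * Complex.exp (Complex.I * (Z * Real.cos x))) volume a b := by
    intro a b
    apply Continuous.intervalIntegrable
    fun_prop
  rw [← intervalIntegral.integral_add_adjacent_intervals (hi 0 Real.pi) (hi Real.pi (2 * Real.pi))]
  congr 1
  have := intervalIntegral.integral_comp_sub_left (a := 0) (b := Real.pi) (fun x : ℝ => Complex.exp (Complex.I * (L * x)) * Complex.exp (Complex.I * (Z * Real.cos x))) (2 * Real.pi)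
  rw [show 2 * Real.pi - Real.pi = Real.pi by ring, sub_zero] at this
  rw [← this]
  refine intervalIntegral.integral_congr fun x _ => ?_
  beta_reduce
  rw [Real.cos_two_pi_sub]
  congr 1
  rw [Complex.exp_eq_exp_iff_exists_int]
  refine ⟨-L, ?_⟩
  push_cast
  ring

lemma osc_circle_one (L : ℤ) : Tendsto (fun Z : ℝ => ∫ θ : UnitAddCircle,
    fourier L θ * Complex.exp (Complex.I * ((Z * (fourier 1 θ).re : ℝ) : ℂ))) atTop (𝓝 0) := by
  have h := (osc_full L).const_smul ((2 * Real.pi)⁻¹ : ℝ)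
  rw [smul_zero] at h
  refine h.congr fun Z => ?_
  rw [← UnitAddCircle.intervalIntegral_preimage 0]
  have := intervalIntegral.integral_comp_mul_left (a := 0) (b := 1) (fun x : ℝ => Complex.exp (Complex.I * (L * x)) * Complex.exp (Complex.I * (Z * Real.cos x))) (c := 2 * Real.pi) Real.two_pi_pos.ne'
  rw [mul_zero, mul_one] at this
  rw [← this, zero_add]
  refine intervalIntegral.integral_congr fun x _ => ?_
  simp only [fourier_coe_apply]
  congr 2
  · push_cast; ring
  · push_cast
    congr 2
    rw [show 2 * (Real.pi:ℂ) * Complex.I * 1 * x / 1 = ((2 * Real.pi * x : ℝ) : ℂ) * Complex.I by push_cast; ring]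
    rw [Complex.exp_ofReal_mul_I_re]
    push_cast
    rfl

lemma fourier_natMul (q : ℕ) (L : ℤ) (θ : UnitAddCircle) :
    fourier (q * L) θ = fourier L ((q:ℤ) • θ) := by
  rw [fourier_apply, fourier_apply, smul_smul, mul_comm]

lemma fourier_zadd (L : ℤ) (θ θ' : UnitAddCircle) :
    fourier L (θ + θ') = fourier L θ * fourier L θ' := by
  rw [fourier_apply, fourier_apply, fourier_apply, smul_add, AddCircle.toCircle_add, Circle.coe_mul]

/-- General frequency. -/
lemma osc_circle (q : ℕ) (hq : 0 < q) (L : ℤ) : Tendsto (fun Z : ℝ => ∫ θ : UnitAddCircle,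
    fourier L θ * Complex.exp (Complex.I * ((Z * (fourier (q:ℤ) θ).re : ℝ) : ℂ))) atTop (𝓝 0) := by
  by_cases hd : (q:ℤ) ∣ L
  · obtain ⟨L', rfl⟩ := hd
    refine (osc_circle_one L').congr fun Z => ?_
    have hmp : MeasurePreserving (fun θ : UnitAddCircle => (q:ℤ) • θ) volume volume :=
      Measure.measurePreserving_zsmul volume (by exact_mod_cast hq.ne')
    have := integral_map (μ := (volume : Measure UnitAddCircle)) hmp.measurable.aemeasurable
      (f := fun θ => fourier L' θ * Complex.exp (Complex.I * ((Z * (fourier 1 θ).re : ℝ) : ℂ)))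
      (by apply Continuous.aestronglyMeasurable; fun_prop)
    rw [hmp.map_eq] at this
    rw [this]
    congr 1
    ext θ
    rw [fourier_natMul, ← fourier_natMul q 1, mul_one]
  · refine tendsto_const_nhds.congr fun Z => ?_
    symm
    set F : UnitAddCircle → ℂ := fun θ =>
      fourier L θ * Complex.exp (Complex.I * ((Z * (fourier (q:ℤ) θ).re : ℝ) : ℂ)) with hF
    have hq0 : (q:ℂ) ≠ 0 := by exact_mod_cast hq.ne'
    have h1 : ∀ θ, F (θ + (((q:ℝ)⁻¹ : ℝ) : UnitAddCircle)) =
        fourier L ((((q:ℝ)⁻¹ : ℝ) : UnitAddCircle)) * F θ := by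
      intro θ
      simp only [hF, fourier_zadd]
      have : (fourier (q:ℤ) (((q:ℝ)⁻¹ : ℝ) : UnitAddCircle) : ℂ) = 1 := by
        rw [fourier_coe_apply, Complex.exp_eq_one_iff]
        refine ⟨1, ?_⟩
        push_cast
        field_simp
      rw [this, mul_one]
      ring
    have h2 : (fourier L ((((q:ℝ)⁻¹ : ℝ) : UnitAddCircle)) : ℂ) ≠ 1 := by
      rw [fourier_coe_apply, Ne, Complex.exp_eq_one_iff]
      rintro ⟨n, hn⟩
      apply hd
      refine ⟨n, ?_⟩
      have hpi : (Real.pi : ℂ) ≠ 0 := by exact_mod_cast Real.pi_ne_zero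
      push_cast at hn
      field_simp at hn
      have : (L : ℂ) = q * n := by linear_combination hn
      exact_mod_cast this
    have h3 : ∫ θ, F θ = fourier L ((((q:ℝ)⁻¹ : ℝ) : UnitAddCircle)) * ∫ θ, F θ := by
      rw [← integral_const_mul]
      conv_lhs => rw [← integral_add_right_eq_self F (((q:ℝ)⁻¹ : ℝ) : UnitAddCircle)]
      simp_rw [h1]
    have h4 : (1 - (fourier L ((((q:ℝ)⁻¹ : ℝ) : UnitAddCircle)) : ℂ)) * ∫ θ, F θ = 0 := by
      linear_combination h3
    rcases mul_eq_zero.1 h4 with h | h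
    · exact absurd (sub_eq_zero.1 h).symm h2
    · exact h

end Oscillation

section Averages

lemma sum_range_mul_block {M : Type*} [AddCommMonoid M] (f : ℕ → M) (q n : ℕ) :
    ∑ j ∈ Finset.range (q * n), f j =
      ∑ r ∈ Finset.range q, ∑ i ∈ Finset.range n, f (q * i + r) := by
  rw [Finset.sum_comm]
  induction n with
  | zero => simp
  | succ n ih =>
    rw [mul_add, mul_one, Finset.sum_range_add, ih, Finset.sum_range_succ]

lemma riemann_circle (u : UnitAddCircle → ℂ) (hu : Continuous u) (K : ℝ)
    (hK : ∀ x y : ℝ, ‖u x - u y‖ ≤ K * |x - y|) (n : ℕ) (hn : 0 < n) (θ₀ : UnitAddCircle) :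
    ‖(∑ i ∈ Finset.range n, u (θ₀ + (((i:ℝ) / n : ℝ) : UnitAddCircle))) - n * ∫ θ, u θ‖ ≤ K := by
  obtain ⟨t, rfl⟩ := QuotientAddGroup.mk_surjective θ₀
  have hn0 : (0:ℝ) < n := by exact_mod_cast hn
  have hK0 : 0 ≤ K := by
    have := (norm_nonneg _).trans (hK 1 0)
    simpa using this
  have hcont : Continuous (fun x : ℝ => u ((t + x : ℝ) : UnitAddCircle)) :=
    hu.comp ((AddCircle.continuous_mk' 1).comp (by fun_prop))
  have h1 : ∫ θ, u θ = ∑ i ∈ Finset.range n, ∫ x in ((i:ℝ)/n)..((i+1:ℕ):ℝ)/n, u ((t + x : ℝ) : UnitAddCircle) := by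
    rw [intervalIntegral.sum_integral_adjacent_intervals (a := fun i : ℕ => (i:ℝ)/n)
      (fun k _ => hcont.intervalIntegrable _ _)]
    rw [← UnitAddCircle.intervalIntegral_preimage t]
    have := intervalIntegral.integral_comp_add_left (a := ((0:ℕ):ℝ)/n) (b := (n:ℝ)/n) (fun x : ℝ => u (x : UnitAddCircle)) t
    rw [this]
    congr 1
    · simp
    · rw [div_self hn0.ne']
  have h2 : ∀ i : ℕ, u ((t:UnitAddCircle) + (((i:ℝ) / n : ℝ) : UnitAddCircle)) =
      n * ∫ x in ((i:ℝ)/n)..((i+1:ℕ):ℝ)/n, u ((t + (i:ℝ)/n : ℝ) : UnitAddCircle) := by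
    intro i
    rw [intervalIntegral.integral_const, Complex.real_smul]
    rw [← AddCircle.coe_add]
    push_cast
    have : (n:ℂ) ≠ 0 := by exact_mod_cast hn.ne'
    field_simp
    ring
  change ‖(∑ i ∈ Finset.range n, u ((t:UnitAddCircle) + (((i:ℝ) / n : ℝ) : UnitAddCircle))) - n * ∫ θ, u θ‖ ≤ K
  rw [h1, Finset.mul_sum, ← Finset.sum_sub_distrib]
  refine (norm_sum_le _ _).trans ?_
  have h3 : ∀ i ∈ Finset.range n, ‖u ((t:UnitAddCircle) + (((i:ℝ) / n : ℝ) : UnitAddCircle)) -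
      n * ∫ x in ((i:ℝ)/n)..((i+1:ℕ):ℝ)/n, u ((t + x : ℝ) : UnitAddCircle)‖ ≤ K / n := by
    intro i _
    rw [h2 i, ← mul_sub, ← intervalIntegral.integral_sub (by simp) (hcont.intervalIntegrable _ _), norm_mul]
    have hle : (i:ℝ)/n ≤ ((i+1:ℕ):ℝ)/n := by gcongr; simp
    have h4 := intervalIntegral.norm_integral_le_of_norm_le_const (a := (i:ℝ)/n) (b := ((i+1:ℕ):ℝ)/n)
      (f := fun x => u ((t + (i:ℝ)/n : ℝ) : UnitAddCircle) - u ((t + x : ℝ) : UnitAddCircle)) (C := K / n) (by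
        intro x hx
        rw [uIoc_of_le hle] at hx
        refine (hK _ _).trans ?_
        rw [show K / n = K * (n:ℝ)⁻¹ from div_eq_mul_inv _ _]
        refine mul_le_mul_of_nonneg_left ?_ hK0
        rw [abs_le]
        have := hx.1
        have h6 := hx.2
        push_cast at h6
        rw [add_div, one_div] at h6
        constructor
        · linarith
        · have : (0:ℝ) < (n:ℝ)⁻¹ := by positivity
          linarith)
    have h5 : |((i+1:ℕ):ℝ)/n - (i:ℝ)/n| = 1 / n := by
      rw [← sub_div]; push_cast; rw [add_sub_cancel_left, abs_of_pos (by positivity)]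
    rw [h5] at h4
    calc ‖(n:ℂ)‖ * _ ≤ n * (K / n * (1 / n)) := by
          rw [Complex.norm_natCast]; gcongr
      _ = K / n := by field_simp
  refine (Finset.sum_le_sum h3).trans ?_
  rw [Finset.sum_const, Finset.card_range, nsmul_eq_mul]
  exact (mul_div_cancel₀ _ hn0.ne').le

lemma orbit_avg (u : UnitAddCircle → ℂ) (hu : Continuous u) (K : ℝ)
    (hK : ∀ x y : ℝ, ‖u x - u y‖ ≤ K * |x - y|) (q n : ℕ) (hq : 0 < q) (hn : 0 < n)
    (al : UnitAddCircle) (hal : q • al = ((1 / n : ℝ) : UnitAddCircle)) :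
    ‖((q * n : ℕ) : ℂ)⁻¹ * (∑ j ∈ Finset.range (q * n), u (j • al)) - ∫ θ, u θ‖ ≤ K / n := by
  have hn0 : (0:ℝ) < n := by exact_mod_cast hn
  have hq0 : (0:ℝ) < q := by exact_mod_cast hq
  have hnc : (n:ℂ) ≠ 0 := by exact_mod_cast hn.ne'
  have hqc : (q:ℂ) ≠ 0 := by exact_mod_cast hq.ne'
  rw [sum_range_mul_block]
  have h1 : ∀ r i : ℕ, u ((q * i + r) • al) = u (r • al + (((i:ℝ) / n : ℝ) : UnitAddCircle)) := by
    intro r i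
    rw [add_smul, mul_comm, mul_smul, hal, add_comm, ← AddCircle.coe_nsmul, nsmul_eq_mul,
      mul_one_div]
  simp_rw [h1]
  have h2 : ((q * n : ℕ) : ℂ)⁻¹ * (∑ r ∈ Finset.range q, ∑ i ∈ Finset.range n,
      u (r • al + (((i:ℝ) / n : ℝ) : UnitAddCircle))) - ∫ θ, u θ =
      ((q * n : ℕ) : ℂ)⁻¹ * ∑ r ∈ Finset.range q, ((∑ i ∈ Finset.range n,
      u (r • al + (((i:ℝ) / n : ℝ) : UnitAddCircle))) - n * ∫ θ, u θ) := by
    rw [Finset.sum_sub_distrib, Finset.sum_const, Finset.card_range, nsmul_eq_mul]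
    push_cast
    field_simp
  rw [h2, norm_mul, norm_inv, Complex.norm_natCast]
  calc _ ≤ ((q * n : ℕ) : ℝ)⁻¹ * ∑ r ∈ Finset.range q, K := by
        gcongr
        exact (norm_sum_le _ _).trans (Finset.sum_le_sum fun r _ => riemann_circle u hu K hK n hn _)
    _ = K / n := by
        rw [Finset.sum_const, Finset.card_range, nsmul_eq_mul]
        push_cast
        field_simp

lemma exp_I_lip (a b : ℝ) : ‖Complex.exp (Complex.I * a) - Complex.exp (Complex.I * b)‖ ≤ |a - b| := by
  have h := Real.norm_exp_I_mul_ofReal_sub_one_le (x := a - b)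
  have h2 : Complex.exp (Complex.I * a) - Complex.exp (Complex.I * b) =
      Complex.exp (Complex.I * b) * (Complex.exp (Complex.I * ((a - b : ℝ) : ℂ)) - 1) := by
    rw [mul_sub, ← Complex.exp_add, mul_one]
    congr 2
    push_cast; ring
  rw [h2, norm_mul, mul_comm Complex.I, Complex.norm_exp_ofReal_mul_I, one_mul]
  simpa [Real.norm_eq_abs] using h

/-- The oscillating factor. -/
noncomputable def oscU (q : ℕ) (L : ℤ) (A : ℝ) (C : ℂ) (θ : UnitAddCircle) : ℂ :=
  fourier L θ * Complex.exp (Complex.I * ((2 * Real.pi * A * (C * fourier (q:ℤ) θ).re : ℝ) : ℂ))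

lemma oscU_continuous (q : ℕ) (L : ℤ) (A : ℝ) (C : ℂ) : Continuous (oscU q L A C) := by
  unfold oscU
  fun_prop

lemma oscU_lip (q : ℕ) (L : ℤ) (A : ℝ) (hA : 0 ≤ A) (C : ℂ) (x y : ℝ) :
    ‖oscU q L A C x - oscU q L A C y‖ ≤
      (2 * Real.pi * |(L:ℝ)| + 4 * Real.pi ^ 2 * q * A * ‖C‖) * |x - y| := by
  have hrw : ∀ x : ℝ, oscU q L A C x = Complex.exp (Complex.I * ((2 * Real.pi * L * x + 2 * Real.pi * A * (C * fourier (q:ℤ) (x : UnitAddCircle)).re : ℝ) : ℂ)) := by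
    intro x
    unfold oscU
    conv_lhs => rw [fourier_coe_apply]
    rw [← Complex.exp_add]
    congr 1
    push_cast
    ring
  rw [hrw, hrw]
  refine (exp_I_lip _ _).trans ?_
  have h1 : |(C * fourier (q:ℤ) (x : UnitAddCircle)).re - (C * fourier (q:ℤ) (y : UnitAddCircle)).re|
      ≤ ‖C‖ * (2 * Real.pi * q * |x - y|) := by
    rw [← Complex.sub_re, ← mul_sub]
    refine (Complex.abs_re_le_norm _).trans ?_
    rw [norm_mul]
    gcongr
    have hf : ∀ x : ℝ, (fourier (q:ℤ) (x : UnitAddCircle) : ℂ) = Complex.exp (Complex.I * ((2 * Real.pi * q * x : ℝ) : ℂ)) := by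
      intro x
      rw [fourier_coe_apply]
      congr 1
      push_cast
      ring
    rw [hf, hf]
    refine (exp_I_lip _ _).trans ?_
    rw [← mul_sub, abs_mul, abs_of_nonneg (by positivity)]
  calc |(2 * Real.pi * L * x + 2 * Real.pi * A * (C * fourier (q:ℤ) (x : UnitAddCircle)).re) - (2 * Real.pi * L * y + 2 * Real.pi * A * (C * fourier (q:ℤ) (y : UnitAddCircle)).re)|
      = |2 * Real.pi * L * (x - y) + 2 * Real.pi * A * ((C * fourier (q:ℤ) (x : UnitAddCircle)).re - (C * fourier (q:ℤ) (y : UnitAddCircle)).re)| := by ring_nf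
    _ ≤ |2 * Real.pi * L * (x - y)| + |2 * Real.pi * A * ((C * fourier (q:ℤ) (x : UnitAddCircle)).re - (C * fourier (q:ℤ) (y : UnitAddCircle)).re)| := abs_add_le _ _
    _ ≤ 2 * Real.pi * |(L:ℝ)| * |x - y| + 2 * Real.pi * A * (‖C‖ * (2 * Real.pi * q * |x - y|)) := by
        rw [abs_mul, abs_mul, abs_mul _ (_ - _), abs_of_nonneg Real.two_pi_pos.le, abs_of_nonneg (by positivity : 0 ≤ 2 * Real.pi * A)]
        gcongr
    _ = _ := by ring

lemma oscU_integral (q : ℕ) (hq : 0 < q) (L : ℤ) (A : ℝ) (C : ℂ) :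
    ‖∫ θ, oscU q L A C θ‖ = ‖∫ θ : UnitAddCircle,
    fourier L θ * Complex.exp (Complex.I * (((2 * Real.pi * A * ‖C‖) * (fourier (q:ℤ) θ).re : ℝ) : ℂ))‖ := by
  set γ : UnitAddCircle := ((Complex.arg C / (2 * Real.pi * q) : ℝ) : UnitAddCircle) with hγ
  have hC : C = ‖C‖ * fourier (q:ℤ) γ := by
    rw [hγ, fourier_coe_apply]
    conv_lhs => rw [← Complex.norm_mul_exp_arg_mul_I C]
    congr 2
    have : (Real.pi : ℂ) ≠ 0 := by exact_mod_cast Real.pi_ne_zero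
    have hqc : (q:ℂ) ≠ 0 := by exact_mod_cast hq.ne'
    push_cast
    field_simp
  have h1 : ∀ θ, oscU q L A C (θ + -γ) = fourier L (-γ) * (fourier L θ * Complex.exp (Complex.I * (((2 * Real.pi * A * ‖C‖) * (fourier (q:ℤ) θ).re : ℝ) : ℂ))) := by
    intro θ
    unfold oscU
    have h2 : C * fourier (q:ℤ) (θ + -γ) = ‖C‖ * fourier (q:ℤ) θ := by
      conv_lhs => rw [hC]
      rw [mul_assoc, ← fourier_zadd]
      congr 2
      abel
    rw [h2, fourier_zadd, Complex.re_ofReal_mul]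
    ring_nf
  rw [← integral_add_right_eq_self (oscU q L A C) (-γ)]
  simp_rw [h1]
  rw [integral_const_mul, norm_mul, fourier_apply, Circle.norm_coe, one_mul]

lemma osc_avg (q : ℕ) (hq : 0 < q) (L : ℤ) (M : ℝ) (η : ℝ) (hη : 0 < η) :
    ∃ Ω K : ℝ, ∀ (A : ℝ) (n : ℕ) (C : ℂ), 1 ≤ A → Ω ≤ A * ‖C‖ → ‖C‖ ≤ M → 0 < n → K * A ≤ n →
      ∀ al : UnitAddCircle, q • al = ((1 / n : ℝ) : UnitAddCircle) →
      ‖((q * n : ℕ) : ℂ)⁻¹ * (∑ j ∈ Finset.range (q * n), oscU q L A C (j • al))‖ ≤ η := by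
  have h := (osc_circle q hq L).eventually (Metric.closedBall_mem_nhds (0:ℂ) (half_pos hη))
  obtain ⟨Z₀, hZ₀⟩ := eventually_atTop.1 h
  refine ⟨Z₀ / (2 * Real.pi), (2 * Real.pi * |(L:ℝ)| + 4 * Real.pi ^ 2 * q * M) / (η / 2), ?_⟩
  intro A n C hA hΩ hCM hn hK al hal
  have hn0 : (0:ℝ) < n := by exact_mod_cast hn
  have h1 := orbit_avg (oscU q L A C) (oscU_continuous q L A C) _ (oscU_lip q L A (by linarith) C)
    q n hq hn al hal
  have h2 : ‖∫ θ, oscU q L A C θ‖ ≤ η / 2 := by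
    rw [oscU_integral q hq]
    have := hZ₀ (2 * Real.pi * A * ‖C‖) (by
      rw [div_le_iff₀ Real.two_pi_pos] at hΩ
      linarith)
    simpa using this
  have h3 : (2 * Real.pi * |(L:ℝ)| + 4 * Real.pi ^ 2 * q * A * ‖C‖) / n ≤ η / 2 := by
    rw [div_le_iff₀ hn0]
    rw [div_mul_eq_mul_div, div_le_iff₀ (half_pos hη)] at hK
    have h4 : 2 * Real.pi * |(L:ℝ)| ≤ 2 * Real.pi * |(L:ℝ)| * A := le_mul_of_one_le_right (by positivity) hA
    have h5 : 4 * Real.pi ^ 2 * q * A * ‖C‖ ≤ 4 * Real.pi ^ 2 * q * A * M := by gcongr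
    nlinarith
  calc _ ≤ ‖((q * n : ℕ) : ℂ)⁻¹ * (∑ j ∈ Finset.range (q * n), oscU q L A C (j • al)) - ∫ θ, oscU q L A C θ‖ + ‖∫ θ, oscU q L A C θ‖ := by
        have := norm_add_le (((q * n : ℕ) : ℂ)⁻¹ * (∑ j ∈ Finset.range (q * n), oscU q L A C (j • al)) - ∫ θ, oscU q L A C θ) (∫ θ, oscU q L A C θ)
        rwa [sub_add_cancel] at this
    _ ≤ η := by linarith

end Averages


lemma volume_T1 : (volume : Measure Torus1) univ = 1 := by
  rw [AddCircle.measure_univ]; simp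

instance instProbT1 : IsProbabilityMeasure (volume : Measure Torus1) := ⟨volume_T1⟩

/-- Rotation in the first coordinate. -/
def rotT (t : Torus1) (z : Torus2) : Torus2 := (z.1 + t, z.2)

/-- The basic shear map. -/
noncomputable def shF (A : ℝ) (B q : ℕ) (z : Torus2) : Torus2 :=
  (z.1 + B • (z.2 + ((A * (fourier (q:ℤ) z.1).re : ℝ) : Torus1)),
    z.2 + ((A * (fourier (q:ℤ) z.1).re : ℝ) : Torus1))

/-- The displacement `d` is good at scale `A`, `w`. -/
def GoodW (q : ℕ) (A w : ℝ) (d : Torus1) : Prop :=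
  w ≤ A * ‖1 - fourier (q:ℤ) d‖ ∧ w ≤ A * ‖1 + fourier (q:ℤ) d‖

/-- Parameter space. -/
abbrev KPar : Type := ℕ × ℝ × ℕ × Torus1 × Torus2 × Torus2

/-- Filter on the parameter space. -/
def KFil (q : ℕ) : Filter KPar where
  sets := {S | ∀ᶠ B : ℕ in atTop, ∃ Ω K : ℝ, ∀ (A w : ℝ) (n : ℕ) (al : Torus1) (z z' : Torus2),
    Ω ≤ w → w ≤ A → K * A ≤ n → q • al = ((1 / n : ℝ) : Torus1) → GoodW q A w (z'.1 - z.1) →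
    (B, A, n, al, z, z') ∈ S}
  univ_sets := by simp
  sets_of_superset := by
    intro S S' h hS
    refine h.mono ?_
    rintro B ⟨Ω, K, h⟩
    exact ⟨Ω, K, fun A w n al z z' h1 h2 h3 h4 h5 => hS (h A w n al z z' h1 h2 h3 h4 h5)⟩
  inter_sets := by
    intro S S' h h'
    refine (h.and (h'.and (eventually_ge_atTop 0))).mono ?_
    rintro B ⟨⟨Ω, K, h⟩, ⟨Ω', K', h'⟩, -⟩
    refine ⟨max 0 (max Ω Ω'), max K K', fun A w n al z z' h1 h2 h3 h4 h5 => ?_⟩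
    have hA : 0 ≤ A := le_trans (le_trans (le_max_left _ _) h1) h2
    have a1 := le_trans (le_trans (le_max_left _ _) (le_max_right _ _)) h1
    have a2 := le_trans (le_trans (le_max_right _ _) (le_max_right _ _)) h1
    have b1 := le_trans (mul_le_mul_of_nonneg_right (le_max_left _ _) hA) h3
    have b2 := le_trans (mul_le_mul_of_nonneg_right (le_max_right _ _) hA) h3
    exact ⟨h A w n al z z' a1 h2 b1 h4 h5, h' A w n al z z' a2 h2 b2 h4 h5⟩

lemma mem_KFil {q : ℕ} {S : Set KPar} : S ∈ KFil q ↔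
  ∀ᶠ B : ℕ in atTop, ∃ Ω K : ℝ, ∀ (A w : ℝ) (n : ℕ) (al : Torus1) (z z' : Torus2),
    Ω ≤ w → w ≤ A → K * A ≤ n → q • al = ((1 / n : ℝ) : Torus1) → GoodW q A w (z'.1 - z.1) →
    (B, A, n, al, z, z') ∈ S := Iff.rfl

/-- The correlation defect. -/
noncomputable def KPhi (q : ℕ) (f g : C(Torus2, ℂ)) : KPar → ℂ := fun p =>
  ((q * p.2.2.1 : ℕ) : ℂ)⁻¹ * (∑ j ∈ Finset.range (q * p.2.2.1),
    f (shF p.2.1 p.1 q (rotT (j • p.2.2.2.1) p.2.2.2.2.1)) *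
    g (shF p.2.1 p.1 q (rotT (j • p.2.2.2.1) p.2.2.2.2.2))) - (∫ x, f x) * ∫ x, g x

/-- The character. -/
noncomputable def chr (l k : ℤ) : C(Torus2, ℂ) :=
  ⟨fun z => fourier l z.1 * fourier k z.2, by fun_prop⟩

lemma chr_apply (l k : ℤ) (z : Torus2) : chr l k z = fourier l z.1 * fourier k z.2 := rfl

lemma fourier_zero_fun : (fun x : Torus1 => (fourier 0 x : ℂ)) = fun _ => 1 := by
  funext x; simp

lemma integral_fourier (n : ℤ) : ∫ x : Torus1, (fourier n x : ℂ) = if n = 0 then 1 else 0 := by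
  split_ifs with h
  · subst h; simp
  · have := integral_eq_zero_of_add_right_eq_neg (μ := (volume : Measure Torus1)) (f := fun x => (fourier n x : ℂ))
      (fourier_add_half_inv_index h one_pos)
    exact this

lemma integral_chr (l k : ℤ) : ∫ z, chr l k z = if l = 0 ∧ k = 0 then 1 else 0 := by
  simp_rw [chr_apply]
  rw [Measure.volume_eq_prod, integral_prod_mul, integral_fourier, integral_fourier]
  split_ifs <;> simp_all

lemma fourier_coe_real (n : ℤ) (x : ℝ) : (fourier n (x : Torus1) : ℂ) =
    Complex.exp (Complex.I * ((2 * Real.pi * n * x : ℝ) : ℂ)) := by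
  rw [fourier_coe_apply]
  congr 1; push_cast; simp; ring

lemma norm_fourier (n : ℤ) (x : Torus1) : ‖(fourier n x : ℂ)‖ = 1 := by
  rw [fourier_apply, Circle.norm_coe]

lemma fourier_nsmul' (l : ℤ) (B : ℕ) (s : Torus1) : (fourier l (B • s) : ℂ) = fourier (l * B) s := by
  rw [mul_comm, fourier_natMul]; simp

lemma chr_shF (l k : ℤ) (A : ℝ) (B q : ℕ) (z : Torus2) :
    chr l k (shF A B q z) = fourier l z.1 * (fourier (l * B + k) z.2 *
      Complex.exp (Complex.I * ((2 * Real.pi * A * (((l * B + k : ℤ) : ℂ) * fourier (q:ℤ) z.1).re : ℝ) : ℂ))) := by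
  simp only [chr_apply, shF]
  rw [fourier_zadd, fourier_nsmul', mul_assoc, ← fourier_add, fourier_zadd, fourier_coe_real]
  congr 5
  simp
  ring

lemma chr_prod (l k l' k' : ℤ) (A : ℝ) (B q : ℕ) (z z' : Torus2) (th : Torus1) :
    chr l k (shF A B q (rotT th z)) * chr l' k' (shF A B q (rotT th z')) =
    (fourier l z.1 * fourier (l * B + k) z.2 * fourier l' z'.1 * fourier (l' * B + k') z'.2) *
    oscU q (l + l') A (((l * B + k : ℤ) : ℂ) * fourier (q:ℤ) z.1 + ((l' * B + k' : ℤ) : ℂ) * fourier (q:ℤ) z'.1) th := by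
  rw [chr_shF, chr_shF]
  simp only [rotT, oscU]
  rw [fourier_zadd l, fourier_zadd l', fourier_zadd (q:ℤ), fourier_zadd (q:ℤ), fourier_add (m := l)]
  have : ∀ a b : ℝ, Complex.exp (Complex.I * ((a + b : ℝ) : ℂ)) =
    Complex.exp (Complex.I * a) * Complex.exp (Complex.I * b) := by
    intro a b; rw [← Complex.exp_add]; push_cast; ring_nf
  rw [add_mul (_ * _) , Complex.add_re, mul_add, this, mul_assoc _ (fourier (q:ℤ) z.1 : ℂ), mul_assoc _ (fourier (q:ℤ) z'.1 : ℂ)]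
  ring

lemma int_ne_zero_of_big {l k : ℤ} {B : ℕ} (hB : |k| < B) (h : ¬ (l = 0 ∧ k = 0)) : l * B + k ≠ 0 := by
  intro h0
  by_cases hl : l = 0
  · subst hl; simp at h0; exact h ⟨rfl, h0⟩
  · have h1 : |k| = |l| * B := by
      have : k = - (l * B) := by linarith
      rw [this, abs_neg, abs_mul]; simp
    have h2 : 1 ≤ |l| := Int.one_le_abs hl
    nlinarith [abs_nonneg k]

lemma normC_ge (K1 K2 : ℤ) (h : ¬ (K1 = 0 ∧ K2 = 0)) (q : ℕ) (A w : ℝ) (hA : 0 ≤ A) (hw : w ≤ A) (a a' : Torus1)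
    (hg : GoodW q A w (a' - a)) : w ≤ A * ‖(K1 : ℂ) * fourier (q:ℤ) a + (K2 : ℂ) * fourier (q:ℤ) a'‖ := by
  set W : ℂ := fourier (q:ℤ) (a' - a) with hW
  have e1 : (K1 : ℂ) * fourier (q:ℤ) a + (K2 : ℂ) * fourier (q:ℤ) a' = fourier (q:ℤ) a * (K1 + K2 * W) := by
    have : (fourier (q:ℤ) a' : ℂ) = fourier (q:ℤ) a * W := by
      rw [hW, ← fourier_zadd]; simp
    rw [this]; ring
  rw [e1, norm_mul, norm_fourier, one_mul]
  have hW1 : ‖W‖ = 1 := norm_fourier _ _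
  have key : ∀ K : ℤ, K ≠ 0 → ∀ v : ℂ, w ≤ A * ‖v‖ → w ≤ A * ‖(K:ℂ) * v‖ := by
    intro K hK v hv
    rw [norm_mul, Complex.norm_intCast]
    have : (1:ℝ) ≤ |(K:ℝ)| := by exact_mod_cast Int.one_le_abs hK
    refine hv.trans (mul_le_mul_of_nonneg_left ?_ hA)
    nlinarith [norm_nonneg v]
  rcases eq_or_ne |K1| |K2| with he | he
  · rcases abs_eq_abs.1 he with he | he
    · have hK : K1 ≠ 0 := by rintro rfl; exact h ⟨rfl, he.symm⟩
      have := key K1 hK _ hg.2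
      rw [← he]
      convert this using 3; ring
    · have hK : K1 ≠ 0 := by rintro rfl; exact h ⟨rfl, by omega⟩
      have := key K1 hK _ hg.1
      have h2 : K2 = -K1 := by omega
      rw [h2]
      convert this using 3; push_cast; ring
  · have h3 : (1:ℝ) ≤ |(|(K1:ℝ)| - |(K2:ℝ)|)| := by
      have : (1:ℤ) ≤ |(|K1| - |K2|)| := Int.one_le_abs (sub_ne_zero.2 he)
      exact_mod_cast this
    have h4 : (1:ℝ) ≤ ‖(K1:ℂ) + K2 * W‖ := by
      refine h3.trans ?_
      have := abs_norm_sub_norm_le (K1:ℂ) (-(K2 * W))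
      rw [norm_neg, norm_mul, hW1, Complex.norm_intCast, Complex.norm_intCast, sub_neg_eq_add, mul_one] at this
      exact this
    nlinarith

lemma KPhi_chr (q : ℕ) (hq : 0 < q) (l k l' k' : ℤ) :
    Tendsto (KPhi q (chr l k) (chr l' k')) (KFil q) (𝓝 0) := by
  rw [Metric.tendsto_nhds]
  intro η hη
  rw [Filter.Eventually, mem_KFil]
  by_cases h0 : (l = 0 ∧ k = 0) ∧ (l' = 0 ∧ k' = 0)
  · obtain ⟨⟨rfl, rfl⟩, rfl, rfl⟩ := h0
    refine Eventually.of_forall fun B => ⟨1, 1, fun A w n al z z' h1 h2 h3 h4 h5 => ?_⟩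
    have hn : (n:ℂ) ≠ 0 := by
      have : (0:ℝ) < n := by linarith
      exact_mod_cast this.ne'
    have hq' : (q:ℂ) ≠ 0 := by exact_mod_cast hq.ne'
    simp only [mem_ofPred_eq, KPhi, integral_chr]
    simp [chr_apply]
    field_simp
    simpa using hη
  · have hinteg : (∫ x, chr l k x) * ∫ x, chr l' k' x = 0 := by
      rw [integral_chr, integral_chr]
      split_ifs <;> simp_all
    have hB : ∀ᶠ B : ℕ in atTop, |k| < B ∧ |k'| < B := by
      filter_upwards [eventually_gt_atTop |k|.toNat, eventually_gt_atTop |k'|.toNat] with B h1 h2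
      omega
    refine hB.mono ?_
    rintro B ⟨hB1, hB2⟩
    set K1 := l * B + k with hK1
    set K2 := l' * B + k' with hK2
    have hK : ¬ (K1 = 0 ∧ K2 = 0) := by
      rintro ⟨a, b⟩
      apply h0
      refine ⟨?_, ?_⟩
      · by_contra hc; exact int_ne_zero_of_big hB1 hc a
      · by_contra hc; exact int_ne_zero_of_big hB2 hc b
    obtain ⟨Ω, K, H⟩ := osc_avg q hq (l + l') (|(K1:ℝ)| + |(K2:ℝ)|) (η/2) (half_pos hη)
    refine ⟨max 1 Ω, max 1 K, fun A w n al z z' h1 h2 h3 h4 h5 => ?_⟩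
    have hw1 : 1 ≤ w := (le_max_left _ _).trans h1
    have hA1 : 1 ≤ A := hw1.trans h2
    have hA0 : 0 ≤ A := by linarith
    have hn1 : A ≤ n := by
      have := mul_le_mul_of_nonneg_right (le_max_left 1 K) hA0
      linarith
    have hn2 : K * A ≤ n := (mul_le_mul_of_nonneg_right (le_max_right 1 K) hA0).trans h3
    have hn : 0 < n := by
      have : (0:ℝ) < n := by linarith
      exact_mod_cast this
    have hH := H A n ((K1 : ℂ) * fourier (q:ℤ) z.1 + (K2 : ℂ) * fourier (q:ℤ) z'.1) hA1
      (((le_max_right _ _).trans h1).trans (normC_ge K1 K2 hK q A w hA0 h2 _ _ h5))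
      (by
        refine (norm_add_le _ _).trans ?_
        rw [norm_mul, norm_mul, norm_fourier, norm_fourier, Complex.norm_intCast, Complex.norm_intCast]
        simp) hn hn2 al h4
    simp only [mem_ofPred_eq, KPhi]
    rw [hinteg, sub_zero, dist_zero_right]
    simp_rw [chr_prod]
    rw [← Finset.mul_sum, mul_left_comm, norm_mul]
    have : ‖(fourier l z.1 * fourier (l * B + k) z.2 * fourier l' z'.1 * fourier (l' * B + k') z'.2 : ℂ)‖ = 1 := by
      simp only [norm_mul, norm_fourier, mul_one]
    rw [this, one_mul]
    exact lt_of_le_of_lt hH (half_lt_self hη)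

lemma norm_integral_C (f : C(Torus2, ℂ)) : ‖∫ x, f x‖ ≤ ‖f‖ := by
  have := norm_integral_le_of_norm_le_const (μ := (volume : Measure Torus2)) (f := f) (C := ‖f‖)
    (Eventually.of_forall fun x => f.norm_coe_le_norm x)
  simpa using this

lemma integrable_C (f : C(Torus2, ℂ)) : Integrable (fun x => f x) (volume : Measure Torus2) :=
  f.continuous.integrable_of_hasCompactSupport (HasCompactSupport.of_compactSpace _)

lemma KPhi_bound (q : ℕ) (f g : C(Torus2, ℂ)) (p : KPar) : ‖KPhi q f g p‖ ≤ 2 * ‖f‖ * ‖g‖ := by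
  unfold KPhi
  refine (norm_sub_le _ _).trans ?_
  have h1 : ‖(∫ x, f x) * ∫ x, g x‖ ≤ ‖f‖ * ‖g‖ := by
    rw [norm_mul]
    exact mul_le_mul (norm_integral_C f) (norm_integral_C g) (norm_nonneg _) (norm_nonneg _)
  have h2 : ∀ n : ℕ, ∀ u : ℕ → ℂ, (∀ j, ‖u j‖ ≤ ‖f‖ * ‖g‖) → ‖(n:ℂ)⁻¹ * ∑ j ∈ Finset.range n, u j‖ ≤ ‖f‖ * ‖g‖ := by
    intro n u hu
    have hs : ‖∑ j ∈ Finset.range n, u j‖ ≤ n * (‖f‖ * ‖g‖) := by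
      refine (norm_sum_le_of_le _ fun j _ => hu j).trans ?_
      simp
    rcases Nat.eq_zero_or_pos n with rfl | hn
    · simp; positivity
    · rw [norm_mul, norm_inv, Complex.norm_natCast]
      have : (0:ℝ) < n := by exact_mod_cast hn
      rw [inv_mul_le_iff₀ this]
      exact hs
  have h3 := h2 (q * p.2.2.1) (fun j => f (shF p.2.1 p.1 q (rotT (j • p.2.2.2.1) p.2.2.2.2.1)) *
    g (shF p.2.1 p.1 q (rotT (j • p.2.2.2.1) p.2.2.2.2.2))) (fun j => by
      rw [norm_mul]
      exact mul_le_mul (f.norm_coe_le_norm _) (g.norm_coe_le_norm _) (norm_nonneg _) (norm_nonneg _))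
  linarith

lemma KPhi_add_left (q : ℕ) (f f' g : C(Torus2, ℂ)) (p : KPar) :
    KPhi q (f + f') g p = KPhi q f g p + KPhi q f' g p := by
  unfold KPhi
  have : ∫ x, (f + f') x = (∫ x, f x) + ∫ x, f' x := integral_add (integrable_C f) (integrable_C f')
  rw [this]
  simp only [ContinuousMap.add_apply, add_mul, Finset.sum_add_distrib]
  ring

lemma KPhi_smul_left (q : ℕ) (c : ℂ) (f g : C(Torus2, ℂ)) (p : KPar) :
    KPhi q (c • f) g p = c * KPhi q f g p := by
  unfold KPhi
  have : ∫ x, (c • f) x = c * (∫ x, f x) := by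
    simp only [ContinuousMap.smul_apply, smul_eq_mul]; exact integral_const_mul _ _
  rw [this]
  simp only [ContinuousMap.smul_apply, smul_eq_mul, mul_assoc, ← Finset.mul_sum]
  ring

/-- Swap in parameter space. -/
def KSwap (p : KPar) : KPar := (p.1, p.2.1, p.2.2.1, p.2.2.2.1, p.2.2.2.2.2, p.2.2.2.2.1)

lemma GoodW_neg (q : ℕ) (A w : ℝ) (d : Torus1) (h : GoodW q A w d) : GoodW q A w (-d) := by
  have e : (fourier (q:ℤ) (-d) : ℂ) = (starRingEnd ℂ) (fourier (q:ℤ) d) := by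
    rw [← fourier_neg]; simp [fourier_apply]
  have e1 : ‖1 - (fourier (q:ℤ) (-d) : ℂ)‖ = ‖1 - (fourier (q:ℤ) d : ℂ)‖ := by
    rw [e, ← Complex.norm_conj]; simp
  have e2 : ‖1 + (fourier (q:ℤ) (-d) : ℂ)‖ = ‖1 + (fourier (q:ℤ) d : ℂ)‖ := by
    rw [e, ← Complex.norm_conj]; simp
  unfold GoodW
  rw [e1, e2]; exact h

lemma KSwap_tendsto (q : ℕ) : Tendsto KSwap (KFil q) (KFil q) := by
  intro S hS
  rw [mem_map, mem_KFil]
  rw [mem_KFil] at hS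
  refine hS.mono ?_
  rintro B ⟨Ω, K, h⟩
  refine ⟨Ω, K, fun A w n al z z' h1 h2 h3 h4 h5 => h A w n al z' z h1 h2 h3 h4 ?_⟩
  have := GoodW_neg _ _ _ _ h5
  rwa [neg_sub] at this

lemma KPhi_swap (q : ℕ) (f g : C(Torus2, ℂ)) (p : KPar) : KPhi q f g p = KPhi q g f (KSwap p) := by
  simp only [KPhi, KSwap, mul_comm]

lemma dense_chr (W : Submodule ℂ C(Torus2, ℂ)) (hcl : ∀ f ∈ closure (W : Set C(Torus2, ℂ)), f ∈ W)
    (hW : ∀ l k, chr l k ∈ W) (f : C(Torus2, ℂ)) : f ∈ W := by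
  let φ : UnitAddTorus (Fin 2) → Torus2 := fun x => (x 0, x 1)
  let ψ : C(Torus2, UnitAddTorus (Fin 2)) := ⟨fun z => ![z.1, z.2], by
    refine continuous_pi fun i => ?_
    fin_cases i
    · exact continuous_fst
    · exact continuous_snd⟩
  have hφ : Continuous φ := by fun_prop
  let f₁ : C(UnitAddTorus (Fin 2), ℂ) := f.comp ⟨φ, hφ⟩
  have hf₁ : f₁ ∈ (Submodule.span ℂ (range <| UnitAddTorus.mFourier (d := Fin 2))).topologicalClosure := by
    rw [UnitAddTorus.span_mFourier_closure_eq_top]; trivial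
  have hcont : Continuous (fun h : C(UnitAddTorus (Fin 2), ℂ) => h.comp ψ) :=
    ContinuousMap.continuous_precomp ψ
  have hf2 : f = f₁.comp ψ := by
    ext z; rfl
  apply hcl
  rw [hf2]
  refine map_mem_closure (f := fun h : C(UnitAddTorus (Fin 2), ℂ) => h.comp ψ) hcont hf₁ ?_
  intro h hh
  have hh' : h ∈ Submodule.span ℂ (range <| UnitAddTorus.mFourier (d := Fin 2)) := hh
  refine Submodule.span_induction (p := fun h _ => h.comp ψ ∈ W) ?_ ?_ ?_ ?_ hh'
  · rintro _ ⟨m, rfl⟩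
    have : (UnitAddTorus.mFourier m).comp ψ = chr (m 0) (m 1) := by
      ext z
      simp [UnitAddTorus.mFourier, chr_apply, ψ]
    rw [this]; exact hW _ _
  · exact W.zero_mem
  · intro a b _ _ ha hb; exact W.add_mem ha hb
  · intro c a _ ha; exact W.smul_mem c ha

lemma KPhi_closure (q : ℕ) (g : C(Torus2, ℂ)) (hg : ∀ l k, Tendsto (KPhi q (chr l k) g) (KFil q) (𝓝 0))
    (f : C(Torus2, ℂ)) : Tendsto (KPhi q f g) (KFil q) (𝓝 0) := by
  let W : Submodule ℂ C(Torus2, ℂ) :=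
    { carrier := {f | Tendsto (KPhi q f g) (KFil q) (𝓝 0)}
      add_mem' := by
        intro a b ha hb
        have := Tendsto.add ha hb
        rw [add_zero] at this
        exact this.congr fun p => (KPhi_add_left q a b g p).symm
      zero_mem' := by
        have : KPhi q 0 g = fun _ => 0 := by
          funext p
          simp [KPhi]
        show Tendsto (KPhi q 0 g) (KFil q) (𝓝 0)
        rw [this]; exact tendsto_const_nhds
      smul_mem' := by
        intro c a ha
        have := Tendsto.const_mul c ha
        rw [mul_zero] at this
        exact this.congr fun p => (KPhi_smul_left q c a g p).symm }
  have hcl : ∀ f ∈ closure (W : Set C(Torus2, ℂ)), f ∈ W := by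
    intro f hf
    show Tendsto (KPhi q f g) (KFil q) (𝓝 0)
    rw [Metric.tendsto_nhds]
    intro η hη
    have hG : 0 < 2 * ‖g‖ + 1 := by positivity
    obtain ⟨f', hf', hd⟩ := Metric.mem_closure_iff.1 hf (η / 2 / (2 * ‖g‖ + 1)) (by positivity)
    have h1 : Tendsto (KPhi q f' g) (KFil q) (𝓝 0) := hf'
    filter_upwards [(Metric.tendsto_nhds.1 h1) (η/2) (half_pos hη)] with p hp
    have e : KPhi q f g p = KPhi q f' g p + KPhi q (f - f') g p := by
      rw [← KPhi_add_left]; congr 1; abel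
    have hb := KPhi_bound q (f - f') g p
    rw [dist_eq_norm] at hd
    rw [dist_zero_right] at hp ⊢
    rw [e]
    have h3 : ‖f - f'‖ * (2 * ‖g‖ + 1) < η / 2 := (lt_div_iff₀ hG).1 hd
    have h4 := norm_nonneg (f - f')
    calc _ ≤ _ := norm_add_le _ _
      _ < η := by nlinarith
  have hW : ∀ l k, chr l k ∈ W := hg
  exact dense_chr W hcl hW f

/-- Key equidistribution statement. -/
lemma KPhi_tendsto (q : ℕ) (hq : 0 < q) (f g : C(Torus2, ℂ)) : Tendsto (KPhi q f g) (KFil q) (𝓝 0) := by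
  refine KPhi_closure q g (fun l k => ?_) f
  have h1 := KPhi_closure q (chr l k) (fun l' k' => KPhi_chr q hq l' k' l k) g
  exact (h1.comp (KSwap_tendsto q)).congr fun p => (KPhi_swap q _ _ p).symm


/-- Inverse of the shear. -/
noncomputable def shG (A : ℝ) (B q : ℕ) (z : Torus2) : Torus2 :=
  (z.1 - B • z.2, z.2 - ((A * (fourier (q:ℤ) (z.1 - B • z.2)).re : ℝ) : Torus1))

lemma coeT_continuous : Continuous (fun x : ℝ => (x : Torus1)) := AddCircle.continuous_mk' 1

lemma shF_continuous (A : ℝ) (B q : ℕ) : Continuous (shF A B q) := by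
  unfold shF
  have h : Continuous fun z : Torus2 => ((A * (fourier (q:ℤ) z.1).re : ℝ) : Torus1) :=
    coeT_continuous.comp (by fun_prop)
  fun_prop

lemma shG_continuous (A : ℝ) (B q : ℕ) : Continuous (shG A B q) := by
  unfold shG
  have h : Continuous fun z : Torus2 => ((A * (fourier (q:ℤ) (z.1 - B • z.2)).re : ℝ) : Torus1) :=
    coeT_continuous.comp (by fun_prop)
  fun_prop

/-- The shear as a homeomorphism. -/
noncomputable def shH (A : ℝ) (B q : ℕ) : Torus2 ≃ₜ Torus2 where
  toFun := shF A B q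
  invFun := shG A B q
  left_inv := by
    intro z
    simp [shF, shG]
  right_inv := by
    intro z
    simp [shF, shG]
  continuous_toFun := shF_continuous A B q
  continuous_invFun := shG_continuous A B q

lemma shF_mp (A : ℝ) (B q : ℕ) : MeasurePreserving (shF A B q) (volume : Measure Torus2) volume := by
  have h1 : MeasurePreserving (fun z : Torus2 => (z.1, z.2 + ((A * (fourier (q:ℤ) z.1).re : ℝ) : Torus1)))
      ((volume : Measure Torus1).prod volume) ((volume : Measure Torus1).prod volume) := by
    refine MeasurePreserving.skew_product (g := fun a b => b + ((A * (fourier (q:ℤ) a).re : ℝ) : Torus1))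
      (MeasurePreserving.id _) ?_ ?_
    · apply Continuous.measurable
      have h : Continuous fun z : Torus2 => ((A * (fourier (q:ℤ) z.1).re : ℝ) : Torus1) :=
        coeT_continuous.comp (by fun_prop)
      simp only [Function.uncurry_def]
      fun_prop
    · exact Eventually.of_forall fun a => (measurePreserving_add_right volume _).map_eq
  have h2 : MeasurePreserving (fun z : Torus2 => (z.1, z.2 + B • z.1))
      ((volume : Measure Torus1).prod volume) ((volume : Measure Torus1).prod volume) := by
    refine MeasurePreserving.skew_product (g := fun a b => b + B • a)
      (MeasurePreserving.id _) ?_ ?_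
    · apply Continuous.measurable
      simp only [Function.uncurry_def]
      fun_prop
    · exact Eventually.of_forall fun a => (measurePreserving_add_right volume _).map_eq
  have h3 := (Measure.measurePreserving_swap (μ := (volume : Measure Torus1)) (ν := (volume : Measure Torus1)))
  exact h3.comp (h2.comp (h3.comp h1))

lemma rotT_mp (t : Torus1) : MeasurePreserving (rotT t) (volume : Measure Torus2) volume := by
  exact MeasurePreserving.prod (measurePreserving_add_right volume t) (MeasurePreserving.id (volume : Measure Torus1))

lemma rotT_continuous (t : Torus1) : Continuous (rotT t) := by unfold rotT; fun_prop

/-- State of the construction. -/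
structure St where
  e : Torus2 ≃ₜ Torus2
  b : ℤ
  F : ℝ × ℝ → ℝ × ℝ
  G : ℝ × ℝ → ℝ × ℝ
  sF : ContDiff ℝ (⊤ : ℕ∞) F
  sG : ContDiff ℝ (⊤ : ℕ∞) G
  lF : IsLiftOf F e
  lG : IsLiftOf G e.symm
  pF : ∀ (p : ℝ × ℝ) (m n : ℤ), F (p + ((m:ℝ), (n:ℝ))) = F p + (((m + b * n : ℤ):ℝ), (n:ℝ))
  pG : ∀ (p : ℝ × ℝ) (m n : ℤ), G (p + ((m:ℝ), (n:ℝ))) = G p + (((m - b * n : ℤ):ℝ), (n:ℝ))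
  mp : MeasurePreserving e (volume : Measure Torus2) volume
  p : ℤ
  q : ℕ
  hq : 0 < q

namespace St

/-- rotation number -/
noncomputable def al (s : St) : ℝ := (s.p : ℝ) / s.q

/-- conjugated rotation -/
noncomputable def Tr (s : St) (t : Torus1) (x : Torus2) : Torus2 := s.e (rotT t (s.e.symm x))

/-- the map of the state -/
noncomputable def T (s : St) : Torus2 → Torus2 := s.Tr (s.al : Torus1)

/-- lift of `T` or of its inverse -/
noncomputable def L (s : St) (σ : ℝ) (p : ℝ × ℝ) : ℝ × ℝ := s.F (s.G p + (σ * s.al, 0))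

lemma Tr_add (s : St) (t t' : Torus1) (x : Torus2) : s.Tr t (s.Tr t' x) = s.Tr (t' + t) x := by
  simp [Tr, rotT, add_assoc]

lemma Tr_zero (s : St) (x : Torus2) : s.Tr 0 x = x := by
  simp [Tr, rotT]

lemma Tr_mp (s : St) (t : Torus1) : MeasurePreserving (s.Tr t) (volume : Measure Torus2) volume := by
  have h := s.mp.symm (e := s.e.toMeasurableEquiv)
  exact s.mp.comp ((rotT_mp t).comp h)

lemma Tr_continuous (s : St) (t : Torus1) : Continuous (s.Tr t) :=
  s.e.continuous.comp ((rotT_continuous t).comp s.e.symm.continuous)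

lemma T_iter (s : St) (j : ℕ) (x : Torus2) : s.T^[j] x = s.Tr (j • (s.al : Torus1)) x := by
  induction j with
  | zero => simp [Tr_zero]
  | succ j ih =>
    rw [Function.iterate_succ_apply', ih, T, Tr_add, succ_nsmul]

lemma L_lift (s : St) (σ : ℝ) : IsLiftOf (s.L σ) (s.Tr ((σ * s.al : ℝ) : Torus1)) := by
  intro p
  have h1 := s.lF (s.G p + (σ * s.al, 0))
  have h2 := s.lG p
  rw [L, h1, Tr, ← h2]
  congr 1
  simp [torusProj, rotT]

lemma L_per (s : St) (σ : ℝ) (p : ℝ × ℝ) (m n : ℤ) : s.L σ (p + ((m:ℝ), (n:ℝ))) = s.L σ p + ((m:ℝ), (n:ℝ)) := by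
  unfold L
  rw [s.pG, add_right_comm, s.pF]
  congr 2
  push_cast; ring

lemma L_smooth (s : St) (σ : ℝ) : ContDiff ℝ (⊤ : ℕ∞) (s.L σ) :=
  s.sF.comp (s.sG.add contDiff_const)

end St

/-- Real lift of the shear -/
noncomputable def rS (A : ℝ) (B q : ℕ) (p : ℝ × ℝ) : ℝ × ℝ :=
  (p.1 + B * (p.2 + A * Real.cos (2 * Real.pi * q * p.1)), p.2 + A * Real.cos (2 * Real.pi * q * p.1))

/-- Real lift of the inverse of the shear -/
noncomputable def rSi (A : ℝ) (B q : ℕ) (p : ℝ × ℝ) : ℝ × ℝ :=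
  (p.1 - B * p.2, p.2 - A * Real.cos (2 * Real.pi * q * (p.1 - B * p.2)))

lemma fourier_re_coe (q : ℕ) (x : ℝ) : (fourier (q:ℤ) (x : Torus1) : ℂ).re = Real.cos (2 * Real.pi * q * x) := by
  rw [fourier_coe_real, mul_comm, Complex.exp_ofReal_mul_I_re]
  push_cast; ring_nf

lemma rS_lift (A : ℝ) (B q : ℕ) : IsLiftOf (rS A B q) (shF A B q) := by
  intro p
  simp only [torusProj, rS, shF, fourier_re_coe]
  simp

lemma rSi_lift (A : ℝ) (B q : ℕ) : IsLiftOf (rSi A B q) (shG A B q) := by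
  intro p
  have h : ((p.1 : Torus1) - B • (p.2 : Torus1)) = ((p.1 - B * p.2 : ℝ) : Torus1) := by simp
  simp only [torusProj, rSi, shG]
  rw [h, fourier_re_coe]
  simp

lemma cos_per (q : ℕ) (x : ℝ) (m : ℤ) : Real.cos (2 * Real.pi * q * (x + m)) = Real.cos (2 * Real.pi * q * x) := by
  have : 2 * Real.pi * q * (x + m) = 2 * Real.pi * q * x + ((q * m : ℤ) : ℝ) * (2 * Real.pi) := by
    push_cast; ring
  rw [this, Real.cos_add_int_mul_two_pi]

/-- The next state. -/
noncomputable def St.next (s : St) (A : ℝ) (B N : ℕ) (hN : 0 < N) (p' : ℤ) : St where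
  e := (shH A B s.q).trans s.e
  b := s.b + B
  F := fun p => s.F (rS A B s.q p)
  G := fun p => rSi A B s.q (s.G p)
  sF := s.sF.comp (by unfold rS; fun_prop)
  sG := by
    have h : ContDiff ℝ (⊤ : ℕ∞) (rSi A B s.q) := by unfold rSi; fun_prop
    exact h.comp s.sG
  lF := by
    intro p
    rw [s.lF, rS_lift]; rfl
  lG := by
    intro p
    rw [rSi_lift, s.lG]; rfl
  pF := by
    intro p m n
    have : rS A B s.q (p + ((m:ℝ), (n:ℝ))) = rS A B s.q p + (((m + B * n : ℤ) : ℝ), (n:ℝ)) := by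
      simp only [rS, Prod.fst_add, Prod.snd_add, cos_per, Prod.mk_add_mk]
      refine Prod.ext ?_ ?_ <;> simp <;> ring
    rw [this, s.pF]
    congr 2
    push_cast; ring
  pG := by
    intro p m n
    rw [s.pG]
    have h1 : ∀ u : ℝ × ℝ, ∀ m' : ℤ, rSi A B s.q (u + ((m':ℝ), (n:ℝ))) = rSi A B s.q u + (((m' - B * n : ℤ) : ℝ), (n:ℝ)) := by
      intro u m'
      have h2 : u.1 + m' - B * (u.2 + n) = (u.1 - B * u.2) + ((m' - B * n : ℤ) : ℝ) := by push_cast; ring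
      simp only [rSi, Prod.fst_add, Prod.snd_add, Prod.mk_add_mk]
      rw [h2, cos_per]
      refine Prod.ext ?_ ?_ <;> simp <;> ring
    rw [h1]
    congr 2
    push_cast; ring
  mp := s.mp.comp (shF_mp A B s.q)
  p := p'
  q := N
  hq := hN

lemma St.next_e (s : St) (A : ℝ) (B N : ℕ) (hN : 0 < N) (p' : ℤ) (z : Torus2) :
    (s.next A B N hN p').e z = s.e (shF A B s.q z) := rfl

lemma St.next_e_symm (s : St) (A : ℝ) (B N : ℕ) (hN : 0 < N) (p' : ℤ) (z : Torus2) :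
    (s.next A B N hN p').e.symm z = shG A B s.q (s.e.symm z) := rfl

/-- The finite-parameter family of lifts. -/
noncomputable def Psi (s : St) (B : ℕ) (σ : ℝ) (v : (ℝ × ℝ × ℝ) × (ℝ × ℝ)) : ℝ × ℝ :=
  s.F (s.G v.2 + (σ * s.al + v.1.1, 0) +
    (v.1.2.1 * Real.cos (2 * Real.pi * s.q * ((s.G v.2).1 - B * (s.G v.2).2)) -
     v.1.2.2 * Real.sin (2 * Real.pi * s.q * ((s.G v.2).1 - B * (s.G v.2).2))) • ((B:ℝ), (1:ℝ)))

lemma Psi_smooth (s : St) (B : ℕ) (σ : ℝ) : ContDiff ℝ (⊤ : ℕ∞) (Psi s B σ) := by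
  have hG := s.sG
  have hF := s.sF
  have h2 : ContDiff ℝ (⊤ : ℕ∞) (fun v : (ℝ × ℝ × ℝ) × (ℝ × ℝ) => s.G v.2) := hG.comp contDiff_snd
  unfold Psi
  apply hF.comp
  fun_prop

lemma Psi_zero (s : St) (B : ℕ) (σ : ℝ) (p : ℝ × ℝ) : Psi s B σ (0, p) = s.L σ p := by
  simp [Psi, St.L]

lemma next_L (s : St) (A : ℝ) (B N : ℕ) (hN : 0 < N) (hqN : s.q ∣ N) (p' : ℤ)
    (hp' : p' = s.p * (N / s.q : ℕ) + 1) (σ : ℤ) (p : ℝ × ℝ) :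
    (s.next A B N hN p').L σ p =
      Psi s B σ ((σ / N, A * (Real.cos (σ * (2 * Real.pi * s.q / N)) - 1), A * Real.sin (σ * (2 * Real.pi * s.q / N))), p) := by
  obtain ⟨n, rfl⟩ := hqN
  have hq := s.hq
  have hn : 0 < n := Nat.pos_of_mul_pos_left hN
  have hq0 : (s.q:ℝ) ≠ 0 := by exact_mod_cast hq.ne'
  have hn0 : (n:ℝ) ≠ 0 := by exact_mod_cast hn.ne'
  have hal : (s.next A B (s.q * n) hN p').al = s.al + 1 / ((s.q * n : ℕ) : ℝ) := by
    simp only [St.al, St.next, hp']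
    rw [Nat.mul_div_cancel_left _ hq]
    push_cast
    field_simp
  unfold St.L Psi
  rw [hal]
  simp only [St.next]
  congr 1
  set P := s.G p with hP
  set u := P.1 - B * P.2 with hu
  have hcos : Real.cos (2 * Real.pi * s.q * (u + σ * (s.al + 1 / ((s.q * n : ℕ) : ℝ)))) =
      Real.cos (2 * Real.pi * s.q * u) * Real.cos (σ * (2 * Real.pi * s.q / ((s.q * n : ℕ) : ℝ))) -
      Real.sin (2 * Real.pi * s.q * u) * Real.sin (σ * (2 * Real.pi * s.q / ((s.q * n : ℕ) : ℝ))) := by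
    rw [← Real.cos_add]
    have : 2 * Real.pi * s.q * (u + σ * (s.al + 1 / ((s.q * n : ℕ) : ℝ))) =
      2 * Real.pi * s.q * u + (σ * (2 * Real.pi * s.q / ((s.q * n : ℕ) : ℝ))) + ((σ * s.p : ℤ) : ℝ) * (2 * Real.pi) := by
      simp only [St.al]; push_cast; field_simp; ring
    rw [this, Real.cos_add_int_mul_two_pi]
  simp only [rS, rSi, Prod.fst_add, Prod.snd_add]
  rw [← hu, hcos]
  refine Prod.ext ?_ ?_ <;> simp <;> ring


lemma param_iter {D : (ℝ × ℝ × ℝ) × (ℝ × ℝ) → ℝ × ℝ} (hD : ContDiff ℝ (⊤ : ℕ∞) D) (r : ℕ) :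
    Continuous (fun v : (ℝ × ℝ × ℝ) × (ℝ × ℝ) => ‖iteratedFDeriv ℝ r (fun p => D (v.1, p)) v.2‖) := by
  have h : ∀ v : (ℝ × ℝ × ℝ) × (ℝ × ℝ), iteratedFDeriv ℝ r (fun p => D (v.1, p)) v.2 =
      (iteratedFDeriv ℝ r D v).compContinuousLinearMap
        (fun _ => ContinuousLinearMap.inr ℝ (ℝ × ℝ × ℝ) (ℝ × ℝ)) := by
    intro v
    have e : (fun p => D (v.1, p)) = (fun w => D (w + (v.1, 0))) ∘ (ContinuousLinearMap.inr ℝ (ℝ × ℝ × ℝ) (ℝ × ℝ)) := by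
      funext p; simp
    have hs : ContDiff ℝ (⊤ : ℕ∞) (fun w => D (w + (v.1, (0 : ℝ × ℝ)))) := hD.comp (by fun_prop)
    rw [e, ContinuousLinearMap.iteratedFDeriv_comp_right _ hs v.2 (by exact_mod_cast le_top)]
    rw [iteratedFDeriv_comp_add_right]
    congr 2
    simp
  simp_rw [h]
  have hc : Continuous (iteratedFDeriv ℝ r D) := hD.continuous_iteratedFDeriv (by exact_mod_cast le_top)
  have := (ContinuousMultilinearMap.compContinuousLinearMapL (𝕜 := ℝ) (F := ℝ × ℝ)
    (fun _ : Fin r => ContinuousLinearMap.inr ℝ (ℝ × ℝ × ℝ) (ℝ × ℝ))).continuous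
  exact (this.comp hc).norm

lemma Psi_close_one (s : St) (B : ℕ) (σ : ℝ) (r : ℕ) {η : ℝ} (hη : 0 < η) :
    ∀ᶠ c in 𝓝 (0 : ℝ × ℝ × ℝ), ∀ p ∈ (Icc (0:ℝ) 1 ×ˢ Icc (0:ℝ) 1 : Set (ℝ × ℝ)),
      ‖iteratedFDeriv ℝ r (fun p => Psi s B σ (c, p) - s.L σ p) p‖ ≤ η := by
  have hD : ContDiff ℝ (⊤ : ℕ∞) (fun v : (ℝ × ℝ × ℝ) × (ℝ × ℝ) => Psi s B σ v - s.L σ v.2) :=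
    (Psi_smooth s B σ).sub ((s.L_smooth σ).comp contDiff_snd)
  have hc := param_iter hD r
  have hK : IsCompact (Icc (0:ℝ) 1 ×ˢ Icc (0:ℝ) 1 : Set (ℝ × ℝ)) := isCompact_Icc.prod isCompact_Icc
  refine hK.eventually_forall_of_forall_eventually ?_
  intro p hp
  have h0 : ‖iteratedFDeriv ℝ r (fun p => Psi s B σ ((0 : ℝ × ℝ × ℝ), p) - s.L σ p) p‖ = 0 := by
    simp [Psi_zero]
  have := hc.tendsto ((0 : ℝ × ℝ × ℝ), p)
  simp only at this
  rw [h0] at this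
  exact (this.eventually (gt_mem_nhds hη)).mono fun v hv => hv.le

lemma per_iter (D : ℝ × ℝ → ℝ × ℝ) (hper : ∀ (p : ℝ × ℝ) (m n : ℤ), D (p + ((m:ℝ), (n:ℝ))) = D p) (r : ℕ) (η : ℝ)
    (h : ∀ p ∈ (Icc (0:ℝ) 1 ×ˢ Icc (0:ℝ) 1 : Set (ℝ × ℝ)), ‖iteratedFDeriv ℝ r D p‖ ≤ η) (p : ℝ × ℝ) :
    ‖iteratedFDeriv ℝ r D p‖ ≤ η := by
  have e : iteratedFDeriv ℝ r D (Int.fract p.1, Int.fract p.2) = iteratedFDeriv ℝ r D p := by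
    have h1 : (fun x => D (x + (((-⌊p.1⌋ : ℤ):ℝ), ((-⌊p.2⌋ : ℤ):ℝ)))) = D := by
      funext x; exact hper _ _ _
    have h2 := iteratedFDeriv_comp_add_right (𝕜 := ℝ) (f := D) r (((-⌊p.1⌋ : ℤ):ℝ), ((-⌊p.2⌋ : ℤ):ℝ)) p
    rw [h1] at h2
    rw [h2]
    congr 1
    refine Prod.ext ?_ ?_ <;> simp [Int.fract, sub_eq_add_neg]
  rw [← e]
  exact h _ ⟨⟨Int.fract_nonneg _, (Int.fract_lt_one _).le⟩, ⟨Int.fract_nonneg _, (Int.fract_lt_one _).le⟩⟩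

/-- Closeness of the lifts. -/
def SmoothClose (k : ℕ) (s s' : St) : Prop :=
  ∀ σ : ℤ, (σ = 1 ∨ σ = -1) → ∀ r ≤ k, ∀ p, ‖iteratedFDeriv ℝ r (fun p => s'.L σ p - s.L σ p) p‖ ≤ (1/2)^k

lemma smooth_close (s : St) (B k : ℕ) : ∀ᶠ c in 𝓝 (0 : ℝ × ℝ), ∀ (A : ℝ) (N : ℕ) (hN : 0 < N) (p' : ℤ),
    s.q ∣ N → p' = s.p * (N / s.q : ℕ) + 1 → c = (1 / (N:ℝ), A / N) → 1 ≤ A →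
    SmoothClose k s (s.next A B N hN p') := by
  have hη : (0:ℝ) < (1/2)^k := by positivity
  have h1 : ∀ᶠ c in 𝓝 (0 : ℝ × ℝ × ℝ), ∀ σ ∈ ({1, -1} : Finset ℤ), ∀ r ∈ Finset.range (k+1), ∀ p ∈ (Icc (0:ℝ) 1 ×ˢ Icc (0:ℝ) 1 : Set (ℝ × ℝ)),
      ‖iteratedFDeriv ℝ r (fun p => Psi s B σ (c, p) - s.L σ p) p‖ ≤ (1/2)^k := by
    rw [Finset.eventually_all]
    intro σ _
    rw [Finset.eventually_all]
    intro r _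
    exact Psi_close_one s B σ r hη
  rw [Metric.eventually_nhds_iff] at h1
  obtain ⟨δ, hδ, h1⟩ := h1
  set K : ℝ := 1 + 2 * Real.pi * s.q with hK
  have hK0 : 0 < K := by positivity
  rw [Metric.eventually_nhds_iff]
  refine ⟨δ / K, by positivity, ?_⟩
  rintro c hc A N hN p' hqN hp' rfl hA σ hσ r hr
  have hN0 : (0:ℝ) < N := by exact_mod_cast hN
  have hc' : A / N < δ / K := by
    rw [dist_zero_right, Prod.norm_mk] at hc
    have := (le_max_right _ _).trans_lt hc
    rwa [Real.norm_of_nonneg (by positivity)] at this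
  have hc2 : (A / N) * K < δ := (lt_div_iff₀ hK0).1 hc'
  have hσ1 : |(σ:ℝ)| = 1 := by rcases hσ with rfl | rfl <;> simp
  have hAN : 1 / (N:ℝ) ≤ A / N := by gcongr
  have hx : |(σ * (2 * Real.pi * s.q / N) : ℝ)| = 2 * Real.pi * s.q / N := by
    rw [abs_mul, hσ1, one_mul, abs_of_nonneg (by positivity)]
  have hAx : A * (2 * Real.pi * s.q / N) ≤ (A / N) * K := by
    rw [hK]; have : 0 ≤ A / N := by positivity
    calc A * (2 * Real.pi * s.q / N) = (A / N) * (2 * Real.pi * s.q) := by ring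
      _ ≤ _ := by nlinarith
  have hsin : |Real.sin (σ * (2 * Real.pi * s.q / N))| ≤ 2 * Real.pi * s.q / N := by
    exact Real.abs_sin_le_abs.trans hx.le
  have hcos : |Real.cos (σ * (2 * Real.pi * s.q / N)) - 1| ≤ 2 * Real.pi * s.q / N := by
    have := Real.abs_cos_sub_cos_le (σ * (2 * Real.pi * s.q / N)) 0
    rw [Real.cos_zero, sub_zero, hx] at this
    exact this
  refine per_iter _ ?_ r _ ?_
  · intro p m n
    simp [St.L_per]
  · have hd : dist (((σ / N : ℝ), A * (Real.cos (σ * (2 * Real.pi * s.q / N)) - 1), A * Real.sin (σ * (2 * Real.pi * s.q / N))) : ℝ × ℝ × ℝ) 0 < δ := by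
      rw [dist_zero_right, Prod.norm_mk, Prod.norm_mk]
      have hA0 : 0 ≤ A := by linarith
      refine max_lt ?_ (max_lt ?_ ?_)
      · rw [Real.norm_eq_abs, abs_div, hσ1, abs_of_pos hN0]
        have : A / N ≤ (A / N) * K := by
          have : 0 ≤ A / N := by positivity
          have : 0 ≤ 2 * Real.pi * s.q := by positivity
          nlinarith
        linarith
      · rw [Real.norm_eq_abs, abs_mul, abs_of_nonneg hA0]
        exact ((mul_le_mul_of_nonneg_left hcos hA0).trans hAx).trans_lt hc2
      · rw [Real.norm_eq_abs, abs_mul, abs_of_nonneg hA0]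
        exact ((mul_le_mul_of_nonneg_left hsin hA0).trans hAx).trans_lt hc2
    have h2 := h1 hd σ (by simpa using hσ) r (by simp; omega)
    have e : (fun p => (s.next A B N hN p').L σ p - s.L σ p) = fun p => Psi s B σ (((σ / N : ℝ), A * (Real.cos (σ * (2 * Real.pi * s.q / N)) - 1), A * Real.sin (σ * (2 * Real.pi * s.q / N))), p) - s.L σ p := by
      funext p; rw [next_L s A B N hN hqN p' hp']
    rw [e]
    exact h2


lemma T1_rep (d : Torus1) : ∃ x : ℝ, (x : Torus1) = d ∧ |x| = ‖d‖ := by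
  induction d using QuotientAddGroup.induction_on with
  | H x =>
    refine ⟨x - round x, ?_, ?_⟩
    · have : ((round x : ℝ) : Torus1) = 0 := by
        have := AddCircle.coe_eq_zero_iff (1:ℝ) (x := (round x : ℝ))
        rw [this]; exact ⟨round x, by simp⟩
      rw [AddCircle.coe_sub, this, sub_zero]
    · have := AddCircle.norm_eq (1:ℝ) (x := x)
      simp at this
      exact this.symm

lemma T1_norm_coe_le (x : ℝ) : ‖(x : Torus1)‖ ≤ |x| := by
  rw [AddCircle.norm_eq]
  simp
  simpa using round_le x 0

lemma fourier_sub_one_le (q : ℕ) (d : Torus1) : ‖(fourier (q:ℤ) d : ℂ) - 1‖ ≤ 2 * Real.pi * q * ‖d‖ := by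
  obtain ⟨x, rfl, hx⟩ := T1_rep d
  rw [fourier_coe_real, ← hx]
  have := exp_I_lip (2 * Real.pi * (q:ℤ) * x) 0
  simp only [Complex.ofReal_zero, mul_zero, Complex.exp_zero, sub_zero] at this
  refine this.trans (le_of_eq ?_)
  rw [abs_mul, abs_of_nonneg (by positivity)]
  push_cast; ring

lemma T1_nsmul_le (B : ℕ) (d : Torus1) : ‖B • d‖ ≤ B * ‖d‖ := norm_nsmul_le

lemma re_diff_le (q : ℕ) (a a' : Torus1) :
    |(fourier (q:ℤ) a : ℂ).re - (fourier (q:ℤ) a' : ℂ).re| ≤ ‖(fourier (q:ℤ) (a - a') : ℂ) - 1‖ := by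
  have e : (fourier (q:ℤ) a : ℂ) - fourier (q:ℤ) a' = fourier (q:ℤ) a' * (fourier (q:ℤ) (a - a') - 1) := by
    rw [mul_sub, ← fourier_zadd]; simp
  rw [← Complex.sub_re]
  refine (Complex.abs_re_le_norm _).trans ?_
  rw [e, norm_mul, norm_fourier, one_mul]

lemma sh_near (A : ℝ) (hA : 0 ≤ A) (B q : ℕ) (t t0 : Torus1) (z : Torus2) :
    dist (shF A B q (rotT t (shG A B q z))) (rotT t0 z) ≤
      ‖t - t0‖ + (B + 1) * (A * ‖(fourier (q:ℤ) t : ℂ) - 1‖) := by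
  set u := z.1 - B • z.2 with hu
  set d : Torus1 := ((A * ((fourier (q:ℤ) (u + t) : ℂ).re - (fourier (q:ℤ) u : ℂ).re) : ℝ) : Torus1) with hd
  have e : shF A B q (rotT t (shG A B q z)) = (z.1 + t + B • d, z.2 + d) := by
    simp only [shF, rotT, shG]
    rw [← hu]
    have : z.2 - ((A * (fourier (q:ℤ) u : ℂ).re : ℝ) : Torus1) + ((A * (fourier (q:ℤ) (u + t) : ℂ).re : ℝ) : Torus1) = z.2 + d := by
      rw [hd, mul_sub, AddCircle.coe_sub]; abel
    rw [this]
    refine Prod.ext ?_ rfl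
    simp only [hu, nsmul_add]
    abel
  have hdn : ‖d‖ ≤ A * ‖(fourier (q:ℤ) t : ℂ) - 1‖ := by
    refine (T1_norm_coe_le _).trans ?_
    rw [abs_mul, abs_of_nonneg hA]
    refine mul_le_mul_of_nonneg_left ?_ hA
    have := re_diff_le q (u + t) u
    rwa [add_sub_cancel_left] at this
  rw [e, Prod.dist_eq]
  simp only [rotT]
  have hB : (0:ℝ) ≤ B := Nat.cast_nonneg B
  have h0 := norm_nonneg d
  refine max_le ?_ ?_
  · rw [dist_eq_norm]
    have : z.1 + t + B • d - (z.1 + t0) = (t - t0) + B • d := by abel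
    rw [this]
    refine (norm_add_le _ _).trans ?_
    have := T1_nsmul_le B d
    nlinarith
  · rw [dist_eq_norm, add_sub_cancel_left]
    have := norm_nonneg (t - t0)
    nlinarith

lemma sh_cover (A : ℝ) (hA : 0 ≤ A) (B q : ℕ) (t : Torus1) (w w' : Torus2) :
    dist (shF A B q (rotT t w)) (shF A B q (rotT t w')) ≤
      ‖w.1 - w'.1‖ + (B + 1) * (‖w.2 - w'.2‖ + A * (2 * Real.pi * q * ‖w.1 - w'.1‖)) := by
  set s := w.2 + ((A * (fourier (q:ℤ) (w.1 + t) : ℂ).re : ℝ) : Torus1) with hs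
  set s' := w'.2 + ((A * (fourier (q:ℤ) (w'.1 + t) : ℂ).re : ℝ) : Torus1) with hs'
  have hss : ‖s - s'‖ ≤ ‖w.2 - w'.2‖ + A * (2 * Real.pi * q * ‖w.1 - w'.1‖) := by
    have : s - s' = (w.2 - w'.2) + ((A * ((fourier (q:ℤ) (w.1 + t) : ℂ).re - (fourier (q:ℤ) (w'.1 + t) : ℂ).re) : ℝ) : Torus1) := by
      rw [hs, hs', mul_sub, AddCircle.coe_sub]; abel
    rw [this]
    refine (norm_add_le _ _).trans (add_le_add le_rfl ?_)
    refine (T1_norm_coe_le _).trans ?_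
    rw [abs_mul, abs_of_nonneg hA]
    refine mul_le_mul_of_nonneg_left ?_ hA
    refine (re_diff_le q _ _).trans ?_
    rw [add_sub_add_right_eq_sub]
    exact fourier_sub_one_le q _
  have e : shF A B q (rotT t w) = (w.1 + t + B • s, s) := rfl
  have e' : shF A B q (rotT t w') = (w'.1 + t + B • s', s') := rfl
  rw [e, e', Prod.dist_eq]
  have hB : (0:ℝ) ≤ B := Nat.cast_nonneg B
  have h0 := norm_nonneg (s - s')
  refine max_le ?_ ?_
  · rw [dist_eq_norm]
    have : w.1 + t + B • s - (w'.1 + t + B • s') = (w.1 - w'.1) + B • (s - s') := by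
      rw [nsmul_sub]; abel
    rw [this]
    refine (norm_add_le _ _).trans ?_
    have := T1_nsmul_le B (s - s')
    nlinarith
  · rw [dist_eq_norm]
    have := norm_nonneg (w.1 - w'.1)
    simp only
    nlinarith

lemma circle_classes (M : ℕ) (hM : 0 < M) : ∃ c : Torus1 → Fin M, ∀ x y, c x = c y → ‖x - y‖ ≤ 1 / M := by
  have hM0 : (0:ℝ) < M := by exact_mod_cast hM
  have hrep : ∀ x : Torus1, ∃ r : ℝ, 0 ≤ r ∧ r < 1 ∧ (r : Torus1) = x := by
    intro x
    obtain ⟨y, rfl, -⟩ := T1_rep x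
    refine ⟨Int.fract y, Int.fract_nonneg _, Int.fract_lt_one _, ?_⟩
    have h : ((⌊y⌋ : ℝ) : Torus1) = 0 := by
      rw [AddCircle.coe_eq_zero_iff]; exact ⟨⌊y⌋, by simp⟩
    rw [Int.fract, AddCircle.coe_sub, h, sub_zero]
  choose r h0 h1 h2 using hrep
  have hlt : ∀ x, ⌊r x * M⌋₊ < M := by
    intro x
    rw [Nat.floor_lt (by have := h0 x; positivity)]
    have := h1 x; nlinarith
  refine ⟨fun x => ⟨⌊r x * M⌋₊, hlt x⟩, ?_⟩
  intro x y hxy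
  have hxy' : ⌊r x * M⌋₊ = ⌊r y * M⌋₊ := by simpa using hxy
  have a1 := Nat.floor_le (mul_nonneg (h0 x) hM0.le)
  have a2 := Nat.lt_floor_add_one (r x * M)
  have b1 := Nat.floor_le (mul_nonneg (h0 y) hM0.le)
  have b2 := Nat.lt_floor_add_one (r y * M)
  rw [hxy'] at a1 a2
  rw [← h2 x, ← h2 y, ← AddCircle.coe_sub]
  refine (T1_norm_coe_le _).trans ?_
  rw [le_div_iff₀ hM0, ← abs_of_pos hM0, ← abs_mul, abs_le]
  constructor <;> nlinarith

/-- amplitude -/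
noncomputable def AN (N : ℕ) : ℝ := Real.exp (2 * LF N)

lemma AN_pos (N : ℕ) : 0 < AN N := Real.exp_pos _

lemma AN_tendsto : Tendsto AN atTop atTop :=
  Real.tendsto_exp_atTop.comp (LF_tendsto.const_mul_atTop (by norm_num))

lemma LF_le_AN (N : ℕ) : LF N ≤ AN N := by
  have := Real.add_one_le_exp (2 * LF N)
  unfold AN
  have h2 := Real.exp_pos (2 * LF N)
  by_cases h : 0 ≤ LF N
  · linarith
  · linarith

lemma exp_LF_le (C c : ℝ) : ∀ᶠ N : ℕ in atTop, C * Real.exp (c * LF N) ≤ N := by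
  filter_upwards [(log_sub_LF_tendsto c).eventually_ge_atTop (Real.log (max C 1)), eventually_gt_atTop 0] with N h hN
  have hN0 : (0:ℝ) < N := by exact_mod_cast hN
  have h1 : Real.log (max C 1) + c * LF N ≤ Real.log N := by linarith
  have h2 := Real.exp_le_exp.2 h1
  rw [Real.exp_add, Real.exp_log (by positivity), Real.exp_log hN0] at h2
  exact (mul_le_mul_of_nonneg_right (le_max_left _ _) (Real.exp_pos _).le).trans h2

/-- dense sequence of test functions -/
noncomputable def fD : ℕ → C(Torus2, ℂ) := TopologicalSpace.denseSeq C(Torus2, ℂ)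

/-- Step relation. -/
structure Step (k : ℕ) (s s' : St) : Prop where
  dvd : 4 * s.q ^ 2 ∣ s'.q
  al : s'.al = s.al + 1 / s'.q
  gt : k < s'.q
  qA : s.q * AN s'.q ^ 2 ≤ s'.q
  sm : SmoothClose k s s'
  near : ∀ j : ℕ, j * AN s'.q ^ 2 ≤ s'.q → ∀ x, dist (s'.T^[j] x) (s.T^[j] x) ≤ (1/2)^k
  cover : ∃ M : ℕ, ∃ c : Torus2 → Fin M, (M:ℝ) ≤ LF s'.q * AN s'.q ∧
    ∀ x y, c x = c y → ∀ t, dist (s'.Tr t x) (s'.Tr t y) ≤ (1/2)^k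
  mix : ∀ i ≤ k, ∀ i' ≤ k, ∀ x y, GoodW s.q (AN s'.q) (LF s'.q) ((s'.e.symm y).1 - (s'.e.symm x).1) →
    ‖(s'.q:ℂ)⁻¹ * (∑ j ∈ Finset.range s'.q, fD i (s'.T^[j] x) * fD i' (s'.T^[j] y)) -
      (∫ x, fD i x) * ∫ x, fD i' x‖ ≤ (1/2)^k


lemma next_al (s : St) (A : ℝ) (B N : ℕ) (hN : 0 < N) (hqN : s.q ∣ N) :
    (s.next A B N hN (s.p * (N / s.q : ℕ) + 1)).al = s.al + 1 / (N : ℝ) := by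
  obtain ⟨n, rfl⟩ := hqN
  have hq := s.hq
  have hn : 0 < n := Nat.pos_of_mul_pos_left hN
  have hq0 : (s.q:ℝ) ≠ 0 := by exact_mod_cast hq.ne'
  have hn0 : (n:ℝ) ≠ 0 := by exact_mod_cast hn.ne'
  simp only [St.al, St.next]
  rw [Nat.mul_div_cancel_left _ hq]
  push_cast
  field_simp

lemma int_coe_T1 (m : ℤ) : ((m : ℝ) : Torus1) = 0 := by
  rw [AddCircle.coe_eq_zero_iff]; exact ⟨m, by simp⟩

lemma St.q_al (s : St) : s.q • (s.al : Torus1) = 0 := by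
  have hq0 : (s.q:ℝ) ≠ 0 := by exact_mod_cast s.hq.ne'
  rw [← AddCircle.coe_nsmul, nsmul_eq_mul, St.al, mul_div_cancel₀ _ hq0, int_coe_T1]

lemma next_q_al (s : St) (A : ℝ) (B N n : ℕ) (hN : 0 < N) (hn : N = s.q * n) :
    s.q • ((s.next A B N hN (s.p * (N / s.q : ℕ) + 1)).al : Torus1) = ((1 / n : ℝ) : Torus1) := by
  have hq0 : (s.q:ℝ) ≠ 0 := by exact_mod_cast s.hq.ne'
  have hn0 : (n:ℝ) ≠ 0 := by
    rintro h; have : n = 0 := by exact_mod_cast h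
    subst this; omega
  rw [next_al s A B N hN ⟨n, hn⟩, AddCircle.coe_add, nsmul_add, St.q_al, zero_add, ← AddCircle.coe_nsmul, nsmul_eq_mul]
  congr 1
  rw [hn]; push_cast; field_simp

lemma step_near (s : St) (B : ℕ) {δ : ℝ} (hδ : 0 < δ) : ∀ᶠ N : ℕ in atTop, ∀ hN : 0 < N, s.q ∣ N →
    ∀ j : ℕ, j * AN N ^ 2 ≤ N → ∀ z,
    dist (shF (AN N) B s.q (rotT (j • ((s.next (AN N) B N hN (s.p * (N / s.q : ℕ) + 1)).al : Torus1)) (shG (AN N) B s.q z)))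
      (rotT (j • (s.al : Torus1)) z) < δ := by
  set C : ℝ := 1 + (B + 1) * (2 * Real.pi * s.q) with hC
  have hC0 : 0 < C := by positivity
  filter_upwards [AN_tendsto.eventually_gt_atTop (C / δ), AN_tendsto.eventually_ge_atTop 1] with N h1 h1' hN hqN j hj z
  have hN0 : (0:ℝ) < N := by exact_mod_cast hN
  have hA := AN_pos N
  refine (sh_near (AN N) hA.le B s.q _ (j • (s.al : Torus1)) z).trans_lt ?_
  have hdiff : j • ((s.next (AN N) B N hN (s.p * (N / s.q : ℕ) + 1)).al : Torus1) = j • (s.al : Torus1) + ((j * (1 / (N:ℝ)) : ℝ) : Torus1) := by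
    rw [next_al s _ _ _ _ hqN, AddCircle.coe_add, nsmul_add, ← AddCircle.coe_nsmul (1:ℝ) (n := j) (x := 1 / (N:ℝ)), nsmul_eq_mul]
  have hjN : (j * (1 / (N:ℝ)) : ℝ) ≤ 1 / AN N ^ 2 := by
    rw [mul_one_div, div_le_div_iff₀ hN0 (by positivity)]; linarith
  have hjN0 : (0:ℝ) ≤ j * (1 / (N:ℝ)) := by positivity
  have hd : ‖((j * (1 / (N:ℝ)) : ℝ) : Torus1)‖ ≤ 1 / AN N ^ 2 :=
    (T1_norm_coe_le _).trans ((abs_of_nonneg hjN0).le.trans hjN)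
  have hf : ‖(fourier (s.q:ℤ) (j • ((s.next (AN N) B N hN (s.p * (N / s.q : ℕ) + 1)).al : Torus1)) : ℂ) - 1‖ ≤ 2 * Real.pi * s.q * (1 / AN N ^ 2) := by
    have h0 : (fourier (s.q:ℤ) (j • (s.al : Torus1)) : ℂ) = 1 := by
      have h := fourier_natMul s.q 1 (j • (s.al : Torus1))
      rw [mul_one] at h
      rw [h]
      have : (s.q : ℤ) • (j • (s.al : Torus1)) = 0 := by
        rw [natCast_zsmul, smul_comm, St.q_al, smul_zero]
      rw [this]; simp
    rw [hdiff, fourier_zadd, h0, one_mul]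
    refine (fourier_sub_one_le _ _).trans ?_
    gcongr
  rw [hdiff, add_sub_cancel_left, ← hdiff]
  have hA2 : AN N * (1 / AN N ^ 2) = 1 / AN N := by field_simp
  have h2 : AN N * ‖(fourier (s.q:ℤ) (j • ((s.next (AN N) B N hN (s.p * (N / s.q : ℕ) + 1)).al : Torus1)) : ℂ) - 1‖ ≤ 2 * Real.pi * s.q * (1 / AN N) := by
    rw [← hA2]
    calc _ ≤ AN N * (2 * Real.pi * s.q * (1 / AN N ^ 2)) := by gcongr
      _ = _ := by ring
  have h3 : 1 / AN N ^ 2 ≤ 1 / AN N := by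
    apply one_div_le_one_div_of_le hA; nlinarith
  have h4 : C * (1 / AN N) < δ := by
    rw [mul_one_div, div_lt_iff₀ hA]
    have := (div_lt_iff₀ hδ).1 h1
    linarith
  have hB : (0:ℝ) ≤ B + 1 := by positivity
  have h5 := mul_le_mul_of_nonneg_left h2 hB
  calc _ ≤ 1 / AN N + (B + 1) * (2 * Real.pi * s.q * (1 / AN N)) := by linarith
    _ = C * (1 / AN N) := by rw [hC]; ring
    _ < δ := h4

lemma step_cover (q B : ℕ) {δ : ℝ} (hδ : 0 < δ) : ∀ᶠ N : ℕ in atTop,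
    ∃ M : ℕ, ∃ c : Torus2 → Fin M, (M:ℝ) ≤ LF N * AN N ∧ ∀ w w', c w = c w' → ∀ t,
      dist (shF (AN N) B q (rotT t w)) (shF (AN N) B q (rotT t w')) < δ := by
  set C : ℝ := 1 + (B + 1) * (2 * Real.pi * q) with hC
  have hC0 : 0 < C := by positivity
  obtain ⟨M2, hM2⟩ := exists_nat_gt (2 * (B + 1) / δ)
  have hB : (0:ℝ) < B + 1 := by positivity
  have hM20 : (0:ℝ) < M2 := lt_trans (by positivity) hM2
  filter_upwards [LF_tendsto.eventually_ge_atTop ((2 * C / δ + 2) * M2), AN_tendsto.eventually_ge_atTop 1] with N h1 h2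
  have hA : 0 < AN N := AN_pos N
  obtain ⟨c2, hc2⟩ := circle_classes M2 (by exact_mod_cast hM20)
  have hM1 : 0 < ⌈2 * C / δ * AN N⌉₊ + 1 := Nat.succ_pos _
  set M1 := ⌈2 * C / δ * AN N⌉₊ + 1 with hM1def
  obtain ⟨c1, hc1⟩ := circle_classes M1 hM1
  have hM10 : (0:ℝ) < M1 := by exact_mod_cast hM1
  refine ⟨M1 * M2, fun w => finProdFinEquiv (c1 w.1, c2 w.2), ?_, ?_⟩
  · have h3 : (M1:ℝ) ≤ (2 * C / δ + 2) * AN N := by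
      have := Nat.ceil_lt_add_one (show 0 ≤ 2 * C / δ * AN N by positivity)
      rw [hM1def]; push_cast; linarith
    push_cast
    calc (M1:ℝ) * M2 ≤ (2 * C / δ + 2) * AN N * M2 := by gcongr
      _ = ((2 * C / δ + 2) * M2) * AN N := by ring
      _ ≤ _ := by gcongr
  · intro w w' hww t
    have h3 := finProdFinEquiv.injective hww
    have h4 := hc1 _ _ (Prod.ext_iff.1 h3).1
    have h5 := hc2 _ _ (Prod.ext_iff.1 h3).2
    refine (sh_cover (AN N) hA.le B q t w w').trans_lt ?_
    have h6 : ‖w.2 - w'.2‖ * (B + 1) < δ / 2 := by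
      have : (1 / (M2:ℝ)) * (B + 1) < δ / 2 := by
        rw [one_div_mul_eq_div, div_lt_iff₀ hM20]
        have := (div_lt_iff₀ hδ).1 hM2
        linarith
      nlinarith
    have h7 : AN N * ‖w.1 - w'.1‖ * C ≤ δ / 2 := by
      have h8 : 2 * C / δ * AN N ≤ M1 := by
        rw [hM1def]; push_cast
        have := Nat.le_ceil (2 * C / δ * AN N)
        linarith
      have h9 : AN N * (1 / M1) * C ≤ δ / 2 := by
        rw [mul_one_div, div_mul_eq_mul_div, div_le_iff₀ hM10]
        have : 2 * C / δ * AN N * (δ / 2) ≤ M1 * (δ / 2) := by gcongr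
        have e : 2 * C / δ * AN N * (δ / 2) = AN N * C := by field_simp
        linarith
      have h10 : AN N * ‖w.1 - w'.1‖ * C ≤ AN N * (1 / M1) * C := by gcongr
      linarith
    have h11 : ‖w.1 - w'.1‖ ≤ AN N * ‖w.1 - w'.1‖ := by
      nlinarith [norm_nonneg (w.1 - w'.1)]
    rw [hC] at h7
    nlinarith

lemma step_exists (k : ℕ) (s : St) : ∃ s', Step k s s' := by
  have hη : (0:ℝ) < (1/2)^k := by positivity
  -- choose B
  have hmix : ∀ᶠ P in KFil s.q, ∀ i ∈ Finset.range (k+1), ∀ i' ∈ Finset.range (k+1),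
      ‖KPhi s.q ((fD i).comp ⟨s.e, s.e.continuous⟩) ((fD i').comp ⟨s.e, s.e.continuous⟩) P‖ ≤ (1/2)^k := by
    rw [Finset.eventually_all]
    intro i _
    rw [Finset.eventually_all]
    intro i' _
    have := (KPhi_tendsto s.q s.hq ((fD i).comp ⟨s.e, s.e.continuous⟩) ((fD i').comp ⟨s.e, s.e.continuous⟩)).norm
    rw [norm_zero] at this
    exact (this.eventually (gt_mem_nhds hη)).mono fun _ h => h.le
  rw [Filter.Eventually, mem_KFil] at hmix
  obtain ⟨B, Ω, K, hmix⟩ := hmix.exists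
  -- uniform continuity
  have huc := CompactSpace.uniformContinuous_of_continuous s.e.continuous
  obtain ⟨δ, hδ, huc⟩ := Metric.uniformContinuous_iff.1 huc _ hη
  -- choose N
  have hsm : ∀ᶠ N : ℕ in atTop, ∀ (hN : 0 < N), s.q ∣ N →
      SmoothClose k s (s.next (AN N) B N hN (s.p * (N / s.q : ℕ) + 1)) := by
    have ht : Tendsto (fun N : ℕ => ((1 / (N:ℝ), AN N / N) : ℝ × ℝ)) atTop (𝓝 0) := by
      have t1 : Tendsto (fun N : ℕ => 1 / (N:ℝ)) atTop (𝓝 0) := tendsto_one_div_atTop_nhds_zero_nat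
      have t2 : Tendsto (fun N : ℕ => AN N / N) atTop (𝓝 0) := by
        rw [Metric.tendsto_nhds]
        intro η' hη'
        filter_upwards [exp_LF_le (2 / η') 2, eventually_gt_atTop 0] with N h hN
        have hN0 : (0:ℝ) < N := by exact_mod_cast hN
        have hA := AN_pos N
        rw [dist_zero_right, Real.norm_of_nonneg (by positivity), div_lt_iff₀ hN0]
        have h' : 2 / η' * AN N ≤ N := h
        rw [div_mul_eq_mul_div, div_le_iff₀ hη'] at h'
        linarith
      exact t1.prodMk_nhds t2
    filter_upwards [ht.eventually (smooth_close s B k), AN_tendsto.eventually_ge_atTop 1] with N h h1 hN hqN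
    exact h (AN N) N hN _ hqN rfl rfl h1
  have hev := ((eventually_gt_atTop k).and ((exp_LF_le s.q 4).and (hsm.and ((step_near s B hδ).and
    ((step_cover s.q B hδ).and ((LF_tendsto.eventually_ge_atTop Ω).and (exp_LF_le (K * s.q) 2)))))))
  obtain ⟨N0, hev⟩ := eventually_atTop.1 hev
  have hq := s.hq
  have hNge : N0 ≤ 4 * s.q ^ 2 * (N0 + 1) := by
    have : 1 ≤ 4 * s.q ^ 2 := by nlinarith [Nat.pow_pos (n := 2) hq]
    nlinarith
  have hdvd : 4 * s.q ^ 2 ∣ 4 * s.q ^ 2 * (N0 + 1) := Dvd.intro _ rfl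
  generalize 4 * s.q ^ 2 * (N0 + 1) = N at hNge hdvd
  obtain ⟨hk, hqA, hsm, hnear, hcov, hΩ, hK⟩ := hev N hNge
  have hN : 0 < N := by omega
  have hqN : s.q ∣ N := (Dvd.intro_left (4 * s.q) (by ring)).trans hdvd
  obtain ⟨n, hn⟩ := id hqN
  set s' := s.next (AN N) B N hN (s.p * (N / s.q : ℕ) + 1) with hs'
  have hq' : s'.q = N := rfl
  refine ⟨s', ?_⟩
  have hTr : ∀ t x, s'.Tr t x = s.e (shF (AN N) B s.q (rotT t (shG (AN N) B s.q (s.e.symm x)))) := fun _ _ => rfl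
  refine ⟨hdvd, next_al s _ _ _ _ hqN, hk, ?_, hsm hN hqN, ?_, ?_, ?_⟩
  · rw [hq', AN, ← Real.exp_nat_mul]
    push_cast
    rw [show (2:ℝ) * (2 * LF N) = 4 * LF N by ring]
    exact hqA
  · intro j hj x
    rw [St.T_iter, St.T_iter, hTr]
    exact (huc (hnear hN hqN j hj (s.e.symm x))).le
  · obtain ⟨M, c, hM, hc⟩ := hcov
    refine ⟨M, fun x => c (s'.e.symm x), hM, ?_⟩
    intro x y hxy t
    rw [hTr, hTr]
    exact (huc (hc _ _ hxy t)).le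
  · intro i hi i' hi' x y hg
    have hKn : K * AN N ≤ n := by
      have h1 : K * s.q * AN N ≤ N := hK
      rw [hn] at h1
      push_cast at h1
      have hq0 : (0:ℝ) < s.q := by exact_mod_cast hq
      have h2 : (s.q:ℝ) * (K * AN (s.q * n)) ≤ s.q * n := by linarith
      rw [hn]
      exact le_of_mul_le_mul_left h2 hq0
    have h := hmix (AN N) (LF N) n (s'.al : Torus1) (s'.e.symm x) (s'.e.symm y) hΩ (LF_le_AN N) hKn
      (next_q_al s _ _ _ _ _ hn) hg
    have h2 := h i (by simp; omega) i' (by simp; omega)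
    have hinteg : ∀ f : C(Torus2, ℂ), ∫ x, f (s.e x) = ∫ x, f x := by
      intro f
      exact s.mp.integral_comp s.e.measurableEmbedding f
    simp only [KPhi, ContinuousMap.comp_apply, ContinuousMap.coe_mk, hinteg] at h2
    rw [← hn] at h2
    simp_rw [St.T_iter]
    exact h2


/-- Initial state -/
noncomputable def St.start : St where
  e := Homeomorph.refl _
  b := 0
  F := id
  G := id
  sF := contDiff_id
  sG := contDiff_id
  lF := fun _ => rfl
  lG := fun _ => rfl
  pF := by intro p m n; simp
  pG := by intro p m n; simp
  mp := MeasurePreserving.id _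
  p := 0
  q := 1
  hq := one_pos

/-- Sequence of states -/
noncomputable def SS : ℕ → St
  | 0 => St.start
  | k + 1 => (step_exists k (SS k)).choose

lemma SS_step (k : ℕ) : Step k (SS k) (SS (k + 1)) := (step_exists k (SS k)).choose_spec

lemma LF_nonneg (N : ℕ) : 0 ≤ LF N := by
  unfold LF
  refine div_nonneg (Real.log_natCast_nonneg N) ?_
  unfold gF GammaRInv
  exact Real.sSup_nonneg fun x hx => le_trans zero_le_one hx.1

lemma one_le_AN (N : ℕ) : 1 ≤ AN N := Real.one_le_exp (by have := LF_nonneg N; linarith)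

lemma torusProj_dist (p p' : ℝ × ℝ) : dist (torusProj p) (torusProj p') ≤ ‖p - p'‖ := by
  rw [Prod.dist_eq]
  refine max_le ?_ ?_
  · rw [dist_eq_norm]
    show ‖((p.1:Torus1) - (p'.1:Torus1))‖ ≤ _
    rw [← AddCircle.coe_sub]
    exact (T1_norm_coe_le _).trans (norm_fst_le (p - p'))
  · rw [dist_eq_norm]
    show ‖((p.2:Torus1) - (p'.2:Torus1))‖ ≤ _
    rw [← AddCircle.coe_sub]
    exact (T1_norm_coe_le _).trans (norm_snd_le (p - p'))

lemma torusProj_surj (x : Torus2) : ∃ p, torusProj p = x := by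
  obtain ⟨a, ha, -⟩ := T1_rep x.1
  obtain ⟨b, hb, -⟩ := T1_rep x.2
  exact ⟨(a, b), Prod.ext ha hb⟩

lemma torusProj_continuous : Continuous torusProj := by
  unfold torusProj
  exact (coeT_continuous.comp continuous_fst).prodMk (coeT_continuous.comp continuous_snd)

/-- approximating maps -/
noncomputable def Tk (σ : ℤ) (k : ℕ) : Torus2 → Torus2 := (SS k).Tr (((σ:ℝ) * (SS k).al : ℝ) : Torus1)

lemma Tk_lift (σ : ℤ) (k : ℕ) (p : ℝ × ℝ) : torusProj ((SS k).L σ p) = Tk σ k (torusProj p) :=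
  (SS k).L_lift σ p

lemma L_close (σ : ℤ) (hσ : σ = 1 ∨ σ = -1) (k : ℕ) (p : ℝ × ℝ) :
    ‖(SS (k+1)).L σ p - (SS k).L σ p‖ ≤ (1/2)^k := by
  have := (SS_step k).sm σ hσ 0 (Nat.zero_le _) p
  rwa [norm_iteratedFDeriv_zero] at this

/-- limit lift -/
noncomputable def Lim (σ : ℤ) (p : ℝ × ℝ) : ℝ × ℝ :=
  (SS 0).L σ p + ∑' k, ((SS (k+1)).L σ p - (SS k).L σ p)

lemma summable_half : Summable (fun k : ℕ => ((1:ℝ)/2)^k) := summable_geometric_two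

lemma Lim_tendsto (σ : ℤ) (hσ : σ = 1 ∨ σ = -1) (p : ℝ × ℝ) :
    Tendsto (fun k => (SS k).L σ p) atTop (𝓝 (Lim σ p)) := by
  have hs : Summable fun k => ((SS (k+1)).L σ p - (SS k).L σ p) :=
    Summable.of_norm_bounded summable_half fun k => L_close σ hσ k p
  have := (hs.hasSum.tendsto_sum_nat).const_add ((SS 0).L σ p)
  refine this.congr fun n => ?_
  rw [Finset.sum_range_sub (fun k => (SS k).L σ p)]
  abel

lemma Lim_smooth (σ : ℤ) (hσ : σ = 1 ∨ σ = -1) : ContDiff ℝ (⊤ : ℕ∞) (Lim σ) := by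
  unfold Lim
  refine ((SS 0).L_smooth σ).add ?_
  refine contDiff_tsum_of_eventually (v := fun _ k => ((1:ℝ)/2)^k)
    (fun k => ((SS (k+1)).L_smooth σ).sub ((SS k).L_smooth σ)) (fun _ _ => summable_half) ?_
  intro r _
  rw [Nat.cofinite_eq_atTop]
  filter_upwards [eventually_ge_atTop r] with k hk x
  exact (SS_step k).sm σ hσ r hk x

/-- limit map -/
noncomputable def TT (σ : ℤ) (x : Torus2) : Torus2 := torusProj (Lim σ (torusProj_surj x).choose)

lemma TT_tendsto (σ : ℤ) (hσ : σ = 1 ∨ σ = -1) (x : Torus2) :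
    Tendsto (fun k => Tk σ k x) atTop (𝓝 (TT σ x)) := by
  have h := (torusProj_continuous.tendsto _).comp (Lim_tendsto σ hσ (torusProj_surj x).choose)
  refine h.congr fun k => ?_
  have := Tk_lift σ k (torusProj_surj x).choose
  rw [(torusProj_surj x).choose_spec] at this
  exact this

lemma TT_lift (σ : ℤ) (hσ : σ = 1 ∨ σ = -1) : IsLiftOf (Lim σ) (TT σ) := by
  intro p
  have h := (torusProj_continuous.tendsto _).comp (Lim_tendsto σ hσ p)
  have h2 := TT_tendsto σ hσ (torusProj p)
  refine tendsto_nhds_unique h (h2.congr fun k => ?_)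
  exact (Tk_lift σ k p).symm

lemma Tk_close (σ : ℤ) (hσ : σ = 1 ∨ σ = -1) (k : ℕ) (x : Torus2) : dist (Tk σ k x) (Tk σ (k+1) x) ≤ (1/2)^k := by
  obtain ⟨p, rfl⟩ := torusProj_surj x
  rw [← Tk_lift, ← Tk_lift, dist_comm]
  exact (torusProj_dist _ _).trans (L_close σ hσ k p)

lemma geo_dist {X : Type*} [PseudoMetricSpace X] (f : ℕ → X) (a : X) (ha : Tendsto f atTop (𝓝 a)) (k : ℕ)
    (h : ∀ i, k ≤ i → dist (f i) (f (i+1)) ≤ (1/2)^i) : dist (f k) a ≤ 2 * (1/2)^k := by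
  have := dist_le_of_le_geometric_two_of_tendsto₀ (C := 2 * (1/2)^k) (f := fun n => f (n + k)) (a := a) (fun n => by
    have h1 := h (n + k) (by omega)
    rw [show n + k + 1 = n + 1 + k by ring] at h1
    refine h1.trans (le_of_eq ?_)
    rw [pow_add]; field_simp; rw [← mul_pow]; norm_num) ((tendsto_add_atTop_iff_nat k).2 ha)
  simpa using this

lemma TT_dist (σ : ℤ) (hσ : σ = 1 ∨ σ = -1) (k : ℕ) (x : Torus2) : dist (Tk σ k x) (TT σ x) ≤ 2 * (1/2)^k :=
  geo_dist _ _ (TT_tendsto σ hσ x) k fun i _ => Tk_close σ hσ i x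

lemma half_tendsto : Tendsto (fun k : ℕ => 2 * ((1:ℝ)/2)^k) atTop (𝓝 0) := by
  have := (tendsto_pow_atTop_nhds_zero_of_lt_one (r := (1:ℝ)/2) (by norm_num) (by norm_num)).const_mul 2
  simpa using this

lemma TT_unif (σ : ℤ) (hσ : σ = 1 ∨ σ = -1) : TendstoUniformly (Tk σ) (TT σ) atTop := by
  rw [Metric.tendstoUniformly_iff]
  intro ε hε
  filter_upwards [half_tendsto.eventually (gt_mem_nhds hε)] with k hk x
  rw [dist_comm]
  exact (TT_dist σ hσ k x).trans_lt hk

lemma TT_continuous (σ : ℤ) (hσ : σ = 1 ∨ σ = -1) : Continuous (TT σ) :=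
  (TT_unif σ hσ).continuous (Frequently.of_forall fun k => (SS k).Tr_continuous _)

lemma TT_inv (σ σ' : ℤ) (hσ : σ = 1 ∨ σ = -1) (hσ' : σ' = 1 ∨ σ' = -1) (h : σ' + σ = 0) (x : Torus2) :
    TT σ (TT σ' x) = x := by
  have h1 := (TT_unif σ hσ).tendsto_comp ((TT_continuous σ hσ).continuousAt) (TT_tendsto σ' hσ' x)
  refine tendsto_nhds_unique h1 (tendsto_const_nhds.congr fun k => ?_)
  unfold Tk
  rw [St.Tr_add, ← AddCircle.coe_add, ← add_mul]
  have : (σ':ℝ) + σ = 0 := by exact_mod_cast h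
  rw [this]
  simp [St.Tr_zero]

lemma TT_mp (σ : ℤ) (hσ : σ = 1 ∨ σ = -1) : MeasurePreserving (TT σ) (volume : Measure Torus2) volume := by
  have hm := (TT_continuous σ hσ).measurable
  refine ⟨hm, ?_⟩
  have : IsFiniteMeasure (Measure.map (TT σ) (volume : Measure Torus2)) := Measure.isFiniteMeasure_map _ _
  refine ext_of_forall_integral_eq_of_IsFiniteMeasure fun f => ?_
  rw [integral_map hm.aemeasurable f.continuous.aestronglyMeasurable]
  have h1 : Tendsto (fun k => ∫ x, f (Tk σ k x)) atTop (𝓝 (∫ x, f (TT σ x))) := by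
    refine tendsto_integral_of_dominated_convergence (fun _ => ‖f‖) ?_ (integrable_const _) ?_ ?_
    · intro k
      exact (f.continuous.comp ((SS k).Tr_continuous _)).aestronglyMeasurable
    · exact fun k => Eventually.of_forall fun x => f.norm_coe_le_norm _
    · exact Eventually.of_forall fun x => (f.continuous.tendsto _).comp (TT_tendsto σ hσ x)
  refine tendsto_nhds_unique h1 (tendsto_const_nhds.congr fun k => ?_)
  have hmp := (SS k).Tr_mp (((σ:ℝ) * (SS k).al : ℝ) : Torus1)
  have h2 := integral_map (μ := (volume : Measure Torus2)) hmp.measurable.aemeasurable (f := fun x => f x) f.continuous.aestronglyMeasurable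
  rw [hmp.map_eq] at h2
  exact h2

/-- The final transformation. -/
noncomputable def TF : Torus2 → Torus2 := TT 1

lemma TF_continuous : Continuous TF := TT_continuous 1 (Or.inl rfl)
lemma TF_mp : MeasurePreserving TF (volume : Measure Torus2) volume := TT_mp 1 (Or.inl rfl)

lemma TF_diffeo : IsCkTorusDiffeo ⊤ TF := by
  have h1 : ∀ x, TT 1 (TT (-1) x) = x := TT_inv 1 (-1) (Or.inl rfl) (Or.inr rfl) (by norm_num)
  have h2 : ∀ x, TT (-1) (TT 1 x) = x := TT_inv (-1) 1 (Or.inr rfl) (Or.inl rfl) (by norm_num)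
  have hinj : Function.Injective TF := Function.LeftInverse.injective h2
  refine ⟨⟨hinj, Function.RightInverse.surjective h1⟩, ⟨Lim 1, Lim_smooth 1 (Or.inl rfl), TT_lift 1 (Or.inl rfl)⟩,
    ⟨Lim (-1), Lim_smooth (-1) (Or.inr rfl), ?_⟩⟩
  have : Function.invFun TF = TT (-1) := Function.invFun_eq_of_injective_of_rightInverse hinj h1
  rw [this]
  exact TT_lift (-1) (Or.inr rfl)

lemma Tk_one (k : ℕ) : Tk 1 k = (SS k).T := by
  funext x
  simp [Tk, St.T]

lemma iter_tendsto (j : ℕ) (x : Torus2) : Tendsto (fun k => (SS k).T^[j] x) atTop (𝓝 (TF^[j] x)) := by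
  induction j with
  | zero => simpa using tendsto_const_nhds
  | succ j ih =>
    have := (TT_unif 1 (Or.inl rfl)).tendsto_comp (TF_continuous.continuousAt) ih
    rw [Function.iterate_succ_apply']
    refine this.congr fun k => ?_
    rw [Tk_one, Function.iterate_succ_apply']

/-- `N_k` -/
noncomputable def NN (k : ℕ) : ℕ := (SS k).q

lemma NN_pos (k : ℕ) : 0 < NN k := (SS k).hq

lemma NN_qA (k : ℕ) : (NN k : ℝ) * AN (NN (k+1)) ^ 2 ≤ NN (k+1) := (SS_step k).qA

lemma NN_mono : Monotone NN := by
  refine monotone_nat_of_le_succ fun k => ?_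
  have h := NN_qA k
  have h1 := one_le_AN (NN (k+1))
  have h2 : (0:ℝ) ≤ NN k := Nat.cast_nonneg _
  have : (NN k : ℝ) ≤ NN (k+1) := (le_mul_of_one_le_right h2 (one_le_pow₀ h1)).trans h
  exact_mod_cast this

lemma NN_tendsto : Tendsto NN atTop atTop := by
  refine tendsto_atTop_mono' atTop ?_ tendsto_id
  filter_upwards [eventually_ge_atTop 1] with k hk
  obtain ⟨k, rfl⟩ := Nat.exists_eq_add_of_le' hk
  have := (SS_step k).gt
  exact this

lemma iter_dist (k j : ℕ) (hj : (j:ℝ) * AN (NN (k+1)) ^ 2 ≤ NN (k+1)) (x : Torus2) :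
    dist ((SS k).T^[j] x) (TF^[j] x) ≤ 2 * (1/2)^k := by
  refine geo_dist _ _ (iter_tendsto j x) k fun i hi => ?_
  rw [dist_comm]
  refine (SS_step i).near j ?_ x
  change (j:ℝ) * AN (NN (i+1)) ^ 2 ≤ NN (i+1)
  rcases eq_or_lt_of_le hi with rfl | hi
  · exact hj
  · have h1 : (j:ℝ) ≤ NN (k+1) := by
      have h1 := one_le_AN (NN (k+1))
      have : (0:ℝ) ≤ j := Nat.cast_nonneg _
      exact (le_mul_of_one_le_right this (one_le_pow₀ h1)).trans hj
    have h2 : (NN (k+1) : ℝ) ≤ NN i := by exact_mod_cast NN_mono hi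
    have h3 := NN_qA i
    have h4 : 0 ≤ AN (NN (i+1)) ^ 2 := by positivity
    nlinarith


section Mixing
variable {Y : Type*} [MeasurableSpace Y]

lemma measR_iUnion (μ : Measure Y) [IsProbabilityMeasure μ] {f : ℕ → Set Y} (hd : Pairwise (Function.onFun Disjoint f))
    (hm : ∀ i, MeasurableSet (f i)) : μ.real (⋃ i, f i) = ∑' i, μ.real (f i) := by
  unfold Measure.real
  rw [measure_iUnion hd hm, ENNReal.tsum_toReal_eq fun i => measure_ne_top _ _]

/-- Mixing along a sequence for a fixed pair of sets. -/
def MixAt (μ : Measure Y) (S : ℕ → Y → Y) (A B : Set Y) : Prop :=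
  Tendsto (fun k => μ.real (A ∩ S k ⁻¹' B)) atTop (𝓝 (μ.real A * μ.real B))

lemma MixAt_pi (μ : Measure Y) [IsProbabilityMeasure μ] (S : ℕ → Y → Y)
    (hS : ∀ k, MeasurePreserving (S k) μ μ) (C : Set (Set Y)) (hC : IsPiSystem C)
    (hgen : ‹MeasurableSpace Y› = MeasurableSpace.generateFrom C)
    (hmix : ∀ A ∈ C, ∀ B ∈ C, MixAt μ S A B) (A B : Set Y) (hA : MeasurableSet A) (hB : MeasurableSet B) :
    MixAt μ S A B := by
  have hCm : ∀ A ∈ C, MeasurableSet A := fun A hA => by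
    rw [hgen]; exact MeasurableSpace.measurableSet_generateFrom hA
  have step1 : ∀ A ∈ C, ∀ B, MeasurableSet B → MixAt μ S A B := by
    intro A hA B hB
    have hAm := hCm A hA
    induction B, hB using MeasurableSpace.induction_on_inter hgen hC with
    | empty => simp [MixAt]
    | basic B hB => exact hmix A hA B hB
    | compl B hB ih =>
      unfold MixAt at *
      have e : ∀ k, μ.real (A ∩ S k ⁻¹' Bᶜ) = μ.real A - μ.real (A ∩ S k ⁻¹' B) := by
        intro k
        have := measureReal_inter_add_sdiff (μ := μ) (s := A) ((hS k).measurable hB)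
        rw [preimage_compl, ← sdiff_eq]; linarith
      simp only [e]
      have := ih.const_sub (μ.real A)
      rwa [probReal_compl_eq_one_sub hB, mul_sub, mul_one]
    | iUnion f hd hm ih =>
      unfold MixAt at *
      have e : ∀ k, μ.real (A ∩ S k ⁻¹' ⋃ i, f i) = ∑' i, μ.real (A ∩ S k ⁻¹' f i) := by
        intro k
        rw [preimage_iUnion, inter_iUnion]
        refine measR_iUnion μ ?_ (fun i => hAm.inter ((hS k).measurable (hm i)))
        intro i j hij
        exact ((hd hij).preimage (S k)).mono inter_subset_right inter_subset_right
      simp only [e]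
      rw [measR_iUnion μ hd hm, ← tsum_mul_left]
      refine tendsto_tsum_of_dominated_convergence (bound := fun i => μ.real (f i)) ?_ ih ?_
      · exact summable_measure_toReal hm hd
      · refine Eventually.of_forall fun k i => ?_
        rw [Real.norm_of_nonneg measureReal_nonneg, ← (hS k).measureReal_preimage (hm i).nullMeasurableSet]
        exact measureReal_mono inter_subset_right
  induction A, hA using MeasurableSpace.induction_on_inter hgen hC with
  | empty => simp [MixAt]
  | basic A hA => exact step1 A hA B hB
  | compl A hA ih =>
    unfold MixAt at *
    have e : ∀ k, μ.real (Aᶜ ∩ S k ⁻¹' B) = μ.real B - μ.real (A ∩ S k ⁻¹' B) := by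
      intro k
      have := measureReal_inter_add_sdiff (μ := μ) (s := S k ⁻¹' B) hA
      rw [(hS k).measureReal_preimage hB.nullMeasurableSet] at this
      rw [inter_comm, ← sdiff_eq, inter_comm A]; linarith
    simp only [e]
    have := ih.const_sub (μ.real B)
    rwa [probReal_compl_eq_one_sub hA, sub_mul, one_mul]
  | iUnion f hd hm ih =>
    unfold MixAt at *
    have e : ∀ k, μ.real ((⋃ i, f i) ∩ S k ⁻¹' B) = ∑' i, μ.real (f i ∩ S k ⁻¹' B) := by
      intro k
      rw [iUnion_inter]
      refine measR_iUnion μ ?_ (fun i => (hm i).inter ((hS k).measurable hB))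
      intro i j hij
      exact (hd hij).mono inter_subset_left inter_subset_left
    simp only [e]
    rw [measR_iUnion μ hd hm, ← tsum_mul_right]
    refine tendsto_tsum_of_dominated_convergence (bound := fun i => μ.real (f i)) ?_ ih ?_
    · exact summable_measure_toReal hm hd
    · refine Eventually.of_forall fun k i => ?_
      rw [Real.norm_of_nonneg measureReal_nonneg]
      exact measureReal_mono inter_subset_left

lemma weaklyMixing_of_MixAt (μ : Measure Y) [IsProbabilityMeasure μ] (T : Y → Y) (hT : MeasurePreserving T μ μ)
    (m : ℕ → ℕ) (h : ∀ A B, MeasurableSet A → MeasurableSet B → MixAt μ (fun k => T^[m k]) A B) :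
    WeaklyMixing T μ := by
  have hTT : MeasurePreserving (fun p : Y × Y => (T p.1, T p.2)) (μ.prod μ) (μ.prod μ) := hT.prod hT
  have hit : ∀ n : ℕ, (fun p : Y × Y => (T p.1, T p.2))^[n] = fun p => (T^[n] p.1, T^[n] p.2) := by
    intro n
    induction n with
    | zero => rfl
    | succ n ih => funext p; rw [Function.iterate_succ_apply', ih]; simp [Function.iterate_succ_apply']
  have hmix : ∀ A B, MeasurableSet A → MeasurableSet B →
      MixAt (μ.prod μ) (fun k => (fun p : Y × Y => (T p.1, T p.2))^[m k]) A B := by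
    intro A B hA hB
    refine MixAt_pi (μ.prod μ) _ (fun k => hTT.iterate _) _ isPiSystem_prod generateFrom_prod.symm ?_ A B hA hB
    rintro _ ⟨A, hA, B, hB, rfl⟩ _ ⟨C, hC, D, hD, rfl⟩
    unfold MixAt
    have := (h A C hA hC).mul (h B D hB hD)
    rw [measureReal_prod_prod, measureReal_prod_prod]
    rw [show μ.real A * μ.real B * (μ.real C * μ.real D) = μ.real A * μ.real C * (μ.real B * μ.real D) by ring]
    refine this.congr fun k => ?_
    rw [← measureReal_prod_prod]
    beta_reduce
    rw [hit]
    congr 1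
    ext p
    simp only [mem_prod, mem_inter_iff, mem_preimage]
    tauto
  refine ⟨hTT, ⟨fun E hE hinv => ?_⟩⟩
  have h1 := hmix E E hE hE
  have h2 : ∀ n, (fun p : Y × Y => (T p.1, T p.2))^[n] ⁻¹' E = E := by
    intro n
    induction n with
    | zero => rfl
    | succ n ih => rw [Function.iterate_succ, preimage_comp, ih, hinv]
  unfold MixAt at h1
  simp only [h2, inter_self] at h1
  have h3 := tendsto_nhds_unique h1 tendsto_const_nhds
  rw [eventuallyConst_set']
  have h4 : (μ.prod μ).real E * ((μ.prod μ).real E - 1) = 0 := by linarith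
  rcases mul_eq_zero.1 h4 with h5 | h5
  · left
    rw [measureReal_eq_zero_iff] at h5
    exact ae_eq_empty.2 h5
  · right
    have h6 : (μ.prod μ) Eᶜ = 0 := by
      rw [← measureReal_eq_zero_iff, probReal_compl_eq_one_sub hE]; linarith
    exact eventuallyEq_univ.2 h6

end Mixing


/-- mixing times -/
noncomputable def mkT (k : ℕ) : ℕ := NN (k+1) / (4 * NN k)

lemma mk_spec (k : ℕ) : NN (k+1) = 4 * NN k * mkT k ∧ NN k ∣ mkT k := by
  obtain ⟨c, hc⟩ := (SS_step k).dvd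
  have hc : NN (k+1) = 4 * NN k ^ 2 * c := hc
  have h0 := NN_pos k
  have e : mkT k = NN k * c := by
    unfold mkT
    rw [hc, show 4 * NN k ^ 2 * c = (4 * NN k) * (NN k * c) by ring, Nat.mul_div_cancel_left _ (by positivity)]
  exact ⟨by rw [e, hc]; ring, ⟨c, e⟩⟩

lemma mk_al (k : ℕ) : mkT k • ((SS (k+1)).al : Torus1) = ((1 / (4 * NN k) : ℝ) : Torus1) := by
  obtain ⟨h1, c, h2⟩ := mk_spec k
  have h0 : (0:ℝ) < NN k := by exact_mod_cast NN_pos k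
  have hp : (0:ℝ) < NN (k+1) := by exact_mod_cast NN_pos (k+1)
  rw [(SS_step k).al, AddCircle.coe_add, nsmul_add]
  have e1 : mkT k • ((SS k).al : Torus1) = 0 := by
    rw [h2, mul_comm, mul_nsmul']
    have := (SS k).q_al
    change NN k • _ = _ at this
    rw [this, smul_zero]
  rw [e1, zero_add, ← AddCircle.coe_nsmul]
  congr 1
  change mkT k • (1 / (NN (k+1) : ℝ)) = _
  rw [nsmul_eq_mul]
  have h3 : (NN (k+1) : ℝ) = 4 * NN k * mkT k := by exact_mod_cast h1
  have hm : (0:ℝ) < mkT k := by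
    rw [h3] at hp
    exact pos_of_mul_pos_right hp (by positivity)
  rw [h3]; field_simp

lemma mk_good (k : ℕ) (x : Torus2) : GoodW (SS k).q (AN (SS (k+1)).q) (LF (SS (k+1)).q)
    (((SS (k+1)).e.symm ((SS (k+1)).T^[mkT k] x)).1 - ((SS (k+1)).e.symm x).1) := by
  have e : ((SS (k+1)).e.symm ((SS (k+1)).T^[mkT k] x)).1 - ((SS (k+1)).e.symm x).1 = ((1 / (4 * NN k) : ℝ) : Torus1) := by
    rw [St.T_iter, mk_al]
    unfold St.Tr
    rw [Homeomorph.symm_apply_apply]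
    simp [rotT]
  rw [e]
  have h0 : (0:ℝ) < NN k := by exact_mod_cast NN_pos k
  have e2 : (fourier ((SS k).q : ℤ) ((1 / (4 * NN k) : ℝ) : Torus1) : ℂ) = Complex.I := by
    rw [fourier_coe_real]
    have : (2 * Real.pi * (((SS k).q : ℤ) : ℝ) * (1 / (4 * NN k)) : ℝ) = Real.pi / 2 := by
      change (2 * Real.pi * ((NN k : ℤ) : ℝ) * (1 / (4 * NN k)) : ℝ) = Real.pi / 2
      rw [Int.cast_natCast]
      field_simp; norm_num
    rw [this, mul_comm]
    push_cast
    exact Complex.exp_pi_div_two_mul_I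
  have hA := LF_le_AN (SS (k+1)).q
  have hA0 := AN_pos (SS (k+1)).q
  have h1 : 1 ≤ ‖1 - Complex.I‖ := by
    have := Complex.abs_re_le_norm (1 - Complex.I)
    simpa using this
  have h2 : 1 ≤ ‖1 + Complex.I‖ := by
    have := Complex.abs_re_le_norm (1 + Complex.I)
    simpa using this
  refine ⟨?_, ?_⟩
  · rw [e2]; nlinarith
  · rw [e2]; nlinarith

lemma T_iter_mp (s : St) (j : ℕ) : MeasurePreserving (s.T^[j]) (volume : Measure Torus2) volume := by
  have : s.T^[j] = s.Tr (j • (s.al : Torus1)) := by funext x; exact s.T_iter j x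
  rw [this]; exact s.Tr_mp _

lemma T_iter_continuous (s : St) (j : ℕ) : Continuous (s.T^[j]) := by
  have : s.T^[j] = s.Tr (j • (s.al : Torus1)) := by funext x; exact s.T_iter j x
  rw [this]; exact s.Tr_continuous _

lemma integral_comp_mp {S : Torus2 → Torus2} (hS : MeasurePreserving S (volume : Measure Torus2) volume)
    (f : Torus2 → ℂ) (hf : AEStronglyMeasurable f volume) : ∫ x, f (S x) = ∫ x, f x := by
  have h2 := integral_map (μ := (volume : Measure Torus2)) hS.measurable.aemeasurable (f := f) (by rwa [hS.map_eq])
  rw [hS.map_eq] at h2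
  exact h2.symm

lemma mix_A (k i i' : ℕ) (hi : i ≤ k) (hi' : i' ≤ k) :
    ‖(∫ x, fD i x * fD i' ((SS (k+1)).T^[mkT k] x)) - (∫ x, fD i x) * ∫ x, fD i' x‖ ≤ (1/2)^k := by
  set s := SS (k+1) with hs
  have hq : (s.q : ℂ) ≠ 0 := by exact_mod_cast s.hq.ne'
  have hc : Continuous fun x => fD i x * fD i' (s.T^[mkT k] x) :=
    (fD i).continuous.mul ((fD i').continuous.comp (T_iter_continuous s _))
  have hinteg : ∀ j, ∫ x, fD i (s.T^[j] x) * fD i' (s.T^[j] (s.T^[mkT k] x)) = ∫ x, fD i x * fD i' (s.T^[mkT k] x) := by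
    intro j
    rw [← integral_comp_mp (T_iter_mp s j) (fun x => fD i x * fD i' (s.T^[mkT k] x)) hc.aestronglyMeasurable]
    refine integral_congr_ae (Eventually.of_forall fun x => ?_)
    simp only
    rw [← Function.iterate_add_apply, ← Function.iterate_add_apply, add_comm]
  have hI : ∀ j, Integrable (fun x => fD i (s.T^[j] x) * fD i' (s.T^[j] (s.T^[mkT k] x))) (volume : Measure Torus2) := by
    intro j
    have hcj : Continuous fun x => fD i (s.T^[j] x) * fD i' (s.T^[j] (s.T^[mkT k] x)) :=
      ((fD i).continuous.comp (T_iter_continuous s _)).mul ((fD i').continuous.comp ((T_iter_continuous s _).comp (T_iter_continuous s _)))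
    exact integrable_C ⟨_, hcj⟩
  have e : ∫ x, ((s.q:ℂ)⁻¹ * (∑ j ∈ Finset.range s.q, fD i (s.T^[j] x) * fD i' (s.T^[j] (s.T^[mkT k] x))) -
      (∫ x, fD i x) * ∫ x, fD i' x) = (∫ x, fD i x * fD i' (s.T^[mkT k] x)) - (∫ x, fD i x) * ∫ x, fD i' x := by
    rw [integral_sub ((integrable_finsetSum _ fun j _ => hI j).const_mul _) (integrable_const _),
      integral_const_mul, integral_finsetSum _ fun j _ => hI j]
    simp only [hinteg, Finset.sum_const, Finset.card_range, nsmul_eq_mul, integral_const, probReal_univ, one_smul]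
    rw [inv_mul_cancel_left₀ hq]
  rw [← e]
  have := norm_integral_le_of_norm_le_const (μ := (volume : Measure Torus2)) (C := (1/2)^k)
    (Eventually.of_forall fun x => (SS_step k).mix i hi i' hi' x (s.T^[mkT k] x) (mk_good k x))
  simpa using this

lemma mk_le (k : ℕ) : (mkT k : ℝ) * AN (NN (k+2)) ^ 2 ≤ NN (k+2) := by
  have h1 : mkT k ≤ NN (k+1) := by
    rw [(mk_spec k).1]
    exact Nat.le_mul_of_pos_left _ (by have := NN_pos k; positivity)
  have h1 : (mkT k : ℝ) ≤ NN (k+1) := by exact_mod_cast h1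
  exact (mul_le_mul_of_nonneg_right h1 (by positivity)).trans (NN_qA (k+1))

lemma mix_B (i i' : ℕ) : Tendsto (fun k => ∫ x, fD i x * fD i' (TF^[mkT k] x)) atTop (𝓝 ((∫ x, fD i x) * ∫ x, fD i' x)) := by
  have h1 : Tendsto (fun k => ∫ x, fD i x * fD i' ((SS (k+1)).T^[mkT k] x)) atTop (𝓝 ((∫ x, fD i x) * ∫ x, fD i' x)) := by
    rw [tendsto_iff_norm_sub_tendsto_zero]
    refine squeeze_zero' (Eventually.of_forall fun _ => norm_nonneg _) ?_
      (tendsto_pow_atTop_nhds_zero_of_lt_one (r := (1:ℝ)/2) (by norm_num) (by norm_num))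
    filter_upwards [eventually_ge_atTop (max i i')] with k hk
    exact mix_A k i i' (le_of_max_le_left hk) (le_of_max_le_right hk)
  have h2 : Tendsto (fun k => (∫ x, fD i x * fD i' (TF^[mkT k] x)) - ∫ x, fD i x * fD i' ((SS (k+1)).T^[mkT k] x)) atTop (𝓝 0) := by
    rw [Metric.tendsto_nhds]
    intro ε hε
    have huc := CompactSpace.uniformContinuous_of_continuous (fD i').continuous
    rw [Metric.uniformContinuous_iff] at huc
    obtain ⟨δ, hδ, hu⟩ := huc (ε / (‖fD i‖ + 1)) (by positivity)
    have hlim : Tendsto (fun k : ℕ => 2 * ((1:ℝ)/2)^(k+1)) atTop (𝓝 0) := half_tendsto.comp (tendsto_add_atTop_nat 1)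
    filter_upwards [hlim.eventually (gt_mem_nhds hδ)] with k hk
    have hc1 : Continuous fun x => fD i x * fD i' (TF^[mkT k] x) :=
      (fD i).continuous.mul ((fD i').continuous.comp (TF_continuous.iterate _))
    have hc2 : Continuous fun x => fD i x * fD i' ((SS (k+1)).T^[mkT k] x) :=
      (fD i).continuous.mul ((fD i').continuous.comp (T_iter_continuous _ _))
    have hI1 : Integrable (fun x => fD i x * fD i' (TF^[mkT k] x)) (volume : Measure Torus2) := integrable_C ⟨_, hc1⟩
    have hI2 : Integrable (fun x => fD i x * fD i' ((SS (k+1)).T^[mkT k] x)) (volume : Measure Torus2) := integrable_C ⟨_, hc2⟩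
    rw [dist_zero_right, ← integral_sub hI1 hI2]
    have hb : ∀ x, ‖fD i x * fD i' (TF^[mkT k] x) - fD i x * fD i' ((SS (k+1)).T^[mkT k] x)‖ ≤ ‖fD i‖ * (ε / (‖fD i‖ + 1)) := by
      intro x
      rw [← mul_sub, norm_mul]
      refine mul_le_mul ((fD i).norm_coe_le_norm x) ?_ (norm_nonneg _) (norm_nonneg _)
      rw [← dist_eq_norm]
      refine (hu ?_).le
      rw [dist_comm]
      exact (iter_dist (k+1) (mkT k) (mk_le k) x).trans_lt hk
    have := norm_integral_le_of_norm_le_const (μ := (volume : Measure Torus2)) (Eventually.of_forall hb)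
    rw [probReal_univ, mul_one] at this
    refine this.trans_lt ?_
    have hp : 0 < ‖fD i‖ + 1 := by positivity
    rw [← mul_div_assoc, div_lt_iff₀ hp]
    nlinarith
  have := h2.add h1
  simpa using this

lemma exists_fD_approx (A : Set Torus2) (hA : MeasurableSet A) (η : ℝ) (hη : 0 < η) :
    ∃ i, ∫ x, ‖A.indicator (fun _ => (1:ℂ)) x - fD i x‖ ≤ η := by
  have hI : Integrable (A.indicator fun _ => (1:ℂ)) (volume : Measure Torus2) :=
    (integrable_const _).indicator hA
  obtain ⟨g, hg, hgI⟩ := hI.exists_boundedContinuous_integral_sub_le (half_pos hη)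
  obtain ⟨i, hi⟩ := (TopologicalSpace.denseRange_denseSeq C(Torus2, ℂ)).exists_dist_lt g.toContinuousMap (half_pos hη)
  refine ⟨i, ?_⟩
  have hfI := integrable_C (fD i)
  calc ∫ x, ‖A.indicator (fun _ => (1:ℂ)) x - fD i x‖
      ≤ ∫ x, (‖A.indicator (fun _ => (1:ℂ)) x - g x‖ + η / 2) := by
        refine integral_mono (hI.sub hfI).norm ((hI.sub hgI).norm.add (integrable_const _)) fun x => ?_
        have h1 := norm_sub_le_norm_sub_add_norm_sub (A.indicator (fun _ => (1:ℂ)) x) (g x) (fD i x)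
        have h2 : ‖g x - fD i x‖ ≤ η / 2 := by
          rw [← dist_eq_norm]
          exact (ContinuousMap.dist_apply_le_dist (f := g.toContinuousMap) (g := fD i) x).trans hi.le
        simp only
        linarith
    _ ≤ η := by
        have hgg : Integrable (fun x => ‖A.indicator (fun _ => (1:ℂ)) x - g x‖) (volume : Measure Torus2) := (hI.sub hgI).norm
        rw [integral_add hgg (integrable_const _)]
        simp only [integral_const, probReal_univ, one_smul]
        linarith

/-- approximation argument -/
lemma tendsto_of_approx (u : ℕ → ℂ) (a : ℂ) (h : ∀ η > 0, ∃ (v : ℕ → ℂ) (b : ℂ), Tendsto v atTop (𝓝 b) ∧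
    (∀ k, ‖u k - v k‖ ≤ η) ∧ ‖a - b‖ ≤ η) : Tendsto u atTop (𝓝 a) := by
  rw [Metric.tendsto_nhds]
  intro ε hε
  obtain ⟨v, b, hv, h1, h2⟩ := h (ε / 4) (by positivity)
  filter_upwards [Metric.tendsto_nhds.1 hv (ε/4) (by positivity)] with k hk
  rw [dist_eq_norm] at *
  have := norm_add₃_le (a := u k - v k) (b := v k - b) (c := b - a)
  rw [show u k - v k + (v k - b) + (b - a) = u k - a by ring] at this
  rw [norm_sub_rev b a] at this
  linarith [h1 k]

lemma mix_C (A : Set Torus2) (hA : MeasurableSet A) (i' : ℕ) :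
    Tendsto (fun k => ∫ x, A.indicator (fun _ => (1:ℂ)) x * fD i' (TF^[mkT k] x)) atTop
      (𝓝 ((∫ x, A.indicator (fun _ => (1:ℂ)) x) * ∫ x, fD i' x)) := by
  refine tendsto_of_approx _ _ fun η hη => ?_
  have hI : Integrable (A.indicator fun _ => (1:ℂ)) (volume : Measure Torus2) :=
    (integrable_const _).indicator hA
  obtain ⟨i, hi⟩ := exists_fD_approx A hA (η / (‖fD i'‖ + 1)) (by positivity)
  have hp : 0 < ‖fD i'‖ + 1 := by positivity
  have hη' : η / (‖fD i'‖ + 1) * ‖fD i'‖ ≤ η := by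
    rw [div_mul_eq_mul_div, div_le_iff₀ hp]; nlinarith
  have hfI := integrable_C (fD i)
  refine ⟨_, _, mix_B i i', fun k => ?_, ?_⟩
  · have hcc : Continuous fun x => fD i' (TF^[mkT k] x) := (fD i').continuous.comp (TF_continuous.iterate _)
    have hbb : ∀ᵐ x ∂(volume : Measure Torus2), ‖fD i' (TF^[mkT k] x)‖ ≤ ‖fD i'‖ :=
      Eventually.of_forall fun x => (fD i').norm_coe_le_norm _
    rw [← integral_sub (hI.mul_bdd hcc.aestronglyMeasurable hbb) (hfI.mul_bdd hcc.aestronglyMeasurable hbb)]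
    refine (norm_integral_le_integral_norm _).trans ?_
    refine le_trans ?_ hη'
    refine le_trans ?_ (mul_le_mul_of_nonneg_right hi (norm_nonneg _))
    rw [← integral_mul_const]
    refine integral_mono_of_nonneg (Eventually.of_forall fun x => norm_nonneg _) ((hI.sub hfI).norm.mul_const _)
      (Eventually.of_forall fun x => ?_)
    simp only [← sub_mul, norm_mul]
    exact mul_le_mul_of_nonneg_left ((fD i').norm_coe_le_norm _) (norm_nonneg _)
  · rw [← sub_mul, norm_mul, ← integral_sub hI hfI]
    refine le_trans ?_ hη'
    exact mul_le_mul ((norm_integral_le_integral_norm _).trans hi) (norm_integral_C _) (norm_nonneg _) (by positivity)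

lemma mix_D (A B : Set Torus2) (hA : MeasurableSet A) (hB : MeasurableSet B) :
    Tendsto (fun k => ∫ x, A.indicator (fun _ => (1:ℂ)) x * B.indicator (fun _ => (1:ℂ)) (TF^[mkT k] x)) atTop
      (𝓝 ((∫ x, A.indicator (fun _ => (1:ℂ)) x) * ∫ x, B.indicator (fun _ => (1:ℂ)) x)) := by
  refine tendsto_of_approx _ _ fun η hη => ?_
  have hI : Integrable (A.indicator fun _ => (1:ℂ)) (volume : Measure Torus2) :=
    (integrable_const _).indicator hA
  have hIB : Integrable (B.indicator fun _ => (1:ℂ)) (volume : Measure Torus2) :=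
    (integrable_const _).indicator hB
  have hb : ∀ x, ‖A.indicator (fun _ => (1:ℂ)) x‖ ≤ 1 := fun x => by
    refine (norm_indicator_le_norm_self _ _).trans ?_
    simp
  obtain ⟨i, hi⟩ := exists_fD_approx B hB η hη
  have hfI := integrable_C (fD i)
  refine ⟨_, _, mix_C A hA i, fun k => ?_, ?_⟩
  · have hmp := TF_mp.iterate (mkT k)
    have h1 : Integrable (fun x => B.indicator (fun _ => (1:ℂ)) (TF^[mkT k] x)) (volume : Measure Torus2) := hmp.integrable_comp_of_integrable hIB
    have h2 : Integrable (fun x => fD i (TF^[mkT k] x)) (volume : Measure Torus2) := hmp.integrable_comp_of_integrable hfI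
    have hbb : ∀ᵐ x ∂(volume : Measure Torus2), ‖A.indicator (fun _ => (1:ℂ)) x‖ ≤ 1 := Eventually.of_forall hb
    rw [← integral_sub (h1.bdd_mul hI.aestronglyMeasurable hbb) (h2.bdd_mul hI.aestronglyMeasurable hbb)]
    refine (norm_integral_le_integral_norm _).trans ?_
    have h3 : ∫ x, ‖B.indicator (fun _ => (1:ℂ)) (TF^[mkT k] x) - fD i (TF^[mkT k] x)‖ ≤ η := by
      refine le_trans (le_of_eq ?_) hi
      have h2 := integral_map (μ := (volume : Measure Torus2)) hmp.measurable.aemeasurable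
        (f := fun x => ‖B.indicator (fun _ => (1:ℂ)) x - fD i x‖)
        (by rw [hmp.map_eq]; exact (hIB.sub hfI).norm.aestronglyMeasurable)
      rw [hmp.map_eq] at h2
      exact h2.symm
    refine le_trans ?_ h3
    refine integral_mono_of_nonneg (Eventually.of_forall fun x => norm_nonneg _) (h1.sub h2).norm
      (Eventually.of_forall fun x => ?_)
    simp only [← mul_sub, norm_mul]
    exact mul_le_of_le_one_left (norm_nonneg _) (hb x)
  · rw [← mul_sub, norm_mul, ← integral_sub hIB hfI]
    have h1 : ‖∫ x, A.indicator (fun _ => (1:ℂ)) x‖ ≤ 1 := by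
      have := norm_integral_le_of_norm_le_const (μ := (volume : Measure Torus2)) (Eventually.of_forall hb)
      simpa using this
    have h2 := (norm_integral_le_integral_norm _).trans hi
    exact (mul_le_of_le_one_left (norm_nonneg _) h1).trans h2

lemma integral_ind (A : Set Torus2) (hA : MeasurableSet A) :
    ∫ x, A.indicator (fun _ => (1:ℂ)) x = ((volume : Measure Torus2).real A : ℂ) := by
  rw [integral_indicator_const _ hA]
  simp

lemma TF_weaklyMixing : WeaklyMixing TF (volume : Measure Torus2) := by
  refine weaklyMixing_of_MixAt _ TF TF_mp mkT fun A B hA hB => ?_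
  have h := mix_D A B hA hB
  have e : ∀ k, ∫ x, A.indicator (fun _ => (1:ℂ)) x * B.indicator (fun _ => (1:ℂ)) (TF^[mkT k] x) =
      ((volume : Measure Torus2).real (A ∩ TF^[mkT k] ⁻¹' B) : ℂ) := by
    intro k
    rw [← integral_ind _ (hA.inter ((TF_mp.iterate _).measurable hB))]
    congr 1
    funext x
    by_cases h1 : x ∈ A <;> by_cases h2 : TF^[mkT k] x ∈ B <;> simp [h1, h2, indicator]
  simp only [e] at h
  rw [integral_ind A hA, integral_ind B hB, ← Complex.ofReal_mul] at h
  exact (Complex.continuous_re.tendsto _).comp h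


lemma exists_sep (P : FinMeasPartition Torus2) (η : ℝ) (hη : 0 < η) :
    ∃ (U : Set Torus2) (δ : ℝ), 0 < δ ∧ MeasurableSet U ∧ (volume : Measure Torus2).real U < η ∧
      ∀ x y, x ∉ U → y ∉ U → dist x y < δ → ∃ i, x ∈ P.piece i ∧ y ∈ P.piece i := by
  have hl : 0 < η / (P.card + 1) := by positivity
  have hK : ∀ i, ∃ K ⊆ P.piece i, IsCompact K ∧ (volume : Measure Torus2) (P.piece i \ K) < ENNReal.ofReal (η / (P.card + 1)) := by
    intro i
    obtain ⟨K, h1, h2, h3⟩ := (P.measurable i).exists_isCompact_sdiff_lt (μ := (volume : Measure Torus2)) (measure_ne_top _ _)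
      (ENNReal.ofReal_pos.2 hl).ne'
    exact ⟨K, h1, h2, h3⟩
  choose K hKs hKc hKm using hK
  have hsep : ∀ᶠ δ : ℝ in 𝓝[>] 0, ∀ i j, i ≠ j → ∀ x ∈ K i, ∀ y ∈ K j, δ ≤ dist x y := by
    rw [eventually_all]; intro i
    rw [eventually_all]; intro j
    by_cases hij : i = j
    · exact Eventually.of_forall fun δ h => absurd hij h
    obtain ⟨r, hr, h⟩ := Metric.exists_pos_forall_lt_edist (hKc i) (hKc j).isClosed
      ((P.disjoint hij).mono (hKs i) (hKs j))
    filter_upwards [Ioo_mem_nhdsGT (show (0:ℝ) < r from hr)] with δ hδ _ x hx y hy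
    have := h x hx y hy
    rw [edist_nndist] at this
    have h2 : (r:ℝ) < dist x y := by
      rw [← coe_nndist]; exact_mod_cast this
    linarith [hδ.2]
  obtain ⟨δ, hδ, hδ0⟩ := (hsep.and self_mem_nhdsWithin).exists
  refine ⟨(⋃ i, K i)ᶜ, δ, hδ0, (MeasurableSet.iUnion fun i => (hKc i).isClosed.measurableSet).compl, ?_, ?_⟩
  · have hsub : (⋃ i, K i)ᶜ ⊆ ⋃ i, (P.piece i \ K i) := by
      intro x hx
      have : x ∈ ⋃ i, P.piece i := by rw [P.cover]; trivial
      obtain ⟨i, hi⟩ := mem_iUnion.1 this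
      exact mem_iUnion.2 ⟨i, hi, fun h => hx (mem_iUnion.2 ⟨i, h⟩)⟩
    have h1 : (volume : Measure Torus2).real (⋃ i, K i)ᶜ ≤ ∑ i, (volume : Measure Torus2).real (P.piece i \ K i) :=
      (measureReal_mono hsub).trans (measureReal_iUnion_fintype_le _)
    have h2 : ∀ i, (volume : Measure Torus2).real (P.piece i \ K i) ≤ η / (P.card + 1) := fun i => by
      exact ENNReal.toReal_le_of_le_ofReal hl.le (hKm i).le
    have h3 := h1.trans (Finset.sum_le_sum fun i _ => h2 i)
    refine h3.trans_lt ?_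
    simp only [Finset.sum_const, Finset.card_univ, Fintype.card_fin, nsmul_eq_mul]
    rw [← mul_div_assoc, div_lt_iff₀ (by positivity)]
    nlinarith
  · intro x y hx hy hd
    obtain ⟨i, hi⟩ := mem_iUnion.1 (not_not.1 hx)
    obtain ⟨j, hj⟩ := mem_iUnion.1 (not_not.1 hy)
    by_cases hij : i = j
    · subst hij; exact ⟨i, hKs i hi, hKs i hj⟩
    · exact absurd hd (not_lt.2 (hδ i j hij x hi y hj))

/-- number of visits to `U` -/
noncomputable def vis (U : Set Torus2) (n : ℕ) (x : Torus2) : ℝ :=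
  ∑ j ∈ Finset.range n, U.indicator (fun _ => (1:ℝ)) (TF^[j] x)

lemma vis_markov (U : Set Torus2) (hU : MeasurableSet U) (n : ℕ) (hn : 0 < n) (ε : ℝ) (hε : 0 < ε)
    (h : (volume : Measure Torus2).real U < ε ^ 2 / 2) (h' : (volume : Measure Torus2).real U < ε / 2) :
    ENNReal.ofReal (1 - ε) < (volume : Measure Torus2) {x | vis U n x < n * (ε / 2)} := by
  have hI : Integrable (U.indicator fun _ => (1:ℝ)) (volume : Measure Torus2) := (integrable_const _).indicator hU
  have hIj : ∀ j, Integrable (fun x => U.indicator (fun _ => (1:ℝ)) (TF^[j] x)) (volume : Measure Torus2) := fun j =>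
    (TF_mp.iterate j).integrable_comp_of_integrable hI
  have hinteg : ∀ j, ∫ x, U.indicator (fun _ => (1:ℝ)) (TF^[j] x) = (volume : Measure Torus2).real U := by
    intro j
    have hmp := TF_mp.iterate j
    have h2 := integral_map (μ := (volume : Measure Torus2)) hmp.measurable.aemeasurable (f := U.indicator fun _ => (1:ℝ))
      (by rw [hmp.map_eq]; exact hI.aestronglyMeasurable)
    rw [hmp.map_eq, integral_indicator_const _ hU] at h2
    simpa using h2.symm
  have hVI : Integrable (vis U n) (volume : Measure Torus2) := integrable_finsetSum _ fun j _ => hIj j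
  have hVint : ∫ x, vis U n x = n * (volume : Measure Torus2).real U := by
    unfold vis
    rw [integral_finsetSum _ fun j _ => hIj j]
    simp [hinteg]
  have hnn : ∀ x, 0 ≤ vis U n x := fun x => Finset.sum_nonneg fun j _ => indicator_nonneg (fun _ _ => zero_le_one) _
  have hmk := mul_meas_ge_le_integral_of_nonneg (Eventually.of_forall hnn) hVI (n * (ε / 2))
  rw [hVint] at hmk
  have hn' : (0:ℝ) < n := by exact_mod_cast hn
  have h1 : (volume : Measure Torus2).real {x | n * (ε / 2) ≤ vis U n x} < ε ∧
      (volume : Measure Torus2).real {x | n * (ε / 2) ≤ vis U n x} < 1 := by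
    have : ε / 2 * (volume : Measure Torus2).real {x | n * (ε / 2) ≤ vis U n x} ≤ (volume : Measure Torus2).real U := by
      rw [mul_assoc] at hmk
      exact le_of_mul_le_mul_left hmk hn'
    refine ⟨?_, ?_⟩ <;> by_contra hcon <;> push Not at hcon <;> nlinarith
  have hmeas : Measurable (vis U n) := by
    refine Finset.measurable_sum _ fun j _ => ?_
    exact (measurable_const.indicator hU).comp (TF_mp.iterate j).measurable
  have h2 : {x | vis U n x < n * (ε / 2)} = {x | n * (ε / 2) ≤ vis U n x}ᶜ := by
    ext x; simp
  have h3 : (volume : Measure Torus2).real {x | vis U n x < n * (ε / 2)} = 1 - (volume : Measure Torus2).real {x | n * (ε / 2) ≤ vis U n x} := by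
    rw [h2, probReal_compl_eq_one_sub (measurableSet_le measurable_const hmeas)]
  rw [← ofReal_measureReal]
  refine (ENNReal.ofReal_lt_ofReal_iff ?_).2 ?_
  · rw [h3]; linarith [h1.2]
  · rw [h3]; linarith [h1.1]

lemma code_le_vis (P : FinMeasPartition Torus2) (U : Set Torus2) (δ : ℝ)
    (hU : ∀ x y, x ∉ U → y ∉ U → dist x y < δ → ∃ i, x ∈ P.piece i ∧ y ∈ P.piece i)
    (n : ℕ) (x y : Torus2) (hd : ∀ j < n, dist (TF^[j] x) (TF^[j] y) < δ) :
    codeHammingDist TF P n x y ≤ (vis U n x + vis U n y) / n := by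
  unfold codeHammingDist
  refine div_le_div_of_nonneg_right ?_ (Nat.cast_nonneg n)
  unfold vis
  rw [← Finset.sum_add_distrib, Finset.card_filter, Nat.cast_sum]
  refine Finset.sum_le_sum fun j hj => ?_
  have h0 : ∀ z, 0 ≤ U.indicator (fun _ => (1:ℝ)) z := fun z => indicator_nonneg (fun _ _ => zero_le_one) _
  by_cases h : ∃ i, TF^[j] x ∈ P.piece i ∧ TF^[j] y ∈ P.piece i
  · have h3 := h0 (TF^[j] y)
    have h4 := h0 (TF^[j] x)
    rw [if_neg (not_not.2 h)]
    push_cast; linarith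
  · rw [if_pos h]
    by_cases h1 : TF^[j] x ∈ U
    · have := h0 (TF^[j] y)
      rw [indicator_of_mem h1]; push_cast; linarith
    · by_cases h2 : TF^[j] y ∈ U
      · have := h0 (TF^[j] x)
        rw [indicator_of_mem h2]; push_cast; linarith
      · exact absurd (hU _ _ h1 h2 (hd j (Finset.mem_range.1 hj))) h

lemma orbit_close (k n : ℕ) (hn : (n:ℝ) * AN (NN (k+2)) ^ 2 ≤ NN (k+2)) (x y : Torus2)
    (h : ∀ t, dist ((SS (k+1)).Tr t x) ((SS (k+1)).Tr t y) ≤ (1/2)^k) (j : ℕ) (hj : j < n) :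
    dist (TF^[j] x) (TF^[j] y) ≤ 3 * (1/2)^k := by
  have hj' : (j:ℝ) * AN (NN (k+2)) ^ 2 ≤ NN (k+2) := by
    refine le_trans (mul_le_mul_of_nonneg_right ?_ (by positivity)) hn
    exact_mod_cast hj.le
  have h1 := iter_dist (k+1) j hj' x
  have h2 := iter_dist (k+1) j hj' y
  have h3 := h (j • ((SS (k+1)).al : Torus1))
  rw [← St.T_iter, ← St.T_iter] at h3
  rw [dist_comm] at h1
  have := dist_triangle4 (TF^[j] x) ((SS (k+1)).T^[j] x) ((SS (k+1)).T^[j] y) (TF^[j] y)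
  rw [pow_succ] at h1 h2
  linarith

lemma cover_upper (P : FinMeasPartition Torus2) (ε : ℝ) (hε : 0 < ε) : ∃ k₀ : ℕ, ∀ k, k₀ ≤ k → ∀ n : ℕ, 0 < n →
    (n:ℝ) * AN (NN (k+2)) ^ 2 ≤ NN (k+2) → ∃ F : Finset Torus2, (F.card : ℝ) ≤ LF (NN (k+1)) * AN (NN (k+1)) ∧
      ENNReal.ofReal (1 - ε) < (volume : Measure Torus2) (⋃ x ∈ F, {y | codeHammingDist TF P n x y < ε}) := by
  classical
  obtain ⟨U, δ, hδ, hUm, hUs, hU⟩ := exists_sep P (min (ε ^ 2 / 2) (ε / 2)) (by positivity)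
  have hlim : Tendsto (fun k : ℕ => 3 * ((1:ℝ)/2)^k) atTop (𝓝 0) := by
    have := (tendsto_pow_atTop_nhds_zero_of_lt_one (r := (1:ℝ)/2) (by norm_num) (by norm_num)).const_mul 3
    simpa using this
  obtain ⟨k₀, hk₀⟩ := eventually_atTop.1 (hlim.eventually (gt_mem_nhds hδ))
  refine ⟨k₀, fun k hk n hn hnk => ?_⟩
  obtain ⟨M, c, hM, hc⟩ := (SS_step k).cover
  set V := {x | vis U n x < n * (ε / 2)} with hV
  have hn' : (0:ℝ) < n := by exact_mod_cast hn
  let rep : Fin M → Torus2 := fun i => if h : ∃ x ∈ V, c x = i then h.choose else 0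
  let F : Finset Torus2 := Finset.univ.image rep
  refine ⟨F, ?_, (vis_markov U hUm n hn ε hε (lt_min_iff.1 hUs).1 (lt_min_iff.1 hUs).2).trans_le (measure_mono ?_)⟩
  · refine le_trans ?_ hM
    have : F.card ≤ M := Finset.card_image_le.trans (by simp)
    exact_mod_cast this
  · intro y hy
    have hex : ∃ x ∈ V, c x = c y := ⟨y, hy, rfl⟩
    have hr : rep (c y) = hex.choose := dif_pos hex
    have hr1 : rep (c y) ∈ V := by rw [hr]; exact hex.choose_spec.1
    have hr2 : c (rep (c y)) = c y := by rw [hr]; exact hex.choose_spec.2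
    refine mem_iUnion₂.2 ⟨rep (c y), Finset.mem_image_of_mem _ (Finset.mem_univ _), ?_⟩
    have h1 := code_le_vis P U δ hU n (rep (c y)) y fun j hj =>
      (orbit_close k n hnk _ _ (hc _ _ hr2) j hj).trans_lt (hk₀ k hk)
    refine h1.trans_lt ?_
    rw [div_lt_iff₀ hn']
    have h2 : vis U n (rep (c y)) < n * (ε / 2) := hr1
    have h3 : vis U n y < n * (ε / 2) := hy
    linarith


lemma pick_k (K : ℕ) : ∀ᶠ m : ℕ in atTop, ∃ k, K ≤ k ∧ 0 < m ∧ (m:ℝ) * AN (NN (k+2)) ^ 2 ≤ NN (k+2) ∧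
    (NN (k+1) : ℝ) < m * AN (NN (k+1)) ^ 2 := by
  classical
  filter_upwards [eventually_gt_atTop (NN (K+2))] with m hm
  have hex : ∃ k, (m:ℝ) * AN (NN (k+2)) ^ 2 ≤ NN (k+2) := by
    obtain ⟨k, hk⟩ := eventually_atTop.1 (NN_tendsto.eventually_ge_atTop m)
    refine ⟨k, le_trans (mul_le_mul_of_nonneg_right ?_ (by positivity)) (NN_qA (k+1))⟩
    exact_mod_cast hk (k+1) (by omega)
  have hgt : ∀ k, (m:ℝ) * AN (NN (k+2)) ^ 2 ≤ NN (k+2) → K < k := by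
    intro k hk
    by_contra hcon
    have h1 : (m:ℝ) ≤ NN (k+2) := (le_mul_of_one_le_right (Nat.cast_nonneg m) (one_le_pow₀ (one_le_AN _))).trans hk
    have h2 : m ≤ NN (k+2) := by exact_mod_cast h1
    have h3 : NN (k+2) ≤ NN (K+2) := NN_mono (by omega)
    omega
  have hk := Nat.find_spec hex
  have hK := hgt _ hk
  obtain ⟨k, hkk⟩ : ∃ k, Nat.find hex = k + 1 := ⟨Nat.find hex - 1, by omega⟩
  refine ⟨k+1, ?_, by omega, ?_, ?_⟩
  · omega
  · rw [← hkk]; exact hk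
  · have := Nat.find_min hex (m := k) (by omega)
    exact not_le.1 this

lemma cover_nonempty (P : FinMeasPartition Torus2) (ε : ℝ) (hε : 0 < ε) : ∀ᶠ n : ℕ in atTop,
    {N : ℕ | ∃ F : Finset Torus2, F.card = N ∧
      ENNReal.ofReal (1 - ε) < (volume : Measure Torus2) (⋃ x ∈ F, {y | codeHammingDist TF P n x y < ε})}.Nonempty := by
  obtain ⟨k₀, h⟩ := cover_upper P ε hε
  filter_upwards [pick_k k₀] with n hn
  obtain ⟨k, hk, hn0, h1, -⟩ := hn
  obtain ⟨F, -, hF⟩ := h k hk n hn0 h1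
  exact ⟨F.card, F, rfl, hF⟩

lemma phi_tendsto (c : ℝ) (hc : 0 < c) : Tendsto (fun N : ℕ => LF N * Real.exp (-(c * LF N))) atTop (𝓝 0) := by
  have h := (Real.tendsto_pow_mul_exp_neg_atTop_nhds_zero 1).comp (LF_tendsto.const_mul_atTop hc)
  have h2 := h.const_mul c⁻¹
  rw [mul_zero] at h2
  refine h2.congr fun N => ?_
  simp only [Function.comp_apply, pow_one]
  field_simp

lemma ratio_upper (P : FinMeasPartition Torus2) (ε : ℝ) (hε : 0 < ε) (t : ℝ) (ht : 2 < t) :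
    Tendsto (fun n => (hammingCoverNum volume TF P n ε : ℝ≥0∞) / ENNReal.ofReal (intScale1 8 2 n t)) atTop (𝓝 0) := by
  rw [ENNReal.tendsto_nhds_zero]
  intro η hη
  obtain ⟨k₀, h⟩ := cover_upper P ε hε
  have hδ : 0 < (t - 2) / (2 * t) := div_pos (by linarith) (by linarith)
  have hNs : Tendsto (fun k => NN (k+1)) atTop atTop := NN_tendsto.comp (tendsto_add_atTop_nat 1)
  have h1 := hNs.eventually (LF_slow hδ)
  have hc : 0 < (t - 2) / 2 := by linarith
  have hphi := ENNReal.tendsto_ofReal ((phi_tendsto _ hc).comp hNs)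
  rw [ENNReal.ofReal_zero] at hphi
  have h2 := (ENNReal.tendsto_nhds_zero.1 hphi) η hη
  obtain ⟨K, hK⟩ := eventually_atTop.1 (h1.and (h2.and (eventually_ge_atTop k₀)))
  filter_upwards [pick_k K] with n hn
  obtain ⟨k, hk, hn0, hn1, hn2⟩ := hn
  obtain ⟨hs, hp, hk0⟩ := hK k hk
  obtain ⟨F, hF, hFm⟩ := h k hk0 n hn0 hn1
  have hS : hammingCoverNum volume TF P n ε ≤ F.card := Nat.sInf_le ⟨F, rfl, hFm⟩
  have hS' : (hammingCoverNum volume TF P n ε : ℝ≥0∞) ≤ ENNReal.ofReal (LF (NN (k+1)) * AN (NN (k+1))) := by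
    have : ((hammingCoverNum volume TF P n ε : ℕ) : ℝ) ≤ LF (NN (k+1)) * AN (NN (k+1)) := le_trans (by exact_mod_cast hS) hF
    rw [← ENNReal.ofReal_natCast]
    exact ENNReal.ofReal_le_ofReal this
  have hls := hs n hn2
  refine le_trans (ENNReal.div_le_div_right hS' _) (le_trans ?_ hp)
  rw [intScale_eq hn0, ← ENNReal.ofReal_div_of_pos (Real.exp_pos _)]
  refine ENNReal.ofReal_le_ofReal ?_
  simp only [Function.comp_apply]
  rw [mul_div_assoc]
  refine mul_le_mul_of_nonneg_left ?_ (LF_nonneg _)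
  unfold AN
  rw [← Real.exp_sub]
  refine Real.exp_le_exp.2 ?_
  have h4 : t * (1 - (t - 2) / (2 * t)) = (t + 2) / 2 := by field_simp; ring
  have h5 : t * ((1 - (t - 2) / (2 * t)) * LF (NN (k+1))) ≤ t * LF n := mul_le_mul_of_nonneg_left hls (by linarith)
  rw [← mul_assoc, h4] at h5
  linarith

lemma slow_mem_le (P : FinMeasPartition Torus2) (ε : ℝ) (hε : 0 < ε) :
    ∀ t ∈ {t : ℝ | 0 < t ∧ 0 < Filter.atTop.limsup fun n =>
      (hammingCoverNum volume TF P n ε : ℝ≥0∞) / ENNReal.ofReal (intScale1 8 2 n t)}, t ≤ 2 := by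
  rintro t ⟨_, ht⟩
  by_contra hcon
  rw [(ratio_upper P ε hε t (not_le.1 hcon)).limsup_eq] at ht
  exact lt_irrefl _ ht

lemma slow_le (P : FinMeasPartition Torus2) (ε : ℝ) (hε : 0 < ε) :
    measSlowEntFun volume TF (intScale1 8 2) P ε ≤ 2 :=
  Real.sSup_le (slow_mem_le P ε hε) (by norm_num)

lemma cover_anti (P : FinMeasPartition Torus2) {ε ε' : ℝ} (hε : 0 < ε) (h : ε ≤ ε') :
    ∀ᶠ n : ℕ in atTop, hammingCoverNum volume TF P n ε' ≤ hammingCoverNum volume TF P n ε := by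
  filter_upwards [cover_nonempty P ε hε] with n hn
  obtain ⟨F, hF, hm⟩ := Nat.sInf_mem hn
  refine Nat.sInf_le ⟨F, hF, ?_⟩
  refine (ENNReal.ofReal_le_ofReal (by linarith)).trans_lt (hm.trans_le (measure_mono ?_))
  exact iUnion₂_mono fun x _ y hy => lt_of_lt_of_le hy h

lemma slow_anti (P : FinMeasPartition Torus2) : AntitoneOn (measSlowEntFun volume TF (intScale1 8 2) P) (Ioi 0) := by
  intro ε hε ε' _ h
  have hε : 0 < ε := hε
  refine Real.sSup_le (fun t ht => ?_) (Real.sSup_nonneg fun t ht => ht.1.le)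
  refine le_csSup ⟨2, slow_mem_le P ε hε⟩ ⟨ht.1, ht.2.trans_le ?_⟩
  refine limsup_le_limsup ?_
  filter_upwards [cover_anti P hε h] with n hn
  exact ENNReal.div_le_div_right (by exact_mod_cast hn) _

lemma slow_lim (P : FinMeasPartition Torus2) :
    ∃ e : ℝ, Tendsto (measSlowEntFun volume TF (intScale1 8 2) P) (𝓝[>] (0:ℝ)) (𝓝 e) :=
  ⟨_, (slow_anti P).tendsto_nhdsGT ⟨2, by rintro _ ⟨ε, hε, rfl⟩; exact slow_le P ε hε⟩⟩

lemma slow_upper (P : FinMeasPartition Torus2) (e : ℝ)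
    (h : Tendsto (measSlowEntFun volume TF (intScale1 8 2) P) (𝓝[>] (0:ℝ)) (𝓝 e)) : e ≤ 2 := by
  refine le_of_tendsto h ?_
  filter_upwards [self_mem_nhdsWithin] with ε hε
  exact slow_le P ε hε


lemma chord_lower (v : Torus1) : 4 * ‖v‖ ≤ ‖1 - (fourier 1 v : ℂ)‖ := by
  obtain ⟨x, rfl, hx⟩ := T1_rep v
  have hx2 : |x| ≤ 1 / 2 := by
    rw [hx]
    have := AddCircle.norm_le_half_period (p := (1:ℝ)) (x := (x : Torus1)) one_ne_zero
    simpa using this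
  rw [← hx, fourier_coe_real, norm_sub_rev, Complex.norm_exp_I_mul_ofReal_sub_one]
  have e : (2 * Real.pi * ((1:ℤ):ℝ) * x) / 2 = Real.pi * x := by push_cast; ring
  rw [e, norm_mul, Real.norm_eq_abs, Real.norm_eq_abs]
  have hpi := Real.pi_pos
  have hab : |Real.pi * x| = Real.pi * |x| := by rw [abs_mul, abs_of_pos hpi]
  have := Real.mul_abs_le_abs_sin (x := Real.pi * x) (by rw [hab]; nlinarith)
  rw [hab] at this
  have e2 : 2 / Real.pi * (Real.pi * |x|) = 2 * |x| := by field_simp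
  rw [e2] at this
  rw [abs_of_pos (by norm_num : (0:ℝ) < 2)]
  linarith

lemma bad_measure (q : ℕ) (hq : 0 < q) (A w : ℝ) (hA : 0 < A) (hw : 0 ≤ w) :
    (volume : Measure Torus1) {u | ¬ GoodW q A w u} ≤ ENNReal.ofReal (w / A) := by
  have hmp : MeasurePreserving (fun u : Torus1 => (q:ℤ) • u) volume volume :=
    Measure.measurePreserving_zsmul volume (by exact_mod_cast hq.ne')
  have hhalf : (fourier 1 ((1/2 : ℝ) : Torus1) : ℂ) = -1 := by
    rw [fourier_coe_real]
    have : (2 * Real.pi * ((1:ℤ):ℝ) * (1/2) : ℝ) = Real.pi := by push_cast; ring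
    rw [this, mul_comm]; exact Complex.exp_pi_mul_I
  have hsub : {u : Torus1 | ¬ GoodW q A w u} ⊆ (fun u : Torus1 => (q:ℤ) • u) ⁻¹'
      (Metric.closedBall 0 (w / (4 * A)) ∪ Metric.closedBall (-((1/2 : ℝ) : Torus1)) (w / (4 * A))) := by
    intro u hu
    have e : (fourier (q:ℤ) u : ℂ) = fourier 1 ((q:ℤ) • u) := by
      rw [← fourier_natMul]; simp
    have hu : ¬ (w ≤ A * ‖1 - (fourier (q:ℤ) u : ℂ)‖ ∧ w ≤ A * ‖1 + (fourier (q:ℤ) u : ℂ)‖) := hu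
    rw [e] at hu
    rw [mem_preimage]
    set v := (q:ℤ) • u with hv
    have hA4 : 0 < 4 * A := by positivity
    rcases not_and_or.1 hu with h | h
    · left
      rw [Metric.mem_closedBall, dist_zero_right, le_div_iff₀ hA4]
      have := chord_lower v
      have := mul_le_mul_of_nonneg_left this hA.le
      push Not at h
      linarith
    · right
      rw [Metric.mem_closedBall, dist_eq_norm, sub_neg_eq_add, le_div_iff₀ hA4]
      have := chord_lower (v + ((1/2 : ℝ) : Torus1))
      rw [fourier_zadd, hhalf] at this
      have := mul_le_mul_of_nonneg_left this hA.le
      push Not at h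
      rw [show (1:ℂ) - fourier 1 v * -1 = 1 + fourier 1 v by ring] at this
      linarith
  refine (measure_mono hsub).trans ?_
  rw [hmp.measure_preimage ((Metric.isClosed_closedBall.union Metric.isClosed_closedBall).measurableSet.nullMeasurableSet)]
  refine (measure_union_le _ _).trans ?_
  rw [AddCircle.volume_closedBall, AddCircle.volume_closedBall, ← ENNReal.ofReal_add (by positivity) (by positivity)]
  refine ENNReal.ofReal_le_ofReal ?_
  have h1 : min 1 (2 * (w / (4 * A))) ≤ 2 * (w / (4 * A)) := min_le_right _ _
  have h2 : w / A = 4 * (w / (4 * A)) := by field_simp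
  linarith

lemma bad_measure2 (s : St) (q : ℕ) (hq : 0 < q) (A w : ℝ) (hA : 0 < A) (hw : 0 ≤ w) (x : Torus2) :
    (volume : Measure Torus2) {y | ¬ GoodW q A w ((s.e.symm y).1 - (s.e.symm x).1)} ≤ ENNReal.ofReal (w / A) := by
  have hm : MeasurableSet {u | ¬ GoodW q A w u} := by
    have h1 : Continuous fun u : Torus1 => A * ‖1 - (fourier (q:ℤ) u : ℂ)‖ := by fun_prop
    have h2 : Continuous fun u : Torus1 => A * ‖1 + (fourier (q:ℤ) u : ℂ)‖ := by fun_prop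
    exact ((isClosed_le continuous_const h1).inter (isClosed_le continuous_const h2)).measurableSet.compl
  have m1 : MeasurePreserving (fun y => s.e.symm y) (volume : Measure Torus2) volume :=
    MeasurePreserving.symm s.e.toMeasurableEquiv s.mp
  have m2 : MeasurePreserving (Prod.fst : Torus2 → Torus1) (volume : Measure Torus2) volume := measurePreserving_fst
  have m3 : MeasurePreserving (fun u : Torus1 => u - (s.e.symm x).1) volume volume :=
    measurePreserving_sub_right volume _
  have m := m3.comp (m2.comp m1)
  have := m.measure_preimage hm.nullMeasurableSet
  refine le_trans (le_of_eq ?_) (bad_measure q hq A w hA hw)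
  rw [← this]
  rfl

/-- sine function on the torus -/
noncomputable def sn (x : Torus2) : ℝ := (fourier 1 x.1 : ℂ).im

lemma sn_continuous : Continuous sn := by unfold sn; fun_prop

/-- positive part -/
noncomputable def ch0 (x : Torus2) : ℝ := max 0 (sn x)
/-- negative part -/
noncomputable def ch1 (x : Torus2) : ℝ := max 0 (-sn x)

lemma ch0_continuous : Continuous ch0 := continuous_const.max sn_continuous
lemma ch1_continuous : Continuous ch1 := continuous_const.max sn_continuous.neg

lemma abs_sn (x : Torus2) : |sn x| ≤ 1 := by
  have := Complex.abs_im_le_norm (fourier 1 x.1 : ℂ)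
  rwa [norm_fourier] at this

lemma ch0_nonneg (x : Torus2) : 0 ≤ ch0 x := le_max_left _ _
lemma ch1_nonneg (x : Torus2) : 0 ≤ ch1 x := le_max_left _ _
lemma ch0_le (x : Torus2) : ch0 x ≤ 1 := max_le zero_le_one (abs_le.1 (abs_sn x)).2
lemma ch1_le (x : Torus2) : ch1 x ≤ 1 := max_le zero_le_one (by linarith [(abs_le.1 (abs_sn x)).1])

lemma sn_quarter (y : Torus1) : sn (((1/4:ℝ) : Torus1), y) = 1 ∧ sn (((-(1/4):ℝ) : Torus1), y) = -1 := by
  constructor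
  · unfold sn
    rw [fourier_coe_real]
    have : (2 * Real.pi * ((1:ℤ):ℝ) * (1/4) : ℝ) = Real.pi / 2 := by push_cast; ring
    rw [this, mul_comm, Complex.exp_ofReal_mul_I_im]; simp
  · unfold sn
    rw [fourier_coe_real]
    have : (2 * Real.pi * ((1:ℤ):ℝ) * (-(1/4)) : ℝ) = -(Real.pi / 2) := by push_cast; ring
    rw [this, mul_comm, Complex.exp_ofReal_mul_I_im]; simp

/-- limiting frequency -/
noncomputable def c0 : ℝ := (∫ x, ch0 x) * ∫ x, ch1 x

lemma c0_pos : 0 < c0 := by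
  refine mul_pos ?_ ?_
  · refine ch0_continuous.integral_pos_of_hasCompactSupport_nonneg_nonzero (HasCompactSupport.of_compactSpace _)
      ch0_nonneg (x := (((1/4:ℝ) : Torus1), 0)) ?_
    unfold ch0; rw [(sn_quarter 0).1]; norm_num
  · refine ch1_continuous.integral_pos_of_hasCompactSupport_nonneg_nonzero (HasCompactSupport.of_compactSpace _)
      ch1_nonneg (x := (((-(1/4):ℝ) : Torus1), 0)) ?_
    unfold ch1; rw [(sn_quarter 0).2]; norm_num

/-- complexified -/
noncomputable def cC (f : Torus2 → ℝ) (hf : Continuous f) : C(Torus2, ℂ) := ⟨fun x => (f x : ℂ), Complex.continuous_ofReal.comp hf⟩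

lemma prod_close (u v f g : ℂ) (a b : ℝ) (ha : ‖u - f‖ ≤ a) (hb : ‖v - g‖ ≤ b) (hu : ‖u‖ ≤ 1) (hg : ‖g‖ ≤ 2) :
    ‖u * v - f * g‖ ≤ b + 2 * a := by
  rw [show u * v - f * g = u * (v - g) + (u - f) * g by ring]
  refine (norm_add_le _ _).trans ?_
  rw [norm_mul, norm_mul]
  have h1 : ‖u‖ * ‖v - g‖ ≤ 1 * b := mul_le_mul hu hb (norm_nonneg _) (by norm_num)
  have h2 : ‖u - f‖ * ‖g‖ ≤ a * 2 := mul_le_mul ha hg (norm_nonneg _) ((norm_nonneg _).trans ha)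
  linarith

lemma fD_near (f : C(Torus2, ℂ)) (η : ℝ) (hη : 0 < η) : ∃ i, (∀ x, ‖f x - fD i x‖ ≤ η) ∧ ‖(∫ x, f x) - ∫ x, fD i x‖ ≤ η := by
  obtain ⟨i, hi⟩ := (TopologicalSpace.denseRange_denseSeq C(Torus2, ℂ)).exists_dist_lt f hη
  have h : ∀ x, ‖f x - fD i x‖ ≤ η := fun x => by
    rw [← dist_eq_norm]
    exact (ContinuousMap.dist_apply_le_dist (f := f) (g := fD i) x).trans hi.le
  refine ⟨i, h, ?_⟩
  rw [← integral_sub (integrable_C f) (integrable_C _)]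
  have := norm_integral_le_of_norm_le_const (μ := (volume : Measure Torus2)) (Eventually.of_forall h)
  simpa using this

lemma NN_le_next (k j : ℕ) (hj : j ≤ NN (k+1)) : (j:ℝ) * AN (NN (k+2)) ^ 2 ≤ NN (k+2) := by
  have h1 : (j : ℝ) ≤ NN (k+1) := by exact_mod_cast hj
  exact (mul_le_mul_of_nonneg_right h1 (by positivity)).trans (NN_qA (k+1))

lemma unif_ev (f : C(Torus2, ℂ)) (η : ℝ) (hη : 0 < η) : ∀ᶠ k : ℕ in atTop, ∀ j ≤ NN (k+1), ∀ x,
    ‖f (TF^[j] x) - f ((SS (k+1)).T^[j] x)‖ ≤ η := by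
  have huc := CompactSpace.uniformContinuous_of_continuous f.continuous
  rw [Metric.uniformContinuous_iff] at huc
  obtain ⟨δ, hδ, hu⟩ := huc η hη
  have hlim : Tendsto (fun k : ℕ => 2 * ((1:ℝ)/2)^(k+1)) atTop (𝓝 0) := half_tendsto.comp (tendsto_add_atTop_nat 1)
  filter_upwards [hlim.eventually (gt_mem_nhds hδ)] with k hk j hj x
  rw [← dist_eq_norm]
  refine (hu ?_).le
  rw [dist_comm]
  exact (iter_dist (k+1) j (NN_le_next k j hj) x).trans_lt hk

lemma lower_avg (η : ℝ) (hη : 0 < η) (hη2 : η ≤ 1/2) : ∀ᶠ k : ℕ in atTop, ∀ x y,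
    GoodW (SS k).q (AN (SS (k+1)).q) (LF (SS (k+1)).q) (((SS (k+1)).e.symm y).1 - ((SS (k+1)).e.symm x).1) →
    c0 - 10 * η ≤ (NN (k+1) : ℝ)⁻¹ * ∑ j ∈ Finset.range (NN (k+1)), ch0 (TF^[j] x) * ch1 (TF^[j] y) := by
  set f0 := cC ch0 ch0_continuous with hf0
  set f1 := cC ch1 ch1_continuous with hf1
  obtain ⟨i, hi, hiI⟩ := fD_near f0 η hη
  obtain ⟨i', hi', hiI'⟩ := fD_near f1 η hη
  have hn0 : ∀ x, ‖f0 x‖ ≤ 1 := fun x => by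
    change ‖(ch0 x : ℂ)‖ ≤ 1
    rw [Complex.norm_real, Real.norm_of_nonneg (ch0_nonneg x)]; exact ch0_le x
  have hn1 : ∀ x, ‖f1 x‖ ≤ 1 := fun x => by
    change ‖(ch1 x : ℂ)‖ ≤ 1
    rw [Complex.norm_real, Real.norm_of_nonneg (ch1_nonneg x)]; exact ch1_le x
  have hg : ∀ x, ‖fD i' x‖ ≤ 2 := fun x => by
    have h1 := norm_le_norm_add_norm_sub (f1 x) (fD i' x)
    linarith [hi' x, hn1 x]
  have hI0 : ‖∫ x, f0 x‖ ≤ 1 := by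
    have := norm_integral_le_of_norm_le_const (μ := (volume : Measure Torus2)) (Eventually.of_forall hn0)
    simpa using this
  have hI1 : ‖∫ x, fD i' x‖ ≤ 2 := by
    have := norm_integral_le_of_norm_le_const (μ := (volume : Measure Torus2)) (Eventually.of_forall hg)
    simpa using this
  have hc : (∫ x, f0 x) * (∫ x, f1 x) = (c0 : ℂ) := by
    unfold c0
    push_cast
    rw [← integral_complex_ofReal, ← integral_complex_ofReal]
    rfl
  have hc2 := prod_close _ _ _ _ _ _ hiI hiI' hI0 hI1
  rw [hc] at hc2
  have hpow : Tendsto (fun k : ℕ => ((1:ℝ)/2)^k) atTop (𝓝 0) :=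
    tendsto_pow_atTop_nhds_zero_of_lt_one (r := (1:ℝ)/2) (by norm_num) (by norm_num)
  filter_upwards [unif_ev f0 η hη, unif_ev f1 η hη, hpow.eventually (gt_mem_nhds hη), eventually_ge_atTop (max i i')]
    with k h0 h1 hk hki x y hgood
  have hmix := (SS_step k).mix i (le_of_max_le_left hki) i' (le_of_max_le_right hki) x y hgood
  set s := SS (k+1) with hs
  have hN : NN (k+1) = s.q := rfl
  rw [hN] at *
  have hq : (0:ℝ) < s.q := by exact_mod_cast s.hq
  have hj : ∀ j ∈ Finset.range s.q, ‖f0 (TF^[j] x) * f1 (TF^[j] y) - fD i (s.T^[j] x) * fD i' (s.T^[j] y)‖ ≤ 6 * η := by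
    intro j hj
    have hj := (Finset.mem_range.1 hj).le
    have a1 : ‖f0 (TF^[j] x) - fD i (s.T^[j] x)‖ ≤ 2 * η := by
      have := norm_sub_le_norm_sub_add_norm_sub (f0 (TF^[j] x)) (f0 (s.T^[j] x)) (fD i (s.T^[j] x))
      linarith [h0 j hj x, hi (s.T^[j] x)]
    have a2 : ‖f1 (TF^[j] y) - fD i' (s.T^[j] y)‖ ≤ 2 * η := by
      have := norm_sub_le_norm_sub_add_norm_sub (f1 (TF^[j] y)) (f1 (s.T^[j] y)) (fD i' (s.T^[j] y))
      linarith [h1 j hj y, hi' (s.T^[j] y)]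
    have := prod_close _ _ _ _ _ _ a1 a2 (hn0 _) (hg _)
    linarith
  have hsum : ‖(s.q:ℂ)⁻¹ * (∑ j ∈ Finset.range s.q, f0 (TF^[j] x) * f1 (TF^[j] y)) -
      (s.q:ℂ)⁻¹ * (∑ j ∈ Finset.range s.q, fD i (s.T^[j] x) * fD i' (s.T^[j] y))‖ ≤ 6 * η := by
    rw [← mul_sub, ← Finset.sum_sub_distrib, norm_mul, norm_inv, Complex.norm_natCast]
    have := norm_sum_le_of_le _ hj
    rw [Finset.sum_const, Finset.card_range, nsmul_eq_mul] at this
    rw [inv_mul_le_iff₀ hq]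
    exact this
  have htot : ‖(s.q:ℂ)⁻¹ * (∑ j ∈ Finset.range s.q, f0 (TF^[j] x) * f1 (TF^[j] y)) - (c0 : ℂ)‖ ≤ 10 * η := by
    have t1 := norm_sub_le_norm_sub_add_norm_sub ((s.q:ℂ)⁻¹ * (∑ j ∈ Finset.range s.q, f0 (TF^[j] x) * f1 (TF^[j] y)))
      ((s.q:ℂ)⁻¹ * (∑ j ∈ Finset.range s.q, fD i (s.T^[j] x) * fD i' (s.T^[j] y))) (c0 : ℂ)
    have t2 := norm_sub_le_norm_sub_add_norm_sub ((s.q:ℂ)⁻¹ * (∑ j ∈ Finset.range s.q, fD i (s.T^[j] x) * fD i' (s.T^[j] y)))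
      ((∫ x, fD i x) * ∫ x, fD i' x) (c0 : ℂ)
    rw [norm_sub_rev ((∫ x, fD i x) * ∫ x, fD i' x)] at t2
    linarith
  have hre : ((s.q:ℂ)⁻¹ * (∑ j ∈ Finset.range s.q, f0 (TF^[j] x) * f1 (TF^[j] y)) - (c0 : ℂ)) =
      (((s.q:ℝ)⁻¹ * (∑ j ∈ Finset.range s.q, ch0 (TF^[j] x) * ch1 (TF^[j] y)) - c0 : ℝ) : ℂ) := by
    push_cast
    rfl
  rw [hre, Complex.norm_real, Real.norm_eq_abs] at htot
  have := (abs_le.1 htot).1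
  linarith

/-- two-piece partition -/
noncomputable def P2 : FinMeasPartition Torus2 where
  card := 2
  piece := ![{x | 0 < sn x}, {x | 0 < sn x}ᶜ]
  measurable := by
    have h : MeasurableSet {x | 0 < sn x} := (isOpen_lt continuous_const sn_continuous).measurableSet
    intro i; fin_cases i
    · exact h
    · exact h.compl
  disjoint := by
    intro i j hij
    fin_cases i <;> fin_cases j <;> simp at hij ⊢
    · exact disjoint_compl_right
    · exact disjoint_compl_left
  cover := by
    ext x
    simp only [mem_iUnion, mem_univ, iff_true]
    by_cases h : 0 < sn x
    · exact ⟨0, h⟩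
    · exact ⟨1, h⟩

lemma code_lower (n : ℕ) (x y : Torus2) :
    (n:ℝ)⁻¹ * ∑ j ∈ Finset.range n, ch0 (TF^[j] x) * ch1 (TF^[j] y) ≤ codeHammingDist TF P2 n x y := by
  unfold codeHammingDist
  rw [inv_mul_eq_div]
  refine div_le_div_of_nonneg_right ?_ (Nat.cast_nonneg n)
  rw [Finset.card_filter, Nat.cast_sum]
  refine Finset.sum_le_sum fun j hj => ?_
  by_cases h : ∃ i, TF^[j] x ∈ P2.piece i ∧ TF^[j] y ∈ P2.piece i
  · rw [if_neg (not_not.2 h)]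
    obtain ⟨i, h1, h2⟩ := h
    have hz : ch0 (TF^[j] x) = 0 ∨ ch1 (TF^[j] y) = 0 := by
      have key : ∀ i : Fin 2, i = 0 ∨ i = 1 := by decide
      have hi : i = (0 : Fin 2) ∨ i = (1 : Fin 2) := key i
      rcases hi with rfl | rfl
      · right
        have : 0 < sn (TF^[j] y) := h2
        unfold ch1; exact max_eq_left (by linarith)
      · left
        have : ¬ 0 < sn (TF^[j] x) := h1
        unfold ch0; exact max_eq_left (by linarith)
    rcases hz with h | h <;> rw [h] <;> simp
  · rw [if_pos h]
    push_cast
    exact mul_le_one₀ (ch0_le _) (ch1_nonneg _) (ch1_le _)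

lemma cover_lower (ε : ℝ) (hε : 0 < ε) (hε1 : ε ≤ 1/2) (hε2 : ε ≤ c0 / 2) : ∀ᶠ k : ℕ in atTop,
    AN (NN (k+1)) / 2 ≤ hammingCoverNum volume TF P2 (NN (k+1)) ε * LF (NN (k+1)) := by
  have hc := c0_pos
  have hη : 0 < min (c0 / 20) (1/2) := by positivity
  have hNs : Tendsto (fun k => NN (k+1)) atTop atTop := NN_tendsto.comp (tendsto_add_atTop_nat 1)
  filter_upwards [lower_avg _ hη (min_le_right _ _), hNs.eventually (cover_nonempty P2 ε hε)] with k hk hne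
  obtain ⟨F, hF, hm⟩ := Nat.sInf_mem hne
  have hF : F.card = hammingCoverNum volume TF P2 (NN (k+1)) ε := hF
  have hball : ∀ x, (volume : Measure Torus2) {y | codeHammingDist TF P2 (NN (k+1)) x y < ε} ≤
      ENNReal.ofReal (LF (NN (k+1)) / AN (NN (k+1))) := by
    intro x
    refine (measure_mono ?_).trans (bad_measure2 (SS (k+1)) (SS k).q (SS k).hq (AN (NN (k+1))) (LF (NN (k+1)))
      (AN_pos _) (LF_nonneg _) x)
    intro y hy hgood
    have h1 := hk x y hgood
    have h2 := code_lower (NN (k+1)) x y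
    have h3 : codeHammingDist TF P2 (NN (k+1)) x y < ε := hy
    have h4 := min_le_left (c0 / 20) (1/2 : ℝ)
    linarith
  have hun := hm.trans_le (measure_biUnion_finset_le F _)
  have hun2 := hun.trans_le (Finset.sum_le_sum fun x _ => hball x)
  rw [Finset.sum_const, hF, nsmul_eq_mul, ← ENNReal.ofReal_natCast, ← ENNReal.ofReal_mul (Nat.cast_nonneg _)] at hun2
  have h5 := (ENNReal.ofReal_lt_ofReal_iff_of_nonneg (by linarith)).1 hun2
  rw [← mul_div_assoc, lt_div_iff₀ (AN_pos _)] at h5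
  have := AN_pos (NN (k+1))
  nlinarith

lemma ratio_lower (ε : ℝ) (hε : 0 < ε) (hε1 : ε ≤ 1/2) (hε2 : ε ≤ c0 / 2) (t : ℝ) (ht : t < 2) :
    0 < Filter.atTop.limsup fun n =>
      (hammingCoverNum volume TF P2 n ε : ℝ≥0∞) / ENNReal.ofReal (intScale1 8 2 n t) := by
  have hNs : Tendsto (fun k => NN (k+1)) atTop atTop := NN_tendsto.comp (tendsto_add_atTop_nat 1)
  have hphi := hNs.eventually ((phi_tendsto (2 - t) (by linarith)).eventually (gt_mem_nhds (show (0:ℝ) < 1/2 by norm_num)))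
  have hLF := hNs.eventually (LF_tendsto.eventually_gt_atTop 0)
  have hev : ∀ᶠ k : ℕ in atTop, (1 : ℝ≥0∞) ≤ (hammingCoverNum volume TF P2 (NN (k+1)) ε : ℝ≥0∞) /
      ENNReal.ofReal (intScale1 8 2 (NN (k+1)) t) := by
    filter_upwards [hphi, hLF, cover_lower ε hε hε1 hε2] with k h1 h2 h3
    rw [intScale_eq (NN_pos _), ← ENNReal.ofReal_natCast, ← ENNReal.ofReal_div_of_pos (Real.exp_pos _)]
    rw [ENNReal.one_le_ofReal, one_le_div (Real.exp_pos _)]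
    set L := LF (NN (k+1)) with hL
    have e : AN (NN (k+1)) = Real.exp (t * L) * Real.exp ((2 - t) * L) := by
      unfold AN; rw [← Real.exp_add]; congr 1; ring
    have hp := Real.exp_pos ((2 - t) * L)
    have hp2 := Real.exp_pos (t * L)
    rw [Real.exp_neg, ← div_eq_mul_inv, div_lt_iff₀ hp] at h1
    rw [e] at h3
    have h4 : Real.exp (t * L) * L ≤ hammingCoverNum volume TF P2 (NN (k+1)) ε * L := by nlinarith
    exact le_of_mul_le_mul_right h4 h2
  refine lt_of_lt_of_le zero_lt_one (le_limsup_of_frequently_le' ?_)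
  exact hNs.frequently hev.frequently

lemma slow_P2 : Tendsto (measSlowEntFun volume TF (intScale1 8 2) P2) (𝓝[>] (0:ℝ)) (𝓝 2) := by
  have hc := c0_pos
  refine tendsto_const_nhds.congr' ?_
  filter_upwards [Ioo_mem_nhdsGT (show (0:ℝ) < min (1/2) (c0 / 2) by positivity)] with ε hε
  have h1 : ε ≤ 1/2 := hε.2.le.trans (min_le_left _ _)
  have h2 : ε ≤ c0 / 2 := hε.2.le.trans (min_le_right _ _)
  refine le_antisymm ?_ (slow_le P2 ε hε.1)
  refine le_of_forall_lt fun t ht => ?_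
  obtain ⟨u, hu1, hu2⟩ := exists_between (max_lt ht (show (0:ℝ) < 2 by norm_num))
  refine lt_of_lt_of_le ((le_max_left _ _).trans_lt hu1) ?_
  exact le_csSup ⟨2, slow_mem_le P2 ε hε.1⟩ ⟨(le_max_right _ _).trans_lt hu1, ratio_lower ε hε.1 h1 h2 u hu2⟩

lemma TF_entropy : HasUpperMeasSlowEntropy (volume : Measure Torus2) TF (intScale1 8 2) 2 := by
  refine ⟨slow_lim, ?_, ?_⟩
  · rintro e ⟨P, hP⟩
    exact slow_upper P e hP
  · intro b hb
    exact hb ⟨P2, slow_P2⟩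

/-- There exist an integer `q₁ ≥ 2` and a weakly mixing `C^∞`
volume-preserving diffeomorphism `T` of `𝕋²` whose upper measure-theoretic slow entropy
with respect to the intermediate scaling family `a^{int1,8}` (with base `q₁`) equals `2`. -/
theorem stmt3 :
    ∃ q₁ : ℕ, 2 ≤ q₁ ∧ ∃ T : Torus2 → Torus2,
      IsCkTorusDiffeo ⊤ T ∧
      MeasurePreserving T (volume : Measure Torus2) volume ∧
      WeaklyMixing T (volume : Measure Torus2) ∧
      HasUpperMeasSlowEntropy (volume : Measure Torus2) T (intScale1 8 q₁) 2 := by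
  exact ⟨2, le_rfl, TF, TF_diffeo, TF_mp, TF_weaklyMixing, TF_entropy⟩
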